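/- arXiv:1104.0034 — 2 statements merged into one kernel-verified Lean document; each statement's English description precedes it below -/
import Mathlib

section
/- Let f be a transcendental entire function in the Eremenko–Lyubich class B such that the iterates of f tend to infinity uniformly on S(f), i.e. inf_{s∈S(f)} |fⁿ(s)| → ∞ as n → ∞. Let A ⊂ ℂ be a closed set with S(f) ∪ f(A) ⊂ A such that every connected component of A is unbounded. Suppose there exist ε > 0, c ∈ (0,1) and R > 0 with the following property: whenever z ∈ A with |z| ≥ R and w ∈ ℂ satisfies |w − z| < c|z|, one has dist(f(w), S(f)) > ε. Then f has no wandering domains. -/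
/-!
Formalization of: "Absence of wandering domains for functions in class B whose
singular values escape uniformly, under a thickness condition along an invariant set A."
-/

open Set Metric Filter Topology

/-- The chordal (spherical) distance between two finite points of the Riemann sphere. -/
noncomputable def sphericalDist (z w : ℂ) : ℝ :=
  2 * dist z w / (Real.sqrt (1 + ‖z‖ ^ 2) * Real.sqrt (1 + ‖w‖ ^ 2))

/-- A transcendental entire function: entire and not a polynomial. -/
def TranscendentalEntire (f : ℂ → ℂ) : Prop :=
  Differentiable ℂ f ∧ ¬∃ p : Polynomial ℂ, ∀ z : ℂ, f z = p.eval z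

/-- `S` is the set of singular values of `f`: the smallest closed set `S ⊆ ℂ` such that
`f : ℂ ∖ f⁻¹(S) → ℂ ∖ S` is a covering map. -/
def IsSingularValueSet (f : ℂ → ℂ) (S : Set ℂ) : Prop :=
  IsClosed S ∧ IsCoveringMapOn f Sᶜ ∧
    ∀ T : Set ℂ, IsClosed T → IsCoveringMapOn f Tᶜ → S ⊆ T

/-- The Fatou set of an entire function: points having a neighbourhood on which the family of
iterates is equicontinuous with respect to the spherical metric. -/
def FatouSet (f : ℂ → ℂ) : Set ℂ :=
  {z : ℂ | ∃ N : Set ℂ, IsOpen N ∧ z ∈ N ∧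
    ∀ x ∈ N, ∀ ε > (0 : ℝ), ∃ δ > (0 : ℝ), ∀ y ∈ N, dist y x < δ →
      ∀ n : ℕ, sphericalDist (f^[n] y) (f^[n] x) < ε}

/-- A wandering domain: a connected component `W` of the Fatou set whose forward images are
pairwise disjoint. -/
def IsWanderingDomain (f : ℂ → ℂ) (W : Set ℂ) : Prop :=
  (∃ z ∈ FatouSet f, W = connectedComponentIn (FatouSet f) z) ∧
    ∀ m n : ℕ, m ≠ n → f^[m] '' W ∩ f^[n] '' W = ∅

/-!
Let `W` be a wandering domain and `z₀ ∈ W`. The iterates have small derivatives at `z₀` along the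
times at which the orbit is bounded, and by the Eremenko–Lyubich expansion estimate the orbit does
not tend to infinity. Since singular orbits escape uniformly, the orbit of `z₀` returns infinitely
often to a bounded region directly from arbitrarily far away, say from `f^[m] z₀` to
`f^[m + 1] z₀`, and the thickness condition forces `f^[m + 1] z₀` to be close to `S`. Rotate
`f^[m] z₀` about the origin until it first comes close to `A`; there `f` takes values at distance
more than `ε` from `S`. Pulled back by the branch of `f^{-m}` with value `z₀`, this arc is either
short or covered by a bounded number of discs of definite size whose orbits avoid `A` up to time
`m`. As `m` tends to infinity these discs converge to discs whose orbits avoid `A`, which lie in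
`F(f)` by Montel's theorem and hence in `W`. But the orbits of any two points of `W` are asymptotic
along the times at which one of them is bounded, a contradiction.
-/

section LocalInverses

lemma differentiableAt_of_comp_eventuallyEq {𝕜 : Type*} [RCLike 𝕜] {f e χ : 𝕜 → 𝕜} {f' z : 𝕜}
    (hf : HasStrictDerivAt f f' (χ z)) (hf' : f' ≠ 0) (hχ : ContinuousAt χ z)
    (he : DifferentiableAt 𝕜 e z) (hfe : f ∘ χ =ᶠ[𝓝 z] e) : DifferentiableAt 𝕜 χ z := by
  have hinv : DifferentiableAt 𝕜 (hf.localInverse f f' (χ z) hf') (e z) :=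
    hfe.eq_of_nhds ▸ (hf.to_localInverse hf').hasDerivAt.differentiableAt
  refine (hinv.comp z he).congr_of_eventuallyEq ?_
  filter_upwards [hχ.eventually (hf.eventually_left_inverse hf'), hfe] with w hw hwe
  rw [Function.comp_apply, ← hwe, Function.comp_apply, hw]

lemma eventually_deriv_ne_zero_of_not_eventually_const {f : ℂ → ℂ} {z : ℂ}
    (hf : AnalyticAt ℂ f z) (hconst : ¬∀ᶠ w in 𝓝 z, f w = f z) :
    ∀ᶠ w in 𝓝[≠] z, deriv f w ≠ 0 := by
  refine hf.deriv.eventually_eq_zero_or_eventually_ne_zero.resolve_left fun h => hconst ?_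
  obtain ⟨r, hr, hball⟩ :=
    Metric.eventually_nhds_iff_ball.1 (h.and hf.eventually_analyticAt)
  filter_upwards [ball_mem_nhds z hr] with w hw
  exact isOpen_ball.is_const_of_deriv_eq_zero (convex_ball z r).isPreconnected
    (fun v hv => (hball v hv).2.differentiableAt.differentiableWithinAt)
    (fun v hv => (hball v hv).1) hw (mem_ball_self hr)

/-- The inverse is holomorphic off the isolated critical values, and these singularities are
removable. -/
lemma deriv_ne_zero_of_rightInverse {f σ : ℂ → ℂ} {z : ℂ} (hf : AnalyticAt ℂ f z)
    (hσz : σ (f z) = z) (hσ : ∀ᶠ w in 𝓝 (f z), ContinuousAt σ w)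
    (hfσ : ∀ᶠ w in 𝓝 (f z), f (σ w) = w) : deriv f z ≠ 0 := by
  have hσt : Tendsto σ (𝓝 (f z)) (𝓝 z) := by
    simpa only [ContinuousAt, hσz] using hσ.self_of_nhds
  have hσt' : Tendsto σ (𝓝[≠] f z) (𝓝[≠] z) := by
    refine tendsto_nhdsWithin_iff.2 ⟨hσt.mono_left nhdsWithin_le_nhds, ?_⟩
    filter_upwards [hfσ.filter_mono nhdsWithin_le_nhds, self_mem_nhdsWithin] with w hw hne h
    exact hne (by rw [← hw, mem_singleton_iff.1 h]; rfl)
  have hconst : ¬∀ᶠ w in 𝓝 z, f w = f z := fun h => by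
    obtain ⟨w, ⟨hw₁, hw₂⟩, hne⟩ := (((hσt.eventually h).and hfσ).filter_mono
      nhdsWithin_le_nhds |>.and (self_mem_nhdsWithin (s := {f z}ᶜ))).exists
    exact hne (hw₂ ▸ hw₁)
  have hdiff : ∀ᶠ w in 𝓝[≠] f z, DifferentiableAt ℂ σ w := by
    filter_upwards [hσt'.eventually (eventually_deriv_ne_zero_of_not_eventually_const hf hconst),
      (hσt.eventually hf.eventually_analyticAt).filter_mono nhdsWithin_le_nhds,
      hσ.filter_mono nhdsWithin_le_nhds, hfσ.eventually_nhds.filter_mono nhdsWithin_le_nhds]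
      with w hne han hcont hinv
    exact differentiableAt_of_comp_eventuallyEq han.hasStrictDerivAt hne hcont differentiableAt_id
      hinv
  have hσd : DifferentiableAt ℂ σ (f z) :=
    (Complex.analyticAt_of_differentiable_on_punctured_nhds_of_continuousAt hdiff
      hσ.self_of_nhds).differentiableAt
  have hchain : HasDerivAt (f ∘ σ) (deriv f z * deriv σ (f z)) (f z) :=
    HasDerivAt.comp (f z) (by rw [hσz]; exact hf.differentiableAt.hasDerivAt) hσd.hasDerivAt
  have hone : deriv f z * deriv σ (f z) = 1 :=
    (hchain.congr_of_eventuallyEq (hfσ.mono fun _ h => h.symm)).unique (hasDerivAt_id _)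
  exact left_ne_zero_of_mul (hone ▸ one_ne_zero)

end LocalInverses

section Bloch

lemma exists_ball_forall_le_two_mul {X : Type*} [PseudoMetricSpace X] [ProperSpace X] {φ : X → ℝ}
    {x : X} {r : ℝ} (hr : 0 < r) (hφ : ContinuousOn φ (closedBall x r)) (hφx : 0 < φ x) :
    ∃ z₀, ∃ t > 0, ball z₀ t ⊆ closedBall x r ∧ φ x * r ≤ 2 * t * φ z₀ ∧ 0 < φ z₀ ∧
      ∀ z ∈ ball z₀ t, φ z ≤ 2 * φ z₀ := by
  -- maximise `φ z * (r - dist z x)`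
  obtain ⟨z₀, hz₀, hmax⟩ := (isCompact_closedBall x r).exists_isMaxOn
    ⟨x, mem_closedBall_self hr.le⟩ (hφ.mul (g := fun z => r - dist z x) (by fun_prop))
  have hx : φ x * r ≤ φ z₀ * (r - dist z₀ x) := by
    simpa using hmax (mem_closedBall_self hr.le)
  have hz₀r : 0 ≤ r - dist z₀ x := sub_nonneg.2 hz₀
  have hpos : 0 < φ z₀ * (r - dist z₀ x) := (mul_pos hφx hr).trans_le hx
  have hφz₀ : 0 < φ z₀ := pos_of_mul_pos_left hpos hz₀r
  have ht : 0 < (r - dist z₀ x) / 2 := half_pos (pos_of_mul_pos_right hpos hφz₀.le)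
  have hball : ∀ z ∈ ball z₀ ((r - dist z₀ x) / 2), (r - dist z₀ x) / 2 ≤ r - dist z x :=
    fun z hz => by linarith [mem_ball.1 hz, dist_triangle z z₀ x]
  have hsub : ball z₀ ((r - dist z₀ x) / 2) ⊆ closedBall x r := fun z hz => by
    rw [mem_closedBall]; linarith [hball z hz]
  refine ⟨z₀, _, ht, hsub, by linarith, hφz₀, fun z hz => ?_⟩
  by_contra! hlt
  have hφz : φ z * (r - dist z x) ≤ φ z₀ * (r - dist z₀ x) := hmax (hsub hz)
  nlinarith [hball z hz]

lemma norm_deriv_sub_deriv_le {g : ℂ → ℂ} {z₀ z : ℂ} {t C : ℝ}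
    (hg : DifferentiableOn ℂ g (ball z₀ t)) (hC : ∀ w ∈ ball z₀ t, ‖deriv g w‖ ≤ C)
    (hz : z ∈ ball z₀ t) : ‖deriv g z - deriv g z₀‖ ≤ 2 * C / t * dist z z₀ := by
  rw [← dist_eq_norm]
  refine Complex.dist_le_div_mul_dist_of_mapsTo_ball (hg.deriv isOpen_ball) (fun w hw => ?_) hz
  have hz₀ : z₀ ∈ ball z₀ t := mem_ball_self (dist_nonneg.trans_lt hz)
  rw [mem_closedBall, dist_eq_norm]
  linarith [norm_sub_le (deriv g w) (deriv g z₀), hC w hw, hC z₀ hz₀]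

lemma le_norm_sub_of_norm_deriv_le_two_mul {g : ℂ → ℂ} {z₀ z : ℂ} {t : ℝ} (ht : 0 < t)
    (hg : DifferentiableOn ℂ g (ball z₀ t))
    (hg' : ∀ w ∈ ball z₀ t, ‖deriv g w‖ ≤ 2 * ‖deriv g z₀‖) (hz : dist z z₀ = t / 8) :
    ‖deriv g z₀‖ * t / 16 ≤ ‖g z - g z₀‖ := by
  have hsub : closedBall z₀ (t / 8) ⊆ ball z₀ t := closedBall_subset_ball (by linarith)
  have hmean : ‖(g z - deriv g z₀ * z) - (g z₀ - deriv g z₀ * z₀)‖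
      ≤ ‖deriv g z₀‖ / 2 * ‖z - z₀‖ := by
    refine (convex_closedBall z₀ (t / 8)).norm_image_sub_le_of_norm_hasDerivWithin_le
      (f := fun w => g w - deriv g z₀ * w) (f' := fun w => deriv g w - deriv g z₀)
      (fun w hw => ?_) (fun w hw => ?_) (mem_closedBall_self (by positivity))
      (mem_closedBall.2 hz.le)
    · have hgw := (hg.differentiableAt (isOpen_ball.mem_nhds (hsub hw))).hasDerivAt
      simpa only [mul_one] using
        (hgw.fun_sub ((hasDerivAt_id' w).const_mul (deriv g z₀))).hasDerivWithinAt
    · calc ‖deriv g w - deriv g z₀‖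
          ≤ 2 * (2 * ‖deriv g z₀‖) / t * dist w z₀ := norm_deriv_sub_deriv_le hg hg' (hsub hw)
        _ ≤ 2 * (2 * ‖deriv g z₀‖) / t * (t / 8) := by gcongr; exact hw
        _ = ‖deriv g z₀‖ / 2 := by field_simp; ring
  have htri := norm_sub_le (g z - g z₀) ((g z - deriv g z₀ * z) - (g z₀ - deriv g z₀ * z₀))
  rw [show g z - g z₀ - ((g z - deriv g z₀ * z) - (g z₀ - deriv g z₀ * z₀)) =
    deriv g z₀ * (z - z₀) by ring, norm_mul] at htri
  rw [← dist_eq_norm z z₀, hz] at hmean htri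
  linarith

lemma ball_subset_image_of_norm_deriv_le_two_mul {g : ℂ → ℂ} {z₀ : ℂ} {t : ℝ} (ht : 0 < t)
    (hg : DifferentiableOn ℂ g (ball z₀ t)) (h0 : deriv g z₀ ≠ 0)
    (hg' : ∀ z ∈ ball z₀ t, ‖deriv g z‖ ≤ 2 * ‖deriv g z₀‖) :
    ball (g z₀) (‖deriv g z₀‖ * t / 32) ⊆ g '' ball z₀ t := by
  have hsub : closedBall z₀ (t / 8) ⊆ ball z₀ t := closedBall_subset_ball (by linarith)
  have hcl : DiffContOnCl ℂ g (ball z₀ (t / 8)) :=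
    (hg.mono (closure_ball_subset_closedBall.trans hsub)).diffContOnCl
  have hne : ∃ᶠ z in 𝓝 z₀, g z ≠ g z₀ := fun hconst => h0 <| by
    have hev : g =ᶠ[𝓝 z₀] fun _ => g z₀ := hconst.mono fun _ => not_not.1
    rw [hev.deriv_eq, deriv_const]
  refine (ball_subset_ball (by linarith)).trans ((hcl.ball_subset_image_closedBall (by positivity)
    (fun z hz => le_norm_sub_of_norm_deriv_le_two_mul ht hg hg' hz) hne).trans (image_mono hsub))

theorem bloch {g : ℂ → ℂ} {x : ℂ} {ρ : ℝ} (hρ : 0 < ρ) (hg : DifferentiableOn ℂ g (ball x ρ)) :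
    ∃ p, ball p (ρ * ‖deriv g x‖ / 128) ⊆ g '' ball x ρ := by
  by_cases h0 : deriv g x = 0
  · exact ⟨0, by simp [h0]⟩
  have hsub : closedBall x (ρ / 2) ⊆ ball x ρ := closedBall_subset_ball (half_lt_self hρ)
  obtain ⟨z₀, t, ht, hzt, hxt, hz₀, hdbl⟩ := exists_ball_forall_le_two_mul (half_pos hρ)
    ((hg.deriv isOpen_ball).continuousOn.norm.mono hsub) (norm_pos_iff.2 h0)
  refine ⟨g z₀, (ball_subset_ball (by linarith)).trans <|
    (ball_subset_image_of_norm_deriv_le_two_mul ht (hg.mono (hzt.trans hsub))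
      (norm_pos_iff.1 hz₀) hdbl).trans (image_mono (hzt.trans hsub))⟩

end Bloch

section Logarithms

lemma exists_differentiableOn_exp_eq {g : ℂ → ℂ} {U : Set ℂ} (hUo : IsOpen U) (hUc : Convex ℝ U)
    (hg : DifferentiableOn ℂ g U) (h0 : ∀ z ∈ U, g z ≠ 0) :
    ∃ L : ℂ → ℂ, DifferentiableOn ℂ L U ∧ ∀ z ∈ U, Complex.exp (L z) = g z := by
  rcases U.eq_empty_or_nonempty with rfl | hne
  · exact ⟨0, differentiableOn_empty, by simp⟩
  have hsc : IsSimplyConnected U := by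
    have := hUc.contractibleSpace hne
    exact SimplyConnectedSpace.ofContractible U
  obtain ⟨L, hL, hexp⟩ := Complex.exists_continuousOn_eqOn_exp_comp hsc hUo hg.continuousOn
    (by rintro ⟨z, hz, h⟩; exact h0 z hz h)
  refine ⟨L, fun z hz => DifferentiableAt.differentiableWithinAt ?_, hexp⟩
  exact differentiableAt_of_comp_eventuallyEq (Complex.hasStrictDerivAt_exp (L z))
    (Complex.exp_ne_zero _) (hL.continuousAt (hUo.mem_nhds hz))
    (hg.differentiableAt (hUo.mem_nhds hz)) (hexp.eventuallyEq_of_mem (hUo.mem_nhds hz))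

lemma norm_deriv_eq_of_exp_eq_sub {g L : ℂ → ℂ} {x a : ℂ} (hL : DifferentiableAt ℂ L x)
    (hexp : ∀ᶠ z in 𝓝 x, Complex.exp (L z) = g z - a) :
    ‖deriv g x‖ = ‖deriv L x‖ * ‖g x - a‖ := by
  have hderiv : deriv g x = Complex.exp (L x) * deriv L x := by
    rw [← deriv_sub_const a, ← EventuallyEq.deriv_eq hexp, hL.hasDerivAt.cexp.deriv]
  rw [hderiv, hexp.self_of_nhds, norm_mul, mul_comm]

lemma norm_exp_add_ofReal_mul_I (u : ℂ) (t : ℝ) :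
    ‖Complex.exp (u + t * Complex.I)‖ = ‖Complex.exp u‖ := by
  rw [Complex.exp_add, norm_mul, Complex.norm_exp_ofReal_mul_I, mul_one]

lemma exists_exp_add_ofReal_mul_I_eq {u w : ℂ} (h : ‖w‖ = ‖Complex.exp u‖) :
    ∃ t ∈ Icc (0 : ℝ) (2 * Real.pi), Complex.exp (u + t * Complex.I) = w := by
  set α := (w / Complex.exp u).arg
  have hα : Complex.exp (α * Complex.I) = w / Complex.exp u := by
    simpa [h] using Complex.norm_mul_exp_arg_mul_I (w / Complex.exp u)
  have hw : Complex.exp (u + α * Complex.I) = w := by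
    rw [Complex.exp_add, hα, mul_div_cancel₀ _ (Complex.exp_ne_zero u)]
  have hπ : α ≤ Real.pi := Complex.arg_le_pi _
  have hπ' : -Real.pi < α := Complex.neg_pi_lt_arg _
  rcases le_or_gt 0 α with h | h
  · exact ⟨α, ⟨h, by linarith⟩, hw⟩
  · refine ⟨α + 2 * Real.pi, ⟨by linarith, by linarith⟩, ?_⟩
    rw [← hw, ← Complex.exp_periodic (u + α * Complex.I)]
    push_cast
    ring_nf

lemma norm_deriv_le_of_no_vertical_segment {g : ℂ → ℂ} {x : ℂ} {ρ : ℝ} (hρ : 0 < ρ)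
    (hg : DifferentiableOn ℂ g (ball x ρ))
    (hseg : ∀ u : ℂ, ∃ t ∈ Icc (0 : ℝ) (2 * Real.pi), u + t * Complex.I ∉ g '' ball x ρ) :
    ‖deriv g x‖ ≤ 512 / ρ := by
  by_contra! hlt
  obtain ⟨p, hp⟩ := bloch hρ hg
  obtain ⟨t, ht, hnot⟩ := hseg (p - Real.pi * Complex.I)
  refine hnot (hp ?_)
  have hdist : dist (p - Real.pi * Complex.I + t * Complex.I) p = |t - Real.pi| := by
    rw [dist_eq_norm, show p - Real.pi * Complex.I + t * Complex.I - p =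
      ((t - Real.pi : ℝ) : ℂ) * Complex.I by push_cast; ring, norm_mul, Complex.norm_I, mul_one,
      Complex.norm_real, Real.norm_eq_abs]
  have habs : |t - Real.pi| ≤ Real.pi := abs_le.2 ⟨by linarith [ht.1], by linarith [ht.2]⟩
  rw [div_lt_iff₀ hρ] at hlt
  rw [mem_ball, hdist]
  linarith [Real.pi_lt_four]

lemma norm_deriv_le_of_injOn {g : ℂ → ℂ} {x p : ℂ} {ρ : ℝ} (hρ : 0 < ρ)
    (hg : DifferentiableOn ℂ g (ball x ρ)) (hinj : InjOn g (ball x ρ))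
    (homit : ∀ z ∈ ball x ρ, g z ≠ p) : ‖deriv g x‖ ≤ 512 / ρ * ‖g x - p‖ := by
  obtain ⟨L, hL, hexp⟩ := exists_differentiableOn_exp_eq isOpen_ball (convex_ball x ρ)
    (hg.sub_const p) (fun z hz => sub_ne_zero.2 (homit z hz))
  have hx : ball x ρ ∈ 𝓝 x := ball_mem_nhds x hρ
  rw [norm_deriv_eq_of_exp_eq_sub (hL.differentiableAt hx) (mem_of_superset hx hexp)]
  gcongr
  refine norm_deriv_le_of_no_vertical_segment hρ hL fun u => ?_
  by_contra! hall
  obtain ⟨z₁, hz₁, hLz₁⟩ := hall 0 ⟨le_rfl, by positivity⟩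
  obtain ⟨z₂, hz₂, hLz₂⟩ := hall (2 * Real.pi) ⟨by positivity, le_rfl⟩
  have hg₁₂ : g z₁ - p = g z₂ - p := by
    rw [← hexp z₁ hz₁, ← hexp z₂ hz₂, hLz₁, hLz₂]
    push_cast
    rw [zero_mul, add_zero, Complex.exp_periodic u]
  obtain rfl : z₁ = z₂ := hinj hz₁ hz₂ (sub_left_injective hg₁₂)
  simpa using congrArg Complex.im (hLz₁.symm.trans hLz₂)

end Logarithms

section OmittedValues

/-- `K` meets every circle about `a`, including the degenerate one `{a}`. A holomorphic function
omitting such a set satisfies distortion estimates depending only on the domain. -/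
def MeetsAllCircles (K : Set ℂ) (a : ℂ) : Prop :=
  ∀ t : ℝ, 0 ≤ t → ∃ z ∈ K, ‖z - a‖ = t

variable {K U V : Set ℂ} {g : ℂ → ℂ} {a x y : ℂ} {ρ ℓ : ℝ}

lemma MeetsAllCircles.mem (hK : MeetsAllCircles K a) : a ∈ K := by
  obtain ⟨z, hz, hza⟩ := hK 0 le_rfl
  rwa [← sub_eq_zero.1 (norm_eq_zero.1 hza)]

lemma exists_mem_norm_sub_eq {E : Type*} [SeminormedAddCommGroup E] {A : Set E} {a b : E} {t : ℝ}
    (ha : a ∈ A) (hunb : ¬Bornology.IsBounded (connectedComponentIn A a)) (ht : ‖a - b‖ ≤ t) :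
    ∃ z ∈ A, ‖z - b‖ = t := by
  obtain ⟨x, hx, hxt⟩ : ∃ x ∈ connectedComponentIn A a, t < ‖x - b‖ := by
    by_contra! h
    refine hunb ((isBounded_closedBall (x := b) (r := t)).subset fun x hx => ?_)
    rw [mem_closedBall, dist_eq_norm]
    exact h x hx
  obtain ⟨z, hz, hzt⟩ := isPreconnected_connectedComponentIn.intermediate_value
    (mem_connectedComponentIn ha) hx (f := fun z => ‖z - b‖) (by fun_prop) ⟨ht, hxt.le⟩
  exact ⟨z, connectedComponentIn_subset _ _ hz, hzt⟩

lemma meetsAllCircles_of_unbounded_component (ha : a ∈ K)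
    (hunb : ¬Bornology.IsBounded (connectedComponentIn K a)) : MeetsAllCircles K a :=
  fun t ht => exists_mem_norm_sub_eq ha hunb (by simpa using ht)

lemma MeetsAllCircles.exists_log (hK : MeetsAllCircles K a) (hUo : IsOpen U)
    (hUc : Convex ℝ U) (hg : DifferentiableOn ℂ g U) (homit : ∀ z ∈ U, g z ∉ K) :
    ∃ L : ℂ → ℂ, DifferentiableOn ℂ L U ∧ (∀ z ∈ U, Complex.exp (L z) = g z - a) ∧
      ∀ x ρ, 0 < ρ → ball x ρ ⊆ U → ‖deriv L x‖ ≤ 512 / ρ := by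
  obtain ⟨L, hL, hexp⟩ := exists_differentiableOn_exp_eq hUo hUc (hg.sub_const a)
    fun z hz h => homit z hz (sub_eq_zero.1 h ▸ hK.mem)
  refine ⟨L, hL, hexp, fun x ρ hρ hsub =>
    norm_deriv_le_of_no_vertical_segment hρ (hL.mono hsub) fun u => ?_⟩
  obtain ⟨k, hkK, hk⟩ := hK ‖Complex.exp u‖ (norm_nonneg _)
  obtain ⟨t, ht, htk⟩ := exists_exp_add_ofReal_mul_I_eq hk
  refine ⟨t, ht, ?_⟩
  rintro ⟨z, hz, hLz⟩
  have hgz : g z = k := sub_left_injective ((hexp z (hsub hz)).symm.trans (hLz ▸ htk))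
  exact homit z (hsub hz) (hgz ▸ hkK)

lemma MeetsAllCircles.norm_deriv_le (hK : MeetsAllCircles K a) (hρ : 0 < ρ)
    (hg : DifferentiableOn ℂ g (ball x ρ)) (homit : ∀ z ∈ ball x ρ, g z ∉ K) :
    ‖deriv g x‖ ≤ 512 / ρ * ‖g x - a‖ := by
  obtain ⟨L, hL, hexp, hL'⟩ :=
    hK.exists_log isOpen_ball (convex_ball x ρ) hg homit
  have hx : ball x ρ ∈ 𝓝 x := ball_mem_nhds x hρ
  rw [norm_deriv_eq_of_exp_eq_sub (hL.differentiableAt hx) (mem_of_superset hx hexp)]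
  gcongr
  exact hL' x ρ hρ subset_rfl

lemma MeetsAllCircles.norm_sub_le_mul_exp (hK : MeetsAllCircles K a) (hUo : IsOpen U)
    (hUc : Convex ℝ U) (hg : DifferentiableOn ℂ g U) (homit : ∀ z ∈ U, g z ∉ K)
    (hVc : Convex ℝ V) (hρ : 0 < ρ) (hV : ∀ x ∈ V, ball x ρ ⊆ U) (hx : x ∈ V) (hy : y ∈ V)
    (hℓ : ‖y - x‖ ≤ ℓ) : ‖g y - a‖ ≤ ‖g x - a‖ * Real.exp (512 / ρ * ℓ) := by
  obtain ⟨L, hL, hexp, hL'⟩ := hK.exists_log hUo hUc hg homit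
  have hVU : V ⊆ U := fun v hv => hV v hv (mem_ball_self hρ)
  have hLyx : ‖L y - L x‖ ≤ 512 / ρ * ‖y - x‖ := hVc.norm_image_sub_le_of_norm_deriv_le (𝕜 := ℂ)
    (fun v hv => hL.differentiableAt (hUo.mem_nhds (hVU hv)))
    (fun v hv => hL' v ρ hρ (hV v hv)) hx hy
  calc ‖g y - a‖ = ‖g x - a‖ * ‖Complex.exp (L y - L x)‖ := by
        rw [← hexp y (hVU hy), ← hexp x (hVU hx), ← norm_mul, ← Complex.exp_add,
          add_sub_cancel]
    _ ≤ ‖g x - a‖ * Real.exp (512 / ρ * ℓ) := by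
        gcongr
        refine (Complex.norm_exp_le_exp_norm _).trans (Real.exp_le_exp.2 (hLyx.trans ?_))
        gcongr

lemma exists_log_of_norm_le (hUo : IsOpen U) (hUc : Convex ℝ U) (hg : DifferentiableOn ℂ g U)
    {B : ℝ} (hB : 0 < B) (h0 : ∀ z ∈ U, g z ≠ 0) (hgB : ∀ z ∈ U, ‖g z‖ ≤ B) (hx : x ∈ U) :
    ∃ L : ℂ → ℂ, DifferentiableOn ℂ L U ∧ (∀ z ∈ U, ‖g z‖ = 2 * B * Real.exp (L z).re) ∧
      (∀ z ∈ U, (L z).re < 0) ∧ |(L x).im| ≤ Real.pi := by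
  have hB2 : (2 * B : ℂ) ≠ 0 := by exact_mod_cast (by positivity : 2 * B ≠ 0)
  have hgx : g x / (2 * B) ≠ 0 := div_ne_zero (h0 x hx) hB2
  obtain ⟨L, hL, hexp⟩ := exists_differentiableOn_exp_eq hUo hUc
    (hg.div_const (2 * B : ℂ)) fun z hz => div_ne_zero (h0 z hz) hB2
  set L' : ℂ → ℂ := fun z => L z - L x + Complex.log (g x / (2 * B))
  have hexp' : ∀ z ∈ U, Complex.exp (L' z) = g z / (2 * B) := fun z hz => by
    rw [Complex.exp_add, Complex.exp_sub, hexp z hz, hexp x hx, Complex.exp_log hgx,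
      div_mul_cancel₀ _ hgx]
  have hnorm : ∀ z ∈ U, ‖g z‖ = 2 * B * Real.exp (L' z).re := fun z hz => by
    rw [← Complex.norm_exp, hexp' z hz, norm_div, norm_mul, Complex.norm_real, Real.norm_eq_abs,
      abs_of_pos hB, Complex.norm_two, mul_div_cancel₀ _ (by positivity)]
  refine ⟨L', (hL.sub_const _).add_const _, hnorm, fun z hz => ?_, ?_⟩
  · rw [← Real.exp_lt_one_iff]
    nlinarith [hnorm z hz, hgB z hz]
  · rw [show L' x = Complex.log (g x / (2 * B)) by simp [L'], Complex.log_im]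
    exact Complex.abs_arg_le_pi _

/-- Up to an additive constant, a logarithm of `g` omits the closed right half-plane, so the
previous Harnack-type inequality applies to it. -/
lemma exists_le_norm_of_norm_le {B τ ρ : ℝ} (hB : 0 < B) (hτ : 0 < τ) (hρ : 0 < ρ) (ℓ : ℝ) :
    ∃ τ' > 0, ∀ (U V : Set ℂ) (g : ℂ → ℂ), IsOpen U → Convex ℝ U → DifferentiableOn ℂ g U →
      (∀ z ∈ U, g z ≠ 0) → (∀ z ∈ U, ‖g z‖ ≤ B) → Convex ℝ V → (∀ x ∈ V, ball x ρ ⊆ U) →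
      ∀ x ∈ V, ∀ y ∈ V, ‖y - x‖ ≤ ℓ → τ ≤ ‖g x‖ → τ' ≤ ‖g y‖ := by
  set X := -Real.log (τ / (2 * B)) + Real.pi
  refine ⟨2 * B * Real.exp (-(X * Real.exp (512 / ρ * ℓ))), by positivity, ?_⟩
  intro U V g hUo hUc hg h0 hgB hVc hV x hx y hy hℓ hτx
  have hVU : V ⊆ U := fun v hv => hV v hv (mem_ball_self hρ)
  obtain ⟨L, hL, hnorm, hre, him⟩ := exists_log_of_norm_le hUo hUc hg hB h0 hgB (hVU hx)
  have hLx : ‖L x‖ ≤ X := by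
    have hlog : Real.log (τ / (2 * B)) ≤ (L x).re := by
      rw [Real.log_le_iff_le_exp (by positivity), div_le_iff₀' (by positivity), ← hnorm x (hVU hx)]
      exact hτx
    calc ‖L x‖ ≤ |(L x).re| + |(L x).im| := Complex.norm_le_abs_re_add_abs_im _
      _ ≤ X := by rw [abs_of_neg (hre x (hVU hx))]; exact add_le_add (neg_le_neg hlog) him
  have hhalf : MeetsAllCircles {z : ℂ | 0 ≤ z.re} 0 :=
    fun t ht => ⟨t, by simpa using ht, by simp [abs_of_nonneg ht]⟩
  have hLy : ‖L y‖ ≤ X * Real.exp (512 / ρ * ℓ) := by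
    have hharnack := hhalf.norm_sub_le_mul_exp hUo hUc hL (fun z hz => (hre z hz).not_ge) hVc hρ hV
      hx hy hℓ
    rw [sub_zero, sub_zero] at hharnack
    exact hharnack.trans (by gcongr)
  rw [hnorm y (hVU hy)]
  gcongr
  linarith [neg_abs_le (L y).re, Complex.abs_re_le_norm (L y)]

end OmittedValues

section Lifting

section Topological

variable {E X Y : Type*} [TopologicalSpace E] [TopologicalSpace X] [TopologicalSpace Y]
  {f : E → X} {s : Set X} {Q : Set Y} {q₀ : Y}

lemma exists_continuousOn_lift [SimplyConnectedSpace Q] [LocallyPathConnectedSpace Q]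
    (hf : IsCoveringMapOn f s) {e : Y → X} (he : ContinuousOn e Q) (hes : MapsTo e Q s)
    (hq₀ : q₀ ∈ Q) {z₀ : E} (hz₀ : f z₀ = e q₀) :
    ∃ χ : Y → E, ContinuousOn χ Q ∧ χ q₀ = z₀ ∧ EqOn (f ∘ χ) e Q := by
  obtain ⟨F, ⟨hF₀, hFe⟩, -⟩ := hf.existsUnique_continuousMap_lifts
    (f := ⟨Q.domRestrict e, he.domRestrict⟩) (a₀ := ⟨q₀, hq₀⟩) (e₀ := z₀) hz₀
    (fun q => hes q.2)
  have hext (q : Q) : Function.extend Subtype.val F (fun _ => z₀) q = F q :=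
    Subtype.val_injective.extend_apply F _ q
  refine ⟨Function.extend Subtype.val F fun _ => z₀, ?_, (hext ⟨q₀, hq₀⟩).trans hF₀,
    fun q hq => (congrArg f (hext ⟨q, hq⟩)).trans (congrFun hFe ⟨q, hq⟩)⟩
  rw [continuousOn_iff_continuous_domRestrict]
  exact F.continuous.congr fun q => (hext q).symm

lemma eqOn_of_comp_eqOn_of_isCoveringMapOn (hf : IsCoveringMapOn f s) (hQ : IsPreconnected Q)
    {χ₁ χ₂ : Y → E} (hχ₁ : ContinuousOn χ₁ Q) (hχ₂ : ContinuousOn χ₂ Q)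
    (hs : ∀ q ∈ Q, f (χ₁ q) ∈ s) (heq : EqOn (f ∘ χ₁) (f ∘ χ₂) Q) (hq₀ : q₀ ∈ Q)
    (h₀ : χ₁ q₀ = χ₂ q₀) : EqOn χ₁ χ₂ Q := by
  have := isPreconnected_iff_preconnectedSpace.1 hQ
  have hs₂ : ∀ q ∈ Q, f (χ₂ q) ∈ s := fun q hq =>
    (show f (χ₁ q) = f (χ₂ q) from heq hq) ▸ hs q hq
  have hlift : (fun q : Q => (⟨χ₁ q, hs q q.2⟩ : f ⁻¹' s)) = fun q => ⟨χ₂ q, hs₂ q q.2⟩ :=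
    hf.isCoveringMap_restrictPreimage.eq_of_comp_eq (hχ₁.domRestrict.subtype_mk _)
      (hχ₂.domRestrict.subtype_mk _) (funext fun q => Subtype.ext (heq q.2)) ⟨q₀, hq₀⟩
      (Subtype.ext h₀)
  exact fun q hq => congrArg Subtype.val (congrFun hlift ⟨q, hq⟩)

end Topological

variable {f : ℂ → ℂ} {S : Set ℂ}

lemma deriv_ne_zero_of_isCoveringMapOn (hf : Differentiable ℂ f) (hcov : IsCoveringMapOn f Sᶜ)
    {z : ℂ} (hz : f z ∉ S) : deriv f z ≠ 0 := by
  obtain ⟨e, hze, rfl⟩ := hcov.isLocalHomeomorphOn z hz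
  have htarget : ∀ᶠ w in 𝓝 (e z), w ∈ e.target := e.open_target.mem_nhds (e.map_source hze)
  exact deriv_ne_zero_of_rightInverse (hf.analyticAt z) (e.left_inv hze)
    (htarget.mono fun w hw => e.continuousAt_symm hw) (htarget.mono fun w hw => e.right_inv hw)

lemma differentiableOn_of_isCoveringMapOn (hf : Differentiable ℂ f)
    (hcov : IsCoveringMapOn f Sᶜ) {Q : Set ℂ} (hQ : IsOpen Q) {e χ : ℂ → ℂ}
    (he : DifferentiableOn ℂ e Q) (heS : MapsTo e Q Sᶜ) (hχ : ContinuousOn χ Q)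
    (hχe : EqOn (f ∘ χ) e Q) : DifferentiableOn ℂ χ Q := fun q hq => by
  have hfq : f (χ q) ∉ S := by rw [show f (χ q) = e q from hχe hq]; exact heS hq
  exact (differentiableAt_of_comp_eventuallyEq (hf.analyticAt _).hasStrictDerivAt
    (deriv_ne_zero_of_isCoveringMapOn hf hcov hfq) (hχ.continuousAt (hQ.mem_nhds hq))
    (he.differentiableAt (hQ.mem_nhds hq))
    (hχe.eventuallyEq_of_mem (hQ.mem_nhds hq))).differentiableWithinAt

lemma exists_lift (hf : Differentiable ℂ f) (hcov : IsCoveringMapOn f Sᶜ)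
    {Q : Set ℂ} (hQ : IsOpen Q) (hQc : Convex ℝ Q) {e : ℂ → ℂ} (he : DifferentiableOn ℂ e Q)
    (heS : MapsTo e Q Sᶜ) {q₀ z₀ : ℂ} (hq₀ : q₀ ∈ Q) (hz₀ : f z₀ = e q₀) :
    ∃ χ : ℂ → ℂ, DifferentiableOn ℂ χ Q ∧ χ q₀ = z₀ ∧ EqOn (f ∘ χ) e Q := by
  have := hQc.contractibleSpace ⟨q₀, hq₀⟩
  have := SimplyConnectedSpace.ofContractible Q
  have := hQ.locallyPathConnectedSpace
  obtain ⟨χ, hχ, hχ₀, hχe⟩ := exists_continuousOn_lift hcov he.continuousOn heS hq₀ hz₀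
  exact ⟨χ, differentiableOn_of_isCoveringMapOn hf hcov hQ he heS hχ hχe, hχ₀, hχe⟩

lemma exists_iterate_lift (hf : Differentiable ℂ f) (hcov : IsCoveringMapOn f Sᶜ)
    {B : Set ℂ} (hSB : S ⊆ B) (hB : MapsTo f B B) {Q : Set ℂ} (hQ : IsOpen Q) (hQc : Convex ℝ Q)
    (n : ℕ) {e : ℂ → ℂ} (he : DifferentiableOn ℂ e Q) (heB : MapsTo e Q Bᶜ) {q₀ z₀ : ℂ}
    (hq₀ : q₀ ∈ Q) (hz₀ : f^[n] z₀ = e q₀) :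
    ∃ χ : ℂ → ℂ, DifferentiableOn ℂ χ Q ∧ χ q₀ = z₀ ∧ EqOn (f^[n] ∘ χ) e Q := by
  induction n generalizing e with
  | zero => exact ⟨e, he, hz₀.symm, fun q _ => rfl⟩
  | succ n ih =>
    rw [Function.iterate_succ_apply'] at hz₀
    obtain ⟨χ₁, hχ₁, hχ₁₀, hχ₁e⟩ := exists_lift hf hcov hQ hQc he
      (heB.mono_right (compl_subset_compl.2 hSB)) hq₀ hz₀
    obtain ⟨χ, hχ, hχ₀, hχe⟩ := ih hχ₁
      (fun q hq h => heB hq (by rw [← hχ₁e hq]; exact hB h)) hχ₁₀.symm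
    refine ⟨χ, hχ, hχ₀, fun q hq => ?_⟩
    rw [Function.iterate_succ', Function.comp_assoc, Function.comp_apply, hχe hq]
    exact hχ₁e hq

end Lifting

section PolynomialGrowth

variable {f : ℂ → ℂ} {C M : ℝ} {d n : ℕ}

lemma iteratedDeriv_eq_zero_of_growth (hf : Differentiable ℂ f)
    (hb : ∀ z, M ≤ ‖z‖ → ‖f z‖ ≤ C * ‖z‖ ^ d) (hn : d < n) : iteratedDeriv n f 0 = 0 := by
  have hcauchy : ∀ r : ℝ, max M 1 ≤ r → ‖iteratedDeriv n f 0‖ ≤ n.factorial * |C| * r⁻¹ := by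
    intro r hr
    obtain ⟨hrM, hr1⟩ := max_le_iff.1 hr
    have hr0 : 0 < r := one_pos.trans_le hr1
    have hpow : r ^ d ≤ r⁻¹ * r ^ n := by
      rw [inv_mul_eq_div, le_div_iff₀ hr0, ← pow_succ]
      exact pow_le_pow_right₀ hr1 hn
    have hsphere : ∀ z ∈ sphere (0 : ℂ) r, ‖f z‖ ≤ |C| * (r⁻¹ * r ^ n) := fun z hz => by
      obtain rfl : ‖z‖ = r := mem_sphere_zero_iff_norm.1 hz
      exact (hb z hrM).trans (mul_le_mul (le_abs_self C) hpow (by positivity) (abs_nonneg C))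
    calc ‖iteratedDeriv n f 0‖ ≤ n.factorial * (|C| * (r⁻¹ * r ^ n)) / r ^ n :=
          Complex.norm_iteratedDeriv_le_of_forall_mem_sphere_norm_le n hr0 hf.diffContOnCl hsphere
      _ = n.factorial * |C| * r⁻¹ := by field_simp
  have hlim : Tendsto (fun r : ℝ => n.factorial * |C| * r⁻¹) atTop (𝓝 0) := by
    simpa using tendsto_inv_atTop_zero.const_mul ((n.factorial : ℝ) * |C|)
  exact norm_le_zero_iff.1 (ge_of_tendsto hlim (eventually_atTop.2 ⟨max M 1, hcauchy⟩))

lemma exists_polynomial_of_growth (hf : Differentiable ℂ f)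
    (hb : ∀ z, M ≤ ‖z‖ → ‖f z‖ ≤ C * ‖z‖ ^ d) :
    ∃ p : Polynomial ℂ, ∀ z, f z = p.eval z := by
  refine ⟨∑ n ∈ Finset.range (d + 1),
    Polynomial.C ((n.factorial : ℂ)⁻¹ * iteratedDeriv n f 0) * Polynomial.X ^ n, fun z => ?_⟩
  rw [← Complex.taylorSeries_eq_of_entire' 0 z hf, tsum_eq_sum (s := Finset.range (d + 1)),
    Polynomial.eval_finsetSum]
  · simp
  · intro n hn
    rw [iteratedDeriv_eq_zero_of_growth hf hb (by simpa using hn)]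
    simp

end PolynomialGrowth

section Tract

variable {f φ : ℂ → ℂ} {S : Set ℂ} {ℓ : ℝ}

lemma isOpen_setOf_lt_re (ℓ : ℝ) : IsOpen {u : ℂ | ℓ < u.re} :=
  isOpen_lt continuous_const Complex.continuous_re

lemma exists_analyticAt_eq_inv_comp_inv (hf : Differentiable ℂ f) {m M : ℝ} (hm : 0 < m)
    (hfm : ∀ z, M ≤ ‖z‖ → m ≤ ‖f z‖) :
    ∃ g : ℂ → ℂ, AnalyticAt ℂ g 0 ∧ ∀ w ≠ 0, g w = (f w⁻¹)⁻¹ := by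
  set r := (max M 1)⁻¹
  have hr : 0 < r := inv_pos.2 (one_pos.trans_le (le_max_right _ _))
  have hlarge : ∀ w ∈ ball (0 : ℂ) r \ {0}, m ≤ ‖f w⁻¹‖ := fun w ⟨hw, hw0⟩ => hfm _ <| by
    rw [norm_inv]
    exact (le_max_left _ _).trans
      (le_inv_of_le_inv₀ (norm_pos_iff.2 hw0) (mem_ball_zero_iff.1 hw).le)
  refine ⟨Function.update (fun w => (f w⁻¹)⁻¹) 0 (limUnder (𝓝[≠] 0) fun w => (f w⁻¹)⁻¹),
    (Complex.differentiableOn_update_limUnder_of_bddAbove (ball_mem_nhds 0 hr) (fun w hw => ?_)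
      ⟨m⁻¹, ?_⟩).analyticAt (ball_mem_nhds 0 hr), fun w hw => Function.update_of_ne hw _ _⟩
  · exact (((hf _).comp w (differentiableAt_inv hw.2)).inv
      (norm_pos_iff.1 (hm.trans_le (hlarge w hw)))).differentiableWithinAt
  · rintro _ ⟨w, hw, rfl⟩
    rw [Function.comp_apply, norm_inv]
    exact inv_anti₀ hm (hlarge w hw)

lemma exists_polynomial_of_le_norm (hf : Differentiable ℂ f) {m M : ℝ} (hm : 0 < m)
    (hfm : ∀ z, M ≤ ‖z‖ → m ≤ ‖f z‖) : ∃ p : Polynomial ℂ, ∀ z, f z = p.eval z := by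
  obtain ⟨g, hg, hgf⟩ := exists_analyticAt_eq_inv_comp_inv hf hm hfm
  have hg0 : ¬∀ᶠ w in 𝓝 (0 : ℂ), g w = 0 := fun hg0 => by
    obtain ⟨w, ⟨hgw, hwM⟩, hw⟩ := ((hg0.filter_mono nhdsWithin_le_nhds).and
      (tendsto_norm_inv_nhdsNE_zero_atTop.eventually_ge_atTop M) |>.and
      self_mem_nhdsWithin).exists
    rw [hgf w hw, inv_eq_zero] at hgw
    exact (hm.trans_le (hfm _ ((norm_inv w).symm ▸ hwM))).ne' (norm_eq_zero.2 hgw)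
  obtain ⟨d, h, hh, hh0, hgh⟩ := hg.exists_eventuallyEq_pow_smul_nonzero_iff.2 hg0
  have hlower : ∀ᶠ w in 𝓝 (0 : ℂ), ‖h 0‖ / 2 ≤ ‖h w‖ :=
    hh.continuousAt.norm.eventually_const_le (half_lt_self (norm_pos_iff.2 hh0))
  obtain ⟨δ, hδ, hball⟩ := Metric.eventually_nhds_iff_ball.1 (hgh.and hlower)
  refine exists_polynomial_of_growth hf (C := 2 / ‖h 0‖) (M := 2 * δ⁻¹) (d := d) fun z hz => ?_
  have hz0 : 0 < ‖z‖ := (by positivity : 0 < 2 * δ⁻¹).trans_le hz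
  have hzδ : z⁻¹ ∈ ball (0 : ℂ) δ := by
    rw [mem_ball_zero_iff, norm_inv]
    exact inv_lt_of_inv_lt₀ hδ ((lt_mul_of_one_lt_left (inv_pos.2 hδ) one_lt_two).trans_le hz)
  obtain ⟨hgz, hhz⟩ := hball _ hzδ
  rw [hgf _ (inv_ne_zero (norm_pos_iff.1 hz0)), inv_inv, sub_zero, smul_eq_mul] at hgz
  have hh0' : 0 < ‖h 0‖ / 2 := half_pos (norm_pos_iff.2 hh0)
  rw [← inv_inv (f z), hgz, norm_inv, norm_mul, norm_pow, norm_inv, mul_inv, inv_pow, inv_inv,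
    mul_comm, ← inv_div]
  exact mul_le_mul_of_nonneg_right (inv_anti₀ hh0' hhz) (by positivity)

lemma exp_notMem (hS : S ⊆ closedBall 0 (Real.exp ℓ)) {u : ℂ} (hu : ℓ < u.re) :
    Complex.exp u ∉ S := fun huS => by
  have hnorm := mem_closedBall_zero_iff.1 (hS huS)
  rw [Complex.norm_exp, Real.exp_le_exp] at hnorm
  exact hnorm.not_gt hu

lemma exists_exp_lift (hf : Differentiable ℂ f) (hcov : IsCoveringMapOn f Sᶜ)
    (hS : S ⊆ closedBall 0 (Real.exp ℓ)) {z : ℂ} (hz : Real.exp ℓ < ‖f z‖) :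
    ℓ < (Complex.log (f z)).re ∧ Complex.exp (Complex.log (f z)) = f z ∧
      ∃ φ : ℂ → ℂ, DifferentiableOn ℂ φ {u | ℓ < u.re} ∧ φ (Complex.log (f z)) = z ∧
        EqOn (f ∘ φ) Complex.exp {u | ℓ < u.re} := by
  have hz0 : 0 < ‖f z‖ := (Real.exp_pos ℓ).trans hz
  have hlog : ℓ < (Complex.log (f z)).re := by
    rwa [Complex.log_re, Real.lt_log_iff_exp_lt hz0]
  have hexp : Complex.exp (Complex.log (f z)) = f z := Complex.exp_log (norm_pos_iff.1 hz0)
  refine ⟨hlog, hexp, exists_lift hf hcov (isOpen_setOf_lt_re ℓ) (convex_halfSpace_re_gt ℓ)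
    Complex.differentiable_exp.differentiableOn (fun u hu => exp_notMem hS hu) hlog hexp.symm⟩

lemma exp_deriv_lift (hf : Differentiable ℂ f) (hφ : DifferentiableOn ℂ φ {u | ℓ < u.re})
    (hφe : EqOn (f ∘ φ) Complex.exp {u | ℓ < u.re}) {u : ℂ} (hu : ℓ < u.re) :
    deriv f (φ u) * deriv φ u = Complex.exp u := by
  have hnhds := (isOpen_setOf_lt_re ℓ).mem_nhds hu
  have hchain : HasDerivAt (f ∘ φ) (deriv f (φ u) * deriv φ u) u :=
    (hf (φ u)).hasDerivAt.comp u (hφ.differentiableAt hnhds).hasDerivAt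
  exact hchain.unique ((Complex.hasDerivAt_exp u).congr_of_eventuallyEq
    (hφe.eventuallyEq_of_mem hnhds))

lemma map_nhds_lift (hf : Differentiable ℂ f) (hφ : DifferentiableOn ℂ φ {u | ℓ < u.re})
    (hφe : EqOn (f ∘ φ) Complex.exp {u | ℓ < u.re}) {u : ℂ} (hu : ℓ < u.re) :
    map φ (𝓝 u) = 𝓝 (φ u) :=
  (hφ.analyticAt ((isOpen_setOf_lt_re ℓ).mem_nhds hu)).hasStrictDerivAt.map_nhds_eq
    (right_ne_zero_of_mul ((exp_deriv_lift hf hφ hφe hu).trans_ne (Complex.exp_ne_zero u)))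

/-- The lift of `exp` through `z` is a translate of `φ`. -/
lemma exists_lift_eq_of_mem_closure (hf : Differentiable ℂ f) (hcov : IsCoveringMapOn f Sᶜ)
    (hS : S ⊆ closedBall 0 (Real.exp ℓ)) (hφ : DifferentiableOn ℂ φ {u | ℓ < u.re})
    (hφe : EqOn (f ∘ φ) Complex.exp {u | ℓ < u.re}) {z : ℂ}
    (hzφ : z ∈ closure (φ '' {u | ℓ < u.re})) (hz : Real.exp ℓ < ‖f z‖) :
    ∃ u, ℓ < u.re ∧ φ u = z := by
  obtain ⟨hlog, -, ψ, hψ, hψz, hψe⟩ := exists_exp_lift hf hcov hS hz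
  have hψnhds : ψ '' {u | ℓ < u.re} ∈ 𝓝 z := by
    rw [← hψz, ← map_nhds_lift hf hψ hψe hlog]
    exact image_mem_map ((isOpen_setOf_lt_re ℓ).mem_nhds hlog)
  obtain ⟨-, ⟨v, hv, rfl⟩, u, hu, huv⟩ := mem_closure_iff_nhds.1 hzφ _ hψnhds
  obtain ⟨k, hk⟩ := Complex.exp_eq_exp_iff_exists_int.1
    ((hφe hu).symm.trans ((congrArg f huv).trans (hψe hv)))
  have hshift : MapsTo (· + k * (2 * Real.pi * Complex.I)) {u : ℂ | ℓ < u.re} {u | ℓ < u.re} :=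
    fun w (hw : ℓ < w.re) => by simpa using hw
  have hexp : EqOn (f ∘ (φ ∘ (· + k * (2 * Real.pi * Complex.I)))) Complex.exp {u | ℓ < u.re} :=
    fun w hw => (hφe (hshift hw)).trans (Complex.exp_periodic.int_mul k w)
  have heq := eqOn_of_comp_eqOn_of_isCoveringMapOn hcov
    (convex_halfSpace_re_gt ℓ).isPreconnected (hφ.continuousOn.comp (by fun_prop) hshift)
    hψ.continuousOn (fun w hw => (congrArg (· ∉ S) (hexp hw)).mpr (exp_notMem hS hw))
    (hexp.trans hψe.symm) hv (by rw [Function.comp_apply, ← hk, huv])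
  exact ⟨_, hshift hlog, (heq hlog).trans hψz⟩

lemma isPreconnected_compl_closedBall (a : ℂ) {t : ℝ} (ht : 0 < t) :
    IsPreconnected (closedBall a t)ᶜ := by
  have hexp : (fun u => a + Complex.exp u) '' {u | Real.log t < u.re} = (closedBall a t)ᶜ := by
    ext z
    simp only [mem_image, mem_ofPred_eq, mem_compl_iff, mem_closedBall, dist_eq_norm, not_le]
    constructor
    · rintro ⟨u, hu, rfl⟩
      rwa [add_sub_cancel_left, Complex.norm_exp, ← Real.log_lt_iff_lt_exp ht]
    · intro hz
      refine ⟨Complex.log (z - a), ?_, ?_⟩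
      · rw [Complex.log_re]
        exact Real.log_lt_log ht hz
      · rw [Complex.exp_log (norm_pos_iff.1 (ht.trans hz)), add_sub_cancel]
  rw [← hexp]
  exact (convex_halfSpace_re_gt _).isPreconnected.image _ (by fun_prop)

lemma lift_vertical_line_mem_closedBall (hφ : DifferentiableOn ℂ φ {u | ℓ < u.re})
    (hφe : EqOn (f ∘ φ) Complex.exp {u | ℓ < u.re}) {u : ℂ} (hu : ℓ < u.re) {a : ℂ} {t : ℝ}
    (huφ : φ u ∈ closedBall a t) (hsphere : ∀ z ∈ sphere a t, Real.exp u.re < ‖f z‖) {v : ℂ}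
    (hv : v.re = u.re) : φ v ∈ closedBall a t := by
  by_contra hvφ
  have hline : IsPreconnected {w : ℂ | w.re = u.re} := (convex_hyperplane
    (show IsLinearMap ℝ Complex.re from Complex.reLm.isLinear) u.re).isPreconnected
  obtain ⟨w, hw, hwφ⟩ := hline.intermediate_value rfl hv
    ((continuous_id.dist continuous_const).comp_continuousOn
      (hφ.continuousOn.mono fun w (hw : w.re = u.re) => hu.trans_eq hw.symm))
    ⟨mem_closedBall.1 huφ, (not_le.1 hvφ).le⟩
  have hlt : Real.exp u.re < ‖f (φ w)‖ := hsphere _ hwφ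
  rw [show f (φ w) = Complex.exp w from hφe (hu.trans_eq hw.symm), Complex.norm_exp, hw] at hlt
  exact hlt.false

/-- The complement of the disc lies in the tract `φ '' {u | σ < u.re}`, whose boundary is contained
in `φ '' {u | u.re = σ}`. -/
lemma exp_le_norm_of_lift_mem_closedBall (hf : Differentiable ℂ f) (hcov : IsCoveringMapOn f Sᶜ)
    (hS : S ⊆ closedBall 0 (Real.exp ℓ)) (hφ : DifferentiableOn ℂ φ {u | ℓ < u.re})
    (hφe : EqOn (f ∘ φ) Complex.exp {u | ℓ < u.re}) {σ : ℝ} (hσ : ℓ < σ) {a : ℂ} {t : ℝ}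
    (ht : 0 < t) (hline : ∀ u : ℂ, u.re = σ → φ u ∈ closedBall a t) {z : ℂ}
    (hz : z ∉ closedBall a t) : Real.exp σ ≤ ‖f z‖ := by
  have hnorm : ∀ u : ℂ, ℓ < u.re → ‖f (φ u)‖ = Real.exp u.re := fun u hu =>
    (congrArg norm (hφe hu)).trans (Complex.norm_exp u)
  have hsub : {u : ℂ | σ < u.re} ⊆ {u | ℓ < u.re} := fun u hu => hσ.trans hu
  suffices (closedBall a t)ᶜ ⊆ φ '' {u | σ < u.re} by
    obtain ⟨u, hu, rfl⟩ := this hz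
    exact (Real.exp_le_exp.2 (le_of_lt hu)).trans_eq (hnorm u (hsub hu)).symm
  refine (isPreconnected_compl_closedBall a ht).subset_of_closure_inter_subset ?_ ?_ ?_
  · refine isOpen_iff_mem_nhds.2 ?_
    rintro _ ⟨u, hu, rfl⟩
    rw [← map_nhds_lift hf hφ hφe (hsub hu)]
    exact image_mem_map ((isOpen_setOf_lt_re σ).mem_nhds hu)
  · obtain ⟨B, hB⟩ := (isCompact_closedBall a t).exists_bound_of_continuousOn
      hf.continuous.continuousOn
    set x := max (σ + 1) B
    have hx : σ < x := (lt_add_one σ).trans_le (le_max_left _ _)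
    refine ⟨φ x, fun hmem => ?_, x, hx, rfl⟩
    have hle := hB _ hmem
    rw [hnorm x (hσ.trans hx), Complex.ofReal_re] at hle
    linarith [Real.add_one_le_exp x, le_max_right (σ + 1) B]
  · rintro w ⟨hwφ, hwt⟩
    have hwσ : Real.exp σ ≤ ‖f w‖ := by
      refine closure_minimal ?_ (isClosed_le continuous_const hf.continuous.norm) hwφ
      rintro _ ⟨u, hu, rfl⟩
      exact (Real.exp_le_exp.2 (le_of_lt hu)).trans_eq (hnorm u (hsub hu)).symm
    obtain ⟨u, hu, rfl⟩ := exists_lift_eq_of_mem_closure hf hcov hS hφ hφe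
      (closure_mono (image_mono hsub) hwφ) ((Real.exp_lt_exp.2 hσ).trans_le hwσ)
    rw [hnorm u hu, Real.exp_le_exp] at hwσ
    exact ⟨u, hwσ.lt_of_ne fun h => hwt (hline u h.symm), rfl⟩

lemma TranscendentalEntire.meetsAllCircles (hf : TranscendentalEntire f)
    (hcov : IsCoveringMapOn f Sᶜ) (hS : S ⊆ closedBall 0 (Real.exp ℓ)) {a : ℂ}
    (ha : ‖f a‖ < Real.exp ℓ) : MeetsAllCircles {z | ‖f z‖ ≤ Real.exp ℓ} a := by
  intro t ht
  by_contra! hcon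
  obtain ⟨z₀, hz₀, hmin⟩ := (isCompact_sphere a t).exists_isMinOn
    (NormedSpace.sphere_nonempty.2 ht) hf.1.continuous.norm.continuousOn
  have hz₀ℓ : Real.exp ℓ < ‖f z₀‖ :=
    not_le.1 fun h => hcon z₀ h (mem_sphere_iff_norm.1 hz₀)
  obtain ⟨m, hℓm, hmz₀⟩ := exists_between hz₀ℓ
  obtain ⟨z₁, hz₁, rfl⟩ := (convex_closedBall a t).isPreconnected.intermediate_value
    (mem_closedBall_self ht) (sphere_subset_closedBall hz₀) hf.1.continuous.norm.continuousOn
    ⟨(ha.trans hℓm).le, hmz₀.le⟩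
  obtain ⟨hlog, hexp, φ, hφ, hφz₁, hφe⟩ := exists_exp_lift hf.1 hcov hS hℓm
  have hre : Real.exp (Complex.log (f z₁)).re = ‖f z₁‖ := by rw [← Complex.norm_exp, hexp]
  have hline : ∀ v : ℂ, v.re = (Complex.log (f z₁)).re → φ v ∈ closedBall a t := fun v hv =>
    lift_vertical_line_mem_closedBall hφ hφe hlog (hφz₁.symm ▸ hz₁)
      (fun z hz => hre.symm ▸ hmz₀.trans_le (hmin hz)) hv
  refine hf.2 (exists_polynomial_of_le_norm hf.1 (M := ‖a‖ + (t + 1) + 1)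
    (Real.exp_pos (Complex.log (f z₁)).re) fun z hz => ?_)
  refine exp_le_norm_of_lift_mem_closedBall hf.1 hcov hS hφ hφe hlog (by positivity : 0 < t + 1)
    (fun v hv => closedBall_subset_closedBall (by linarith) (hline v hv)) fun hza => ?_
  have := mem_closedBall_iff_norm.1 hza
  linarith [norm_sub_norm_le z a]

/-- The Eremenko–Lyubich expansion estimate. -/
lemma TranscendentalEntire.norm_mul_log_le (hf : TranscendentalEntire f)
    (hcov : IsCoveringMapOn f Sᶜ) {r : ℝ} (hr : 0 < r) (hS : S ⊆ closedBall 0 r) {a w : ℂ}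
    (ha : ‖f a‖ < r) (hw : r < ‖f w‖) :
    ‖f w‖ * Real.log (‖f w‖ / r) ≤ 512 * (‖deriv f w‖ * ‖w - a‖) := by
  obtain ⟨ℓ, rfl⟩ : ∃ ℓ, Real.exp ℓ = r := ⟨Real.log r, Real.exp_log hr⟩
  obtain ⟨hlog, hexp, φ, hφ, hφw, hφe⟩ := exists_exp_lift hf.1 hcov hS hw
  set u := Complex.log (f w)
  have hu : 0 < u.re - ℓ := sub_pos.2 hlog
  have hsub : ball u (u.re - ℓ) ⊆ {u | ℓ < u.re} := fun v hv => by
    have hdist := (abs_le.1 (Complex.abs_re_le_norm (v - u))).1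
    rw [Complex.sub_re] at hdist
    rw [mem_ofPred_eq]
    linarith [mem_ball_iff_norm.1 hv]
  have hφ' : ‖deriv φ u‖ ≤ 512 / (u.re - ℓ) * ‖w - a‖ := by
    rw [← hφw]
    refine (hf.meetsAllCircles hcov hS ha).norm_deriv_le hu (hφ.mono hsub) fun v hv hle => ?_
    rw [mem_ofPred_eq, ← Function.comp_apply (f := f), hφe (hsub hv), Complex.norm_exp,
      Real.exp_le_exp] at hle
    exact hle.not_gt (hsub hv)
  have hderiv := congrArg norm (exp_deriv_lift hf.1 hφ hφe hlog)
  rw [hφw, hexp, norm_mul] at hderiv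
  have hlogr : Real.log (‖f w‖ / Real.exp ℓ) = u.re - ℓ := by
    rw [Real.log_div (hr.trans hw).ne' hr.ne', Real.log_exp, Complex.log_re]
  calc ‖f w‖ * Real.log (‖f w‖ / Real.exp ℓ)
      = ‖deriv f w‖ * ‖deriv φ u‖ * (u.re - ℓ) := by rw [hlogr, hderiv]
    _ ≤ ‖deriv f w‖ * (512 / (u.re - ℓ) * ‖w - a‖) * (u.re - ℓ) := by gcongr
    _ = 512 * (‖deriv f w‖ * ‖w - a‖) := by field_simp

end Tract

section Spherical

lemma sphericalDist_comm (x y : ℂ) : sphericalDist x y = sphericalDist y x := by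
  rw [sphericalDist, sphericalDist, dist_comm, mul_comm (Real.sqrt _)]

lemma dist_lt_one_of_sphericalDist_lt {x y : ℂ} {M : ℝ} (hx : ‖x‖ ≤ M)
    (h : sphericalDist y x < 1 / (1 + M) ^ 2) : dist y x < 1 := by
  by_contra! hdist
  have hM : 0 ≤ M := (norm_nonneg x).trans hx
  have hsqrtx : Real.sqrt (1 + ‖x‖ ^ 2) ≤ 1 + M := (sqrt_one_add_norm_sq_le x).trans (by gcongr)
  have hsqrty : Real.sqrt (1 + ‖y‖ ^ 2) ≤ (1 + M) * (2 * dist y x) := by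
    have hy : ‖y‖ ≤ M + dist y x := by linarith [norm_le_norm_add_norm_sub' y x, dist_eq_norm y x]
    nlinarith [sqrt_one_add_norm_sq_le y]
  rw [sphericalDist, div_lt_div_iff₀ (by positivity) (by positivity)] at h
  have hprod : Real.sqrt (1 + ‖y‖ ^ 2) * Real.sqrt (1 + ‖x‖ ^ 2) ≤
      (1 + M) * (2 * dist y x) * (1 + M) := by gcongr
  linarith

lemma sphericalDist_le_of_exp {x y a u v : ℂ} (hu : Complex.exp u = x - a)
    (hv : Complex.exp v = y - a) (huv : ‖v - u‖ ≤ 1) :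
    sphericalDist y x ≤ 4 * (1 + ‖a‖) * ‖v - u‖ := by
  have hyx : y - x = (x - a) * (Complex.exp (v - u) - 1) := by
    rw [Complex.exp_sub, ← hu, mul_sub, mul_div_cancel₀ _ (Complex.exp_ne_zero u), hu, hv]
    ring
  have hsqrt : ∀ z : ℂ, 1 ≤ Real.sqrt (1 + ‖z‖ ^ 2) := fun z =>
    Real.one_le_sqrt.2 (le_add_of_nonneg_right (sq_nonneg _))
  have hxa : ‖x‖ + ‖a‖ ≤ (1 + ‖a‖) * Real.sqrt (1 + ‖x‖ ^ 2) := by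
    have hx : ‖x‖ ≤ Real.sqrt (1 + ‖x‖ ^ 2) := Real.le_sqrt_of_sq_le (by linarith)
    nlinarith [norm_nonneg a, hsqrt x]
  rw [sphericalDist, div_le_iff₀ (by positivity)]
  calc 2 * dist y x = 2 * (‖x - a‖ * ‖Complex.exp (v - u) - 1‖) := by
        rw [dist_eq_norm, hyx, norm_mul]
    _ ≤ 2 * ((1 + ‖a‖) * Real.sqrt (1 + ‖x‖ ^ 2) * (2 * ‖v - u‖)) := by
        gcongr
        · exact (norm_sub_le _ _).trans hxa
        · exact Complex.norm_exp_sub_one_le huv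
    _ = 4 * (1 + ‖a‖) * ‖v - u‖ * (1 * Real.sqrt (1 + ‖x‖ ^ 2)) := by ring
    _ ≤ _ := by
        gcongr
        exact hsqrt y

end Spherical

section Fatou

variable {f : ℂ → ℂ} {z : ℂ}

lemma isOpen_fatouSet (f : ℂ → ℂ) : IsOpen (FatouSet f) := by
  rw [isOpen_iff_mem_nhds]
  rintro z ⟨N, hN, hz, h⟩
  exact mem_of_superset (hN.mem_nhds hz) fun y hy => ⟨N, hN, hy, h⟩

lemma exists_ball_sphericalDist_lt (hz : z ∈ FatouSet f) {η : ℝ} (hη : 0 < η) :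
    ∃ δ > 0, ∀ y ∈ ball z δ, ∀ n, sphericalDist (f^[n] y) (f^[n] z) < η := by
  obtain ⟨N, hN, hzN, h⟩ := hz
  obtain ⟨δ, hδ, hd⟩ := h z hzN η hη
  obtain ⟨r, hr, hrN⟩ := Metric.isOpen_iff.1 hN z hzN
  refine ⟨min δ r, lt_min hδ hr, fun y hy n => ?_⟩
  rw [mem_ball, lt_min_iff] at hy
  exact hd y (hrN hy.2) hy.1 n

lemma exists_ball_norm_iterate_lt (hz : z ∈ FatouSet f) (M : ℝ) :
    ∃ δ > 0, ∀ n, ∀ x ∈ ball z δ, ‖f^[n] x‖ ≤ M → ∀ y ∈ ball z δ, ‖f^[n] y‖ < M + 2 := by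
  obtain ⟨δ, hδ, hsph⟩ := exists_ball_sphericalDist_lt hz
    (η := 1 / (1 + (|M| + 1)) ^ 2) (by positivity)
  refine ⟨δ, hδ, fun n x hx hxM y hy => ?_⟩
  have hle := le_abs_self M
  have hsmall : 1 / (1 + (|M| + 1)) ^ 2 ≤ 1 / (1 + M) ^ 2 := by
    have hM : 0 ≤ M := (norm_nonneg _).trans hxM
    gcongr
    linarith
  have hxz : dist (f^[n] z) (f^[n] x) < 1 := dist_lt_one_of_sphericalDist_lt hxM
    (sphericalDist_comm (f^[n] x) _ ▸ (hsph x hx n).trans_le hsmall)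
  have hzM : ‖f^[n] z‖ ≤ |M| + 1 := by
    linarith [norm_le_norm_add_norm_sub' (f^[n] z) (f^[n] x), dist_eq_norm (f^[n] z) (f^[n] x)]
  have hyz := dist_lt_one_of_sphericalDist_lt hzM (hsph y hy n)
  linarith [norm_le_norm_add_norm_sub' (f^[n] y) (f^[n] x),
    dist_triangle (f^[n] y) (f^[n] z) (f^[n] x), dist_eq_norm (f^[n] y) (f^[n] x)]

/-- A form of Montel's theorem. -/
lemma MeetsAllCircles.ball_subset_fatouSet (hf : Differentiable ℂ f) {y : ℂ} {δ : ℝ} {K : Set ℂ}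
    {a : ℂ} (hK : MeetsAllCircles K a) (homit : ∀ n, ∀ z ∈ ball y δ, f^[n] z ∉ K) :
    ball y (δ / 2) ⊆ FatouSet f := by
  intro x₀ hx₀
  have hδ : 0 < δ / 2 := dist_nonneg.trans_lt hx₀
  have hball : ∀ x ∈ ball y (δ / 2), ball x (δ / 2) ⊆ ball y δ := fun x hx =>
    ball_subset_ball' (by linarith [mem_ball.1 hx])
  refine ⟨ball y (δ / 2), isOpen_ball, hx₀, fun x hx η hη => ?_⟩
  set C := 512 / (δ / 2)
  have hC : 0 < C := by positivity
  refine ⟨min (1 / C) (η / (4 * (1 + ‖a‖) * C)), by positivity, fun x' hx' hxx' n => ?_⟩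
  obtain ⟨L, hL, hexp, hL'⟩ := hK.exists_log isOpen_ball (convex_ball y δ)
    (hf.iterate n).differentiableOn (homit n)
  have hsub : ball y (δ / 2) ⊆ ball y δ := ball_subset_ball (by linarith)
  have hLip : ‖L x' - L x‖ ≤ C * ‖x' - x‖ :=
    (convex_ball y (δ / 2)).norm_image_sub_le_of_norm_deriv_le
      (fun v hv => hL.differentiableAt (isOpen_ball.mem_nhds (hsub hv)))
      (fun v hv => hL' v (δ / 2) hδ (hball v hv)) hx hx'
  rw [dist_eq_norm, lt_min_iff, lt_div_iff₀' hC, lt_div_iff₀' (by positivity)] at hxx'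
  refine (sphericalDist_le_of_exp (hexp x (hsub hx)) (hexp x' (hsub hx'))
    (hLip.trans hxx'.1.le)).trans_lt ?_
  calc 4 * (1 + ‖a‖) * ‖L x' - L x‖ ≤ 4 * (1 + ‖a‖) * (C * ‖x' - x‖) := by gcongr
    _ = 4 * (1 + ‖a‖) * C * ‖x' - x‖ := by ring
    _ < η := hxx'.2

end Fatou

section ExpansionNearInfinity

variable {f : ℂ → ℂ} {S : Set ℂ} {z : ℂ}

lemma deriv_iterate_succ' (hf : Differentiable ℂ f) (n : ℕ) (z : ℂ) :
    deriv f^[n + 1] z = deriv f (f^[n] z) * deriv f^[n] z := by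
  rw [Function.iterate_succ']
  exact deriv_comp z (hf _) ((hf.iterate n) z)

lemma TranscendentalEntire.isOpenMap (hf : TranscendentalEntire f) : IsOpenMap f := by
  have han : AnalyticOnNhd ℂ f univ := fun z _ => hf.1.analyticAt z
  refine han.is_constant_or_isOpenMap.resolve_left ?_
  rintro ⟨c, hc⟩
  exact hf.2 ⟨Polynomial.C c, fun z => by rw [hc z, Polynomial.eval_C]⟩

lemma TranscendentalEntire.isOpenMap_iterate (hf : TranscendentalEntire f) (n : ℕ) :
    IsOpenMap f^[n] := by
  induction n with
  | zero => exact IsOpenMap.id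
  | succ n ih => exact ih.comp hf.isOpenMap

lemma TranscendentalEntire.singularSet_nonempty (hf : TranscendentalEntire f)
    (hcov : IsCoveringMapOn f Sᶜ) : S.Nonempty := by
  by_contra hne
  rw [not_nonempty_iff_eq_empty] at hne
  subst hne
  obtain ⟨χ, -, -, hχ⟩ := exists_lift (z₀ := 0) hf.1 hcov isOpen_univ convex_univ
    (e := id) differentiableOn_id (by simp) (mem_univ (f 0)) rfl
  have ha : f (χ 0) = 0 := hχ (mem_univ 0)
  obtain ⟨w, hw⟩ : ∃ w, f w ≠ 0 := by
    by_contra! h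
    exact hf.2 ⟨0, by simpa using h⟩
  have hw0 : 0 < ‖f w‖ := norm_pos_iff.2 hw
  -- The expansion estimate holds with every radius below `‖f w‖`, but its left side is unbounded.
  set D := 512 * (‖deriv f w‖ * ‖w - χ 0‖)
  have hD : 0 ≤ D := by positivity
  set X := D / ‖f w‖ + 1
  have hX : 0 < X := by positivity
  have hexp : Real.exp (-X) < 1 := Real.exp_lt_one_iff.2 (neg_lt_zero.2 hX)
  have hexpand := hf.norm_mul_log_le hcov (r := ‖f w‖ * Real.exp (-X)) (by positivity)
    (empty_subset _) (ha.symm ▸ norm_zero.trans_lt (by positivity))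
    (mul_lt_of_lt_one_right hw0 hexp)
  have hlog : Real.log (‖f w‖ / (‖f w‖ * Real.exp (-X))) = X := by
    rw [div_mul_cancel_left₀ hw0.ne', ← Real.exp_neg, neg_neg, Real.log_exp]
  rw [hlog, show ‖f w‖ * X = D + ‖f w‖ by simp only [X]; field_simp] at hexpand
  linarith

lemma TranscendentalEntire.two_mul_norm_le (hf : TranscendentalEntire f)
    (hcov : IsCoveringMapOn f Sᶜ) {r : ℝ} (hr : 0 < r) (hS : S ⊆ closedBall 0 r)
    (h0 : ‖f 0‖ < r) {w : ℂ} (hw : r * Real.exp 1024 < ‖f w‖) :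
    2 * ‖f w‖ ≤ ‖deriv f w‖ * ‖w‖ := by
  have hrw : r < ‖f w‖ :=
    (lt_mul_of_one_lt_right hr (Real.one_lt_exp_iff.2 (by norm_num))).trans hw
  have hlog : 1024 ≤ Real.log (‖f w‖ / r) := by
    rw [Real.le_log_iff_exp_le (div_pos (hr.trans hrw) hr), le_div_iff₀' hr]
    exact hw.le
  have hexpand := hf.norm_mul_log_le hcov hr hS h0 hrw
  rw [sub_zero] at hexpand
  nlinarith [norm_nonneg (f w)]

lemma TranscendentalEntire.two_pow_mul_norm_iterate_le (hf : TranscendentalEntire f)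
    (hcov : IsCoveringMapOn f Sᶜ) {r : ℝ} (hr : 0 < r) (hS : S ⊆ closedBall 0 r)
    (h0 : ‖f 0‖ < r) (horbit : ∀ n, r * Real.exp 1024 < ‖f^[n] z‖) (n : ℕ) :
    2 ^ n * ‖f^[n] z‖ ≤ ‖deriv f^[n] z‖ * ‖z‖ := by
  induction n with
  | zero => simp
  | succ n ih =>
    have hstep := hf.two_mul_norm_le hcov hr hS h0 (w := f^[n] z)
      (by simpa only [Function.iterate_succ_apply'] using horbit (n + 1))
    rw [deriv_iterate_succ' hf.1, norm_mul, Function.iterate_succ_apply', pow_succ]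
    calc 2 ^ n * 2 * ‖f (f^[n] z)‖ = 2 ^ n * (2 * ‖f (f^[n] z)‖) := by ring
      _ ≤ 2 ^ n * (‖deriv f (f^[n] z)‖ * ‖f^[n] z‖) := by gcongr
      _ = ‖deriv f (f^[n] z)‖ * (2 ^ n * ‖f^[n] z‖) := by ring
      _ ≤ ‖deriv f (f^[n] z)‖ * (‖deriv f^[n] z‖ * ‖z‖) := by gcongr
      _ = _ := by ring

lemma TranscendentalEntire.exists_norm_iterate_le (hf : TranscendentalEntire f)
    (hcov : IsCoveringMapOn f Sᶜ) {r : ℝ} (hr : 0 < r) (hS : S ⊆ closedBall 0 r)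
    (h0 : ‖f 0‖ < r) {ρ : ℝ} (hρ : 0 < ρ) :
    ∃ n, ∃ y ∈ ball z ρ, ‖f^[n] y‖ ≤ r * Real.exp 1024 := by
  by_contra! hout
  have horbit : ∀ n, r * Real.exp 1024 < ‖f^[n] z‖ := fun n => hout n z (mem_ball_self hρ)
  have hexpr : Real.exp (Real.log r) = r := Real.exp_log hr
  have hupper : ∀ n, ‖deriv f^[n] z‖ ≤ 512 / ρ * ‖f^[n] z‖ := fun n => by
    have hle := (hf.meetsAllCircles hcov (hexpr.symm ▸ hS) (hexpr.symm ▸ h0)).norm_deriv_le hρ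
      (hf.1.iterate n).differentiableOn fun y hy (hyr : ‖f (f^[n] y)‖ ≤ _) => by
        rw [hexpr, ← Function.iterate_succ_apply' f] at hyr
        have hlt := hout (n + 1) y hy
        nlinarith [Real.one_lt_exp_iff.2 (show (0 : ℝ) < 1024 by norm_num)]
    rwa [sub_zero] at hle
  obtain ⟨n, hn⟩ := pow_unbounded_of_one_lt (512 / ρ * ‖z‖) one_lt_two
  have hpos : 0 < ‖f^[n] z‖ := (mul_pos hr (Real.exp_pos _)).trans (horbit n)
  have hlower := hf.two_pow_mul_norm_iterate_le hcov hr hS h0 horbit n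
  nlinarith [mul_le_mul_of_nonneg_right (hupper n) (norm_nonneg z)]

lemma TranscendentalEntire.not_tendsto_norm_iterate (hf : TranscendentalEntire f)
    (hcov : IsCoveringMapOn f Sᶜ) (hSbdd : Bornology.IsBounded S) (hz : z ∈ FatouSet f) :
    ¬Tendsto (fun n => ‖f^[n] z‖) atTop atTop := by
  intro hlim
  obtain ⟨r, hr, hS⟩ := hSbdd.subset_closedBall_lt ‖f 0‖ 0
  obtain ⟨δ, hδ, hball⟩ := exists_ball_norm_iterate_lt hz (r * Real.exp 1024)
  obtain ⟨N, hN⟩ := eventually_atTop.1 (hlim.eventually_ge_atTop (r * Real.exp 1024 + 2))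
  obtain ⟨ρ, hρ, hρN⟩ := Metric.isOpen_iff.1 (hf.isOpenMap_iterate N _ isOpen_ball) (f^[N] z)
    (mem_image_of_mem _ (mem_ball_self hδ))
  obtain ⟨n, y, hy, hny⟩ := hf.exists_norm_iterate_le hcov ((norm_nonneg _).trans_lt hr) hS hr hρ
  obtain ⟨x, hx, rfl⟩ := hρN hy
  rw [← Function.iterate_add_apply] at hny
  exact (hN _ (Nat.le_add_left N n)).not_gt (hball _ x hx hny z (mem_ball_self hδ))

end ExpansionNearInfinity

/-- The union of the forward orbits of the points of `S`, where `S` contains the singular values of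
`f`. No closure is taken. -/
def postsingularSet (f : ℂ → ℂ) (S : Set ℂ) : Set ℂ :=
  ⋃ n, f^[n] '' S

/-- The iterates of `f` tend to infinity uniformly on `S`. -/
def EscapesUniformlyOn (f : ℂ → ℂ) (S : Set ℂ) : Prop :=
  ∀ M : ℝ, ∃ N : ℕ, ∀ n ≥ N, ∀ s ∈ S, M ≤ ‖f^[n] s‖

section Postsingular

variable {f : ℂ → ℂ} {S : Set ℂ}

lemma le_mul_norm_deriv_of_inverse {g : ℂ → ℂ} {z b : ℂ} {ρ : ℝ} (hρ : 0 ≤ ρ)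
    (hg : Differentiable ℂ g)
    (hinv : 0 < ρ → ∃ χ : ℂ → ℂ, DifferentiableOn ℂ χ (ball (g z) ρ) ∧ χ (g z) = z ∧
      EqOn (g ∘ χ) id (ball (g z) ρ))
    (hb : g b ∉ ball (g z) ρ) : ρ ≤ 512 * (‖deriv g z‖ * ‖z - b‖) := by
  rcases hρ.eq_or_lt with rfl | hpos
  · positivity
  obtain ⟨χ, hχ, hχz, hgχ⟩ := hinv hpos
  have hnhds : ball (g z) ρ ∈ 𝓝 (g z) := ball_mem_nhds _ hpos
  have hinj : InjOn χ (ball (g z) ρ) := InjOn.of_comp (hgχ.injOn_iff.2 (injOn_id _))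
  have hχ' := norm_deriv_le_of_injOn hpos hχ hinj (p := b) fun q hq hqb =>
    hb (hqb ▸ (show g (χ q) = q from hgχ hq).symm ▸ hq)
  have hderiv : deriv g (χ (g z)) * deriv χ (g z) = 1 :=
    ((hg _).hasDerivAt.comp _ (hχ.differentiableAt hnhds).hasDerivAt).unique
      ((hasDerivAt_id _).congr_of_eventuallyEq (hgχ.eventuallyEq_of_mem hnhds))
  rw [hχz] at hχ' hderiv
  calc ρ = ρ * (‖deriv g z‖ * ‖deriv χ (g z)‖) := by
        rw [← norm_mul, hderiv, norm_one, mul_one]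
    _ ≤ ρ * (‖deriv g z‖ * (512 / ρ * ‖z - b‖)) := by gcongr
    _ = 512 * (‖deriv g z‖ * ‖z - b‖) := by field_simp

lemma mem_postsingularSet {x : ℂ} : x ∈ postsingularSet f S ↔ ∃ n, ∃ s ∈ S, f^[n] s = x := by
  simp only [postsingularSet, mem_iUnion, mem_image]

lemma subset_postsingularSet (f : ℂ → ℂ) (S : Set ℂ) : S ⊆ postsingularSet f S :=
  fun s hs => mem_postsingularSet.2 ⟨0, s, hs, rfl⟩

lemma mapsTo_postsingularSet (f : ℂ → ℂ) (S : Set ℂ) :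
    MapsTo f (postsingularSet f S) (postsingularSet f S) := fun x hx => by
  obtain ⟨n, s, hs, rfl⟩ := mem_postsingularSet.1 hx
  exact mem_postsingularSet.2 ⟨n + 1, s, hs, Function.iterate_succ_apply' f n s⟩

lemma postsingularSet_subset {A : Set ℂ} (hSA : S ⊆ A) (hfA : MapsTo f A A) :
    postsingularSet f S ⊆ A :=
  iUnion_subset fun n => ((hfA.iterate n).mono_left hSA).image_subset

lemma infDist_postsingularSet_le (hf : Differentiable ℂ f) (hcov : IsCoveringMapOn f Sᶜ)
    {s : ℂ} (hs : s ∈ S) (n : ℕ) (z : ℂ) :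
    infDist (f^[n] z) (postsingularSet f S) ≤ 512 * (‖deriv f^[n] z‖ * ‖z - s‖) := by
  refine le_mul_norm_deriv_of_inverse infDist_nonneg (hf.iterate n) (fun hpos => ?_)
    fun hball => ?_
  · exact exists_iterate_lift hf hcov (subset_postsingularSet f S) (mapsTo_postsingularSet f S)
      isOpen_ball (convex_ball _ _) n differentiableOn_id
      (fun _ hq => disjoint_left.1 disjoint_ball_infDist hq) (mem_ball_self hpos) rfl
  · exact disjoint_left.1 disjoint_ball_infDist hball (mem_postsingularSet.2 ⟨n, s, hs, rfl⟩)

lemma infDist_singularSet_le (hf : Differentiable ℂ f) (hcov : IsCoveringMapOn f Sᶜ) {w b : ℂ}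
    (hb : infDist (f w) S ≤ dist (f b) (f w)) :
    infDist (f w) S ≤ 512 * (‖deriv f w‖ * ‖w - b‖) :=
  le_mul_norm_deriv_of_inverse infDist_nonneg hf
    (fun hpos => exists_lift hf hcov isOpen_ball (convex_ball _ _) differentiableOn_id
      (fun _ hq => disjoint_left.1 disjoint_ball_infDist hq) (mem_ball_self hpos) rfl)
    fun hball => hb.not_gt hball

end Postsingular

section Wandering

variable {f : ℂ → ℂ} {S W : Set ℂ} {z₀ z : ℂ}

lemma IsWanderingDomain.subset_fatouSet (hW : IsWanderingDomain f W) : W ⊆ FatouSet f := by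
  obtain ⟨⟨z, -, rfl⟩, -⟩ := hW
  exact connectedComponentIn_subset _ _

lemma IsWanderingDomain.isOpen (hW : IsWanderingDomain f W) : IsOpen W := by
  obtain ⟨⟨z, -, rfl⟩, -⟩ := hW
  exact (isOpen_fatouSet f).connectedComponentIn

lemma IsWanderingDomain.isPreconnected (hW : IsWanderingDomain f W) : IsPreconnected W := by
  obtain ⟨⟨z, -, rfl⟩, -⟩ := hW
  exact isPreconnected_connectedComponentIn

lemma IsWanderingDomain.nonempty (hW : IsWanderingDomain f W) : W.Nonempty := by
  obtain ⟨⟨z, hz, rfl⟩, -⟩ := hW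
  exact ⟨z, mem_connectedComponentIn hz⟩

lemma IsWanderingDomain.subset_of_isPreconnected (hW : IsWanderingDomain f W) {K : Set ℂ}
    (hK : IsPreconnected K) (hKF : K ⊆ FatouSet f) (hKW : (K ∩ W).Nonempty) : K ⊆ W := by
  obtain ⟨⟨z, -, rfl⟩, -⟩ := hW
  obtain ⟨x, hxK, hxW⟩ := hKW
  rw [connectedComponentIn_eq hxW]
  exact hK.subset_connectedComponentIn hxK hKF

lemma IsWanderingDomain.eventually_not_ball_subset (hW : IsWanderingDomain f W) (M : ℝ) {r : ℝ}
    (hr : 0 < r) :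
    ∀ᶠ n in atTop, ∀ p ∈ closedBall (0 : ℂ) M, ¬ball p r ⊆ f^[n] '' W := by
  by_contra hcon
  obtain ⟨φ, hφ, hφp⟩ := extraction_of_frequently_atTop (not_eventually.1 hcon)
  push Not at hφp
  choose p hpM hp using hφp
  obtain ⟨a, -, ψ, hψ, hlim⟩ := (isCompact_closedBall (0 : ℂ) M).tendsto_subseq hpM
  obtain ⟨k, hk⟩ := Metric.cauchySeq_iff.1 hlim.cauchySeq r hr
  have hne : φ (ψ k) ≠ φ (ψ (k + 1)) := (hφ (hψ k.lt_succ_self)).ne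
  exact eq_empty_iff_forall_notMem.1 (hW.2 _ _ hne) (p (ψ k))
    ⟨hp _ (mem_ball_self hr), hp _ (hk k le_rfl (k + 1) k.le_succ)⟩

lemma IsWanderingDomain.exists_ball_norm_deriv_iterate_le (hf : Differentiable ℂ f)
    (hW : IsWanderingDomain f W) (hz : z ∈ W) (M : ℝ) :
    ∃ δ > 0, ball z δ ⊆ W ∧ ∀ β > 0, ∀ᶠ n in atTop, ∀ x ∈ ball z δ, ‖f^[n] x‖ ≤ M →
      ∀ y ∈ ball z δ, ‖deriv f^[n] y‖ ≤ β := by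
  obtain ⟨δ₁, hδ₁, hbound⟩ := exists_ball_norm_iterate_lt (hW.subset_fatouSet hz) M
  obtain ⟨δ₂, hδ₂, hδ₂W⟩ := Metric.isOpen_iff.1 hW.isOpen z hz
  set δ := min δ₁ δ₂ / 2
  have hδ : 0 < δ := by positivity
  have hδδ : 2 * δ = min δ₁ δ₂ := mul_div_cancel₀ _ two_ne_zero
  have hδ₁' : 2 * δ ≤ δ₁ := hδδ.trans_le (min_le_left _ _)
  have hδ₂' : 2 * δ ≤ δ₂ := hδδ.trans_le (min_le_right _ _)
  have hball : ∀ y ∈ ball z δ, ball y δ ⊆ ball z (2 * δ) := fun y hy =>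
    ball_subset_ball' (by linarith [mem_ball.1 hy])
  have hzball : ball z δ ⊆ ball z (2 * δ) := ball_subset_ball (by linarith)
  have hsub₁ : ball z (2 * δ) ⊆ ball z δ₁ := ball_subset_ball hδ₁'
  have hsub₂ : ball z (2 * δ) ⊆ W := (ball_subset_ball hδ₂').trans hδ₂W
  refine ⟨δ, hδ, hzball.trans hsub₂, fun β hβ => ?_⟩
  filter_upwards [hW.eventually_not_ball_subset (M + 2) (r := δ * β / 128) (by positivity)]
    with n hn x hx hxM y hy
  by_contra! hβy
  obtain ⟨p, hp⟩ := bloch (x := y) hδ (hf.iterate n).differentiableOn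
  have hpβ : ball p (δ * β / 128) ⊆ f^[n] '' ball z (2 * δ) :=
    (ball_subset_ball (by gcongr)).trans (hp.trans (image_mono (hball y hy)))
  obtain ⟨v, hv, hvp⟩ := hpβ (mem_ball_self (by positivity))
  refine hn p (mem_closedBall_zero_iff.2 ?_) (hpβ.trans (image_mono hsub₂))
  rw [← hvp]
  exact (hbound n x (hsub₁ (hzball hx)) hxM v (hsub₁ hv)).le

/-- The orbit of `z` approaches that of `z₀` along the times at which the latter is bounded by
`M`. -/
def AsymptoticOnBounded (f : ℂ → ℂ) (M : ℝ) (z₀ z : ℂ) : Prop :=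
  ∀ β > 0, ∀ᶠ n in atTop, ‖f^[n] z₀‖ ≤ M → dist (f^[n] z) (f^[n] z₀) ≤ β

lemma IsWanderingDomain.exists_ball_asymptoticOnBounded (hf : Differentiable ℂ f)
    (hW : IsWanderingDomain f W) (M : ℝ) (z₀ : ℂ) {x : ℂ} (hx : x ∈ W) :
    ∃ δ > 0, ∀ y ∈ ball x δ, AsymptoticOnBounded f M z₀ y → ∀ β > 0, ∀ᶠ n in atTop,
      ‖f^[n] z₀‖ ≤ M → ∀ y' ∈ ball x δ, dist (f^[n] y') (f^[n] z₀) ≤ β := by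
  obtain ⟨δ, hδ, -, hderiv⟩ := hW.exists_ball_norm_deriv_iterate_le hf hx (M + 1)
  refine ⟨δ, hδ, fun y hy hyasym β hβ => ?_⟩
  filter_upwards [hyasym (min (β / 2) 1) (by positivity), hderiv (β / (4 * δ)) (by positivity)]
    with n hn hn' hM y' hy'
  have hdist := le_min_iff.1 (hn hM)
  have hyM : ‖f^[n] y‖ ≤ M + 1 := by
    linarith [norm_le_norm_add_norm_sub' (f^[n] y) (f^[n] z₀),
      dist_eq_norm (f^[n] y) (f^[n] z₀)]
  have hmean := (convex_ball x δ).norm_image_sub_le_of_norm_deriv_le (𝕜 := ℂ)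
    (fun v _ => (hf.iterate n) v) (hn' y hy hyM) hy hy'
  have hyy' : ‖y' - y‖ ≤ 2 * δ := by
    linarith [dist_eq_norm y' y, dist_triangle_right y' y x, mem_ball.1 hy, mem_ball.1 hy']
  calc dist (f^[n] y') (f^[n] z₀) ≤ ‖f^[n] y' - f^[n] y‖ + dist (f^[n] y) (f^[n] z₀) := by
        rw [← dist_eq_norm]
        exact dist_triangle _ _ _
    _ ≤ β / (4 * δ) * (2 * δ) + β / 2 := by
        gcongr
        · exact hmean.trans (by gcongr)
        · exact hdist.1
    _ = β := by field_simp; ring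

lemma IsWanderingDomain.asymptoticOnBounded (hf : Differentiable ℂ f)
    (hW : IsWanderingDomain f W) (hz₀ : z₀ ∈ W) (hz : z ∈ W) (M : ℝ) :
    AsymptoticOnBounded f M z₀ z := by
  have hlocal : ∀ x ∈ W, ∃ δ > 0, ∀ y ∈ ball x δ, AsymptoticOnBounded f M z₀ y →
      ∀ y' ∈ ball x δ, AsymptoticOnBounded f M z₀ y' := fun x hx => by
    obtain ⟨δ, hδ, hball⟩ := hW.exists_ball_asymptoticOnBounded hf M z₀ hx
    exact ⟨δ, hδ, fun y hy hyasym y' hy' β hβ =>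
      (hball y hy hyasym β hβ).mono fun n hn hM => hn hM y' hy'⟩
  have hrefl : AsymptoticOnBounded f M z₀ z₀ := fun β hβ =>
    .of_forall fun n _ => (dist_self _).trans_le hβ.le
  suffices W ⊆ {y | y ∈ W ∧ AsymptoticOnBounded f M z₀ y} from (this hz).2
  refine hW.isPreconnected.subset_of_closure_inter_subset ?_ ⟨z₀, hz₀, hz₀, hrefl⟩ ?_
  · refine isOpen_iff_mem_nhds.2 fun y ⟨hyW, hy⟩ => ?_
    obtain ⟨δ, hδ, hball⟩ := hlocal y hyW
    filter_upwards [ball_mem_nhds y hδ, hW.isOpen.mem_nhds hyW] with x hx hxW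
    exact ⟨hxW, hball y (mem_ball_self hδ) hy x hx⟩
  · rintro x ⟨hx, hxW⟩
    obtain ⟨δ, hδ, hball⟩ := hlocal x hxW
    obtain ⟨y, ⟨-, hy⟩, hxy⟩ := Metric.mem_closure_iff.1 hx δ hδ
    exact ⟨hxW, hball y (mem_ball'.2 hxy) hy x (mem_ball_self hδ)⟩

lemma IsWanderingDomain.exists_ball_dist_iterate_le (hf : Differentiable ℂ f)
    (hW : IsWanderingDomain f W) (hz₀ : z₀ ∈ W) (hz : z ∈ W) (M : ℝ) :
    ∃ δ > 0, ∀ β > 0, ∀ᶠ n in atTop, ‖f^[n] z₀‖ ≤ M →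
      ∀ y ∈ ball z δ, dist (f^[n] y) (f^[n] z₀) ≤ β := by
  obtain ⟨δ, hδ, hball⟩ := hW.exists_ball_asymptoticOnBounded hf M z₀ hz
  exact ⟨δ, hδ, hball z (mem_ball_self hδ) (hW.asymptoticOnBounded hf hz₀ hz M)⟩

lemma IsWanderingDomain.eventually_infDist_postsingularSet_lt (hf : Differentiable ℂ f)
    (hcov : IsCoveringMapOn f Sᶜ) (hS : S.Nonempty) (hW : IsWanderingDomain f W) (hz₀ : z₀ ∈ W)
    (M : ℝ) {β : ℝ} (hβ : 0 < β) :
    ∀ᶠ n in atTop, ‖f^[n] z₀‖ ≤ M → infDist (f^[n] z₀) (postsingularSet f S) < β := by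
  obtain ⟨s, hs⟩ := hS
  obtain ⟨δ, hδ, -, hderiv⟩ := hW.exists_ball_norm_deriv_iterate_le hf hz₀ M
  filter_upwards [hderiv (β / (1024 * (‖z₀ - s‖ + 1))) (by positivity)] with n hn hM
  have hn' := hn z₀ (mem_ball_self hδ) hM z₀ (mem_ball_self hδ)
  calc infDist (f^[n] z₀) (postsingularSet f S) ≤ 512 * (‖deriv f^[n] z₀‖ * ‖z₀ - s‖) :=
        infDist_postsingularSet_le hf hcov hs n z₀
    _ ≤ 512 * (β / (1024 * (‖z₀ - s‖ + 1)) * (‖z₀ - s‖ + 1)) := by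
        gcongr
        linarith
    _ = β / 2 := by field_simp; norm_num
    _ < β := half_lt_self hβ

lemma IsWanderingDomain.eventually_lt_norm_iterate (hf : Differentiable ℂ f)
    (hcov : IsCoveringMapOn f Sᶜ) (hS : S.Nonempty) (hesc : EscapesUniformlyOn f S)
    (hW : IsWanderingDomain f W) (hz₀ : z₀ ∈ W) (M : ℝ) :
    ∃ i, ∀ T, ∀ᶠ n in atTop, ‖f^[n] z₀‖ ≤ T → M < ‖f^[n + i] z₀‖ := by
  obtain ⟨i, hi⟩ := hesc (M + 1)
  refine ⟨i, fun T => ?_⟩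
  obtain ⟨β, hβ, hunif⟩ := Metric.uniformContinuousOn_iff.1
    ((isCompact_closedBall (0 : ℂ) (T + 1)).uniformContinuousOn_of_continuous
      (hf.iterate i).continuous.continuousOn) 1 one_pos
  filter_upwards [hW.eventually_infDist_postsingularSet_lt hf hcov hS hz₀ T
    (lt_min hβ one_pos)] with n hn hT
  obtain ⟨x, hx, hdist⟩ := (infDist_lt_iff (hS.mono (subset_postsingularSet f S))).1 (hn hT)
  obtain ⟨j, s, hs, rfl⟩ := mem_postsingularSet.1 hx
  rw [lt_min_iff] at hdist
  have hjs : ‖f^[j] s‖ ≤ T + 1 := by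
    linarith [norm_le_norm_add_norm_sub (f^[n] z₀) (f^[j] s), dist_eq_norm (f^[n] z₀) (f^[j] s)]
  have hclose := hunif (f^[n] z₀) (mem_closedBall_zero_iff.2 (by linarith)) (f^[j] s)
    (mem_closedBall_zero_iff.2 hjs) hdist.1
  rw [← Function.iterate_add_apply, ← Function.iterate_add_apply, add_comm i n,
    dist_eq_norm] at hclose
  linarith [hi (i + j) (Nat.le_add_right i j) s hs,
    norm_le_norm_add_norm_sub (f^[n + i] z₀) (f^[i + j] s)]

lemma exists_frequently_succ_le_and_lt {u : ℕ → ℝ} {M : ℝ} {i : ℕ} (hfreq : ∃ᶠ n in atTop, u n < M)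
    (hi : ∀ T, ∀ᶠ n in atTop, u n ≤ T → M < u (n + i)) :
    ∃ M' : ℝ, ∀ T, ∃ᶠ n in atTop, u (n + 1) ≤ M' ∧ T < u n := by
  by_contra! hcon
  have hback : ∀ j, ∃ T, ∀ᶠ n in atTop, u (n + j) < M → u n ≤ T := fun j => by
    induction j with
    | zero => exact ⟨M, .of_forall fun n hn => hn.le⟩
    | succ j ih =>
      obtain ⟨T, hT⟩ := ih
      obtain ⟨T', hT'⟩ := hcon T
      refine ⟨T', ?_⟩
      filter_upwards [hT', (tendsto_add_atTop_nat 1).eventually hT] with n hn hn' hlt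
      exact hn (hn' (by rwa [add_assoc, add_comm 1 j]))
  obtain ⟨T, hT⟩ := hback i
  obtain ⟨N, hN⟩ := eventually_atTop.1 (hT.and (hi T))
  obtain ⟨n, hn, hnM⟩ := frequently_atTop.1 hfreq (N + i)
  obtain ⟨m, rfl⟩ := Nat.exists_eq_add_of_le' (le_of_add_le_right hn)
  obtain ⟨hback', hforward⟩ := hN m (by omega)
  exact (hforward (hback' hnM)).not_gt hnM

/-- The orbit returns to a bounded region directly from arbitrarily far away: otherwise its bounded
part stays bounded for any fixed number of steps backwards, and so cannot follow a postsingular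
orbit for that many steps. -/
lemma IsWanderingDomain.exists_frequently_return (hf : TranscendentalEntire f)
    (hcov : IsCoveringMapOn f Sᶜ) (hSbdd : Bornology.IsBounded S) (hesc : EscapesUniformlyOn f S)
    (hW : IsWanderingDomain f W) (hz₀ : z₀ ∈ W) :
    ∃ M : ℝ, ∀ T, ∃ᶠ n in atTop, ‖f^[n + 1] z₀‖ ≤ M ∧ T < ‖f^[n] z₀‖ := by
  have hlim := hf.not_tendsto_norm_iterate hcov hSbdd (hW.subset_fatouSet hz₀)
  rw [Filter.tendsto_atTop] at hlim
  push Not at hlim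
  obtain ⟨M, hM⟩ := hlim
  obtain ⟨i, hi⟩ := hW.eventually_lt_norm_iterate hf.1 hcov (hf.singularSet_nonempty hcov) hesc
    hz₀ M
  exact exists_frequently_succ_le_and_lt (u := fun n => ‖f^[n] z₀‖) hM hi

end Wandering

/-- The thickness condition on `A`: around each point `z ∈ A` of modulus at least `R`, the disc of
radius `c * ‖z‖` is mapped outside the `ε`-neighbourhood of `S`. -/
def ThicknessCondition (f : ℂ → ℂ) (S A : Set ℂ) (ε c R : ℝ) : Prop :=
  ∀ z ∈ A, R ≤ ‖z‖ → ∀ w : ℂ, ‖w - z‖ < c * ‖z‖ → ε < infDist (f w) S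

section Thickness

variable {f : ℂ → ℂ} {S W A : Set ℂ} {ε c R : ℝ}

lemma TranscendentalEntire.exists_lt_norm (hf : TranscendentalEntire f) (M : ℝ) :
    ∃ a, M < ‖f a‖ := by
  by_contra! hM
  refine hf.2 ⟨Polynomial.C (f 0), fun z => ?_⟩
  rw [Polynomial.eval_C]
  exact hf.1.apply_eq_apply_of_bounded ((isBounded_closedBall (x := (0 : ℂ)) (r := M)).subset
    (range_subset_iff.2 fun x => mem_closedBall_zero_iff.2 (hM x))) z 0

lemma EscapesUniformlyOn.exists_le_norm (hesc : EscapesUniformlyOn f S) (hf : Continuous f)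
    (hSbdd : Bornology.IsBounded S) (M : ℝ) :
    ∃ L, ∀ p ∈ postsingularSet f S, L < ‖p‖ → M ≤ ‖f p‖ := by
  obtain ⟨N, hN⟩ := hesc M
  obtain ⟨r, hr⟩ := hSbdd.subset_closedBall 0
  have hinitial : Bornology.IsBounded (⋃ j ∈ Iio N, f^[j] '' S) :=
    (Bornology.isBounded_biUnion (finite_Iio N)).2 fun j _ =>
      ((isCompact_closedBall (0 : ℂ) r).image (hf.iterate j)).isBounded.subset (image_mono hr)
  obtain ⟨L, hL⟩ := hinitial.exists_norm_le
  refine ⟨L, fun p hp hLp => ?_⟩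
  obtain ⟨j, s, hs, rfl⟩ := mem_postsingularSet.1 hp
  rcases lt_or_ge j N with hj | hj
  · exact absurd (hL _ (mem_biUnion (mem_Iio.2 hj) (mem_image_of_mem _ hs))) hLp.not_ge
  · rw [← Function.iterate_succ_apply' f]
    exact hN _ (hj.trans j.le_succ) s hs

/-- This is the Schwarz lemma for `1 / h`. -/
lemma mul_le_mul_dist_of_le_norm {h : ℂ → ℂ} {p w : ℂ} {r D : ℝ}
    (hh : DifferentiableOn ℂ h (ball p r)) (hε : 0 < ε) (hfar : ∀ x ∈ ball p r, ε ≤ ‖h x‖)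
    (hw : w ∈ ball p r) (hwD : ‖h w‖ ≤ D) (hpD : 2 * D ≤ ‖h p‖) : ε * r ≤ 4 * D * dist w p := by
  have hr : 0 < r := pos_of_mem_ball hw
  have hD : 0 < D := (hε.trans_le (hfar w hw)).trans_le hwD
  have hbound : ∀ x ∈ ball p r, ‖(h x)⁻¹‖ ≤ ε⁻¹ := fun x hx => by
    rw [norm_inv]
    exact inv_anti₀ hε (hfar x hx)
  have hinv : DifferentiableOn ℂ (fun x => (h x)⁻¹) (ball p r) :=
    hh.inv fun x hx => norm_pos_iff.1 (hε.trans_le (hfar x hx))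
  have hschwarz : dist (h w)⁻¹ (h p)⁻¹ ≤ 2 * ε⁻¹ / r * dist w p :=
    Complex.dist_le_div_mul_dist_of_mapsTo_ball hinv (fun x hx => mem_closedBall_iff_norm.2
      ((norm_sub_le _ _).trans (by linarith [hbound x hx, hbound p (mem_ball_self hr)]))) hw
  have hlower : (2 * D)⁻¹ ≤ dist (h w)⁻¹ (h p)⁻¹ := by
    have hw' : D⁻¹ ≤ ‖(h w)⁻¹‖ := by
      rw [norm_inv]
      exact inv_anti₀ (hε.trans_le (hfar w hw)) hwD
    have hp' : ‖(h p)⁻¹‖ ≤ (2 * D)⁻¹ := by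
      rw [norm_inv]
      exact inv_anti₀ (by positivity) hpD
    rw [dist_eq_norm]
    linarith [norm_sub_norm_le (h w)⁻¹ (h p)⁻¹, show D⁻¹ = 2 * (2 * D)⁻¹ by field_simp]
  have hcombined := hlower.trans hschwarz
  rw [inv_eq_one_div, div_mul_eq_mul_div, div_le_div_iff₀ (by positivity) hr] at hcombined
  calc ε * r = ε * (1 * r) := by rw [one_mul]
    _ ≤ ε * (2 * ε⁻¹ * dist w p * (2 * D)) := by gcongr
    _ = 4 * D * dist w p := by field_simp; ring

lemma ThicknessCondition.exists_mul_norm_le_infDist (hA : ThicknessCondition f S A ε c R)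
    (hf : Differentiable ℂ f) (hS : S.Nonempty) (hSbdd : Bornology.IsBounded S)
    (hesc : EscapesUniformlyOn f S) (hPA : postsingularSet f S ⊆ A) (hε : 0 < ε)
    (hc : c ∈ Ioo (0 : ℝ) 1) (M : ℝ) :
    ∃ κ > 0, ∃ T, ∀ w, T ≤ ‖w‖ → ‖f w‖ ≤ M → κ * ‖w‖ ≤ infDist w (postsingularSet f S) := by
  obtain ⟨hc0, hc1⟩ := hc
  obtain ⟨s, hs⟩ := hS
  set D := |M| + ‖s‖ + 1
  have hD : 0 < D := by positivity
  obtain ⟨L, hL⟩ := hesc.exists_le_norm hf.continuous hSbdd (2 * D + ‖s‖)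
  refine ⟨min (c / 4) (ε * c / (8 * D)), by positivity, max (2 * max L R) 1, fun w hw hwM => ?_⟩
  obtain ⟨hwLR, hw1⟩ := max_le_iff.1 hw
  have hw0 : 0 < ‖w‖ := one_pos.trans_le hw1
  refine (le_infDist ⟨s, subset_postsingularSet f S hs⟩).2 fun p hp => ?_
  by_contra! hlt
  rw [min_mul_of_nonneg _ _ hw0.le, lt_min_iff] at hlt
  have hpw : ‖w‖ / 2 < ‖p‖ := by
    nlinarith [norm_le_norm_add_norm_sub p w, dist_eq_norm' w p]
  have hwp : w ∈ ball p (c * ‖p‖) := mem_ball.2 (hlt.1.trans (by nlinarith))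
  have hfar : ∀ x ∈ ball p (c * ‖p‖), ε ≤ ‖f x - s‖ := fun x hx =>
    (hA p (hPA hp) (by linarith [le_max_right L R]) x (mem_ball_iff_norm.1 hx)).le.trans
      (dist_eq_norm (f x) s ▸ infDist_le_dist_of_mem hs)
  have hwD : ‖f w - s‖ ≤ D := (norm_sub_le _ _).trans (by linarith [le_abs_self M])
  have hpD : 2 * D ≤ ‖f p - s‖ := by
    linarith [norm_sub_norm_le (f p) s, hL p hp (by linarith [le_max_left L R])]
  have hschwarz := mul_le_mul_dist_of_le_norm (hf.sub_const s).differentiableOn hε hfar hwp hwD hpD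
  have hdist : 4 * D * dist w p < ε * (c * (‖w‖ / 2)) := by
    calc 4 * D * dist w p < 4 * D * (ε * c / (8 * D) * ‖w‖) := by gcongr; exact hlt.2
      _ = ε * (c * (‖w‖ / 2)) := by field_simp; norm_num
  exact (hschwarz.trans_lt hdist).not_ge (by gcongr)

/-- At such a time `m`, the derivatives of `f^[m]` at `z₀` and of `f` at `f^[m] z₀` would both be
bounded below if `f^[m + 1] z₀` were far from `S`, whereas their product is small. -/
lemma ThicknessCondition.eventually_infDist_lt (hA : ThicknessCondition f S A ε c R)
    (hf : TranscendentalEntire f) (hcov : IsCoveringMapOn f Sᶜ) (hSbdd : Bornology.IsBounded S)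
    (hesc : EscapesUniformlyOn f S) (hPA : postsingularSet f S ⊆ A) (hε : 0 < ε)
    (hc : c ∈ Ioo (0 : ℝ) 1) (hW : IsWanderingDomain f W) {z₀ : ℂ} (hz₀ : z₀ ∈ W) (M : ℝ)
    {η : ℝ} (hη : 0 < η) :
    ∃ T, ∀ᶠ m in atTop, T ≤ ‖f^[m] z₀‖ → ‖f^[m + 1] z₀‖ ≤ M → infDist (f^[m + 1] z₀) S < η := by
  obtain ⟨s, hs⟩ := hf.singularSet_nonempty hcov
  obtain ⟨κ, hκ, T, hT⟩ := hA.exists_mul_norm_le_infDist hf.1 ⟨s, hs⟩ hSbdd hesc hPA hε hc M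
  obtain ⟨a, ha⟩ := hf.exists_lt_norm (2 * M + ‖s‖)
  obtain ⟨δ, hδ, -, hderiv⟩ := hW.exists_ball_norm_deriv_iterate_le hf.1 hz₀ M
  set Z := ‖z₀ - s‖ + 1
  have hZ : 0 < Z := by positivity
  refine ⟨max T (max ‖a‖ 1), ?_⟩
  filter_upwards [(tendsto_add_atTop_nat 1).eventually
    (hderiv (κ * η / (2 ^ 20 * Z)) (by positivity))] with m hm hmT hM
  have hsmall := hm z₀ (mem_ball_self hδ) hM z₀ (mem_ball_self hδ)
  rw [deriv_iterate_succ' hf.1, norm_mul] at hsmall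
  rw [Function.iterate_succ_apply'] at hM ⊢
  set w := f^[m] z₀
  obtain ⟨hTw, haw, hw1⟩ : T ≤ ‖w‖ ∧ ‖a‖ ≤ ‖w‖ ∧ 1 ≤ ‖w‖ := by simpa only [max_le_iff] using hmT
  have hw0 : 0 < ‖w‖ := one_pos.trans_le hw1
  have hiter : κ * ‖w‖ ≤ 512 * (‖deriv f^[m] z₀‖ * Z) :=
    (hT w hTw hM).trans ((infDist_postsingularSet_le hf.1 hcov hs m z₀).trans
      (by gcongr; exact le_add_of_nonneg_right zero_le_one))
  have hfar : infDist (f w) S ≤ dist (f a) (f w) := by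
    refine (infDist_le_dist_of_mem hs).trans ?_
    rw [dist_eq_norm, dist_eq_norm]
    linarith [norm_sub_le (f w) s, norm_sub_norm_le (f a) (f w)]
  have hstep : infDist (f w) S ≤ 512 * (‖deriv f w‖ * (2 * ‖w‖)) :=
    (infDist_singularSet_le hf.1 hcov hfar).trans
      (by gcongr; exact (norm_sub_le _ _).trans (by linarith))
  have hprod : κ * ‖w‖ * infDist (f w) S ≤ κ * ‖w‖ * (η / 2) := by
    calc κ * ‖w‖ * infDist (f w) S
        ≤ 512 * (‖deriv f^[m] z₀‖ * Z) * (512 * (‖deriv f w‖ * (2 * ‖w‖))) :=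
          mul_le_mul hiter hstep infDist_nonneg (by positivity)
      _ = 2 ^ 19 * (‖deriv f w‖ * ‖deriv f^[m] z₀‖) * Z * ‖w‖ := by ring
      _ ≤ 2 ^ 19 * (κ * η / (2 ^ 20 * Z)) * Z * ‖w‖ := by gcongr
      _ = κ * ‖w‖ * (η / 2) := by field_simp
  exact (le_of_mul_le_mul_left hprod (mul_pos hκ hw0)).trans_lt (half_lt_self hη)

lemma exists_first_eq {φ : ℝ → ℝ} {a b v : ℝ} (hφ : ContinuousOn φ (Icc a b)) (hab : a ≤ b)
    (ha : v ≤ φ a) (hb : φ b ≤ v) : ∃ θ ∈ Icc a b, φ θ = v ∧ ∀ t ∈ Icc a θ, v ≤ φ t := by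
  have hne : (Icc a b ∩ φ ⁻¹' {v}).Nonempty := by
    obtain ⟨x, hx, hxv⟩ := intermediate_value_Icc' hab hφ ⟨hb, ha⟩
    exact ⟨x, hx, hxv⟩
  have hcpt : IsCompact (Icc a b ∩ φ ⁻¹' {v}) :=
    isCompact_Icc.of_isClosed_subset (hφ.preimage_isClosed_of_isClosed isClosed_Icc
      isClosed_singleton) inter_subset_left
  have hmem := hcpt.sInf_mem hne
  refine ⟨_, hmem.1, hmem.2, fun t ht => ?_⟩
  by_contra! hlt
  have htb : t ≤ b := ht.2.trans hmem.1.2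
  obtain ⟨x, hx, hxv⟩ := intermediate_value_Icc' ht.1 (hφ.mono (Icc_subset_Icc_right htb))
    ⟨hlt.le, ha⟩
  have hθx := csInf_le hcpt.bddBelow ⟨Icc_subset_Icc_right htb hx, hxv⟩
  rw [le_antisymm hx.2 (ht.2.trans hθx)] at hxv
  exact hlt.ne hxv

lemma dist_exp_exp_le {q u : ℂ} (hqu : ‖q - u‖ ≤ 1) :
    dist (Complex.exp q) (Complex.exp u) ≤ 2 * ‖Complex.exp u‖ * ‖q - u‖ := by
  have hexp : Complex.exp q - Complex.exp u = Complex.exp u * (Complex.exp (q - u) - 1) := by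
    rw [mul_sub, ← Complex.exp_add, add_sub_cancel, mul_one]
  rw [dist_eq_norm, hexp, norm_mul, mul_comm 2, mul_assoc]
  gcongr
  exact Complex.norm_exp_sub_one_le hqu

lemma ThicknessCondition.lt_infDist_of_infDist_lt (hA : ThicknessCondition f S A ε c R)
    (hc : c ∈ Ioo (0 : ℝ) 1) (hAne : A.Nonempty) {w : ℂ} (hw : 2 * R ≤ ‖w‖)
    (hwA : infDist w A < c / 3 * ‖w‖) : ε < infDist (f w) S := by
  obtain ⟨x, hx, hwx⟩ := (infDist_lt_iff hAne).1 hwA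
  rw [dist_eq_norm] at hwx
  have hw0 : 0 < ‖w‖ :=
    pos_of_mul_pos_right ((norm_nonneg _).trans_lt hwx) (div_pos hc.1 three_pos).le
  have hxw : 2 / 3 * ‖w‖ ≤ ‖x‖ := by
    nlinarith [norm_le_norm_add_norm_sub x w, norm_sub_rev x w, hc.2]
  exact hA x hx (by linarith) w (by nlinarith [hc.1])

/-- Rotate `exp u` around the circle until it first comes close to `A`. -/
lemma ThicknessCondition.exists_arc_avoiding (hA : ThicknessCondition f S A ε c R)
    (hc : c ∈ Ioo (0 : ℝ) 1) {u a : ℂ} (hu : 2 * R ≤ ‖Complex.exp u‖)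
    (hclose : infDist (f (Complex.exp u)) S ≤ ε) (ha : a ∈ A) (hau : ‖a‖ = ‖Complex.exp u‖) :
    ∃ w, dist u w ≤ 2 * Real.pi ∧ ε < infDist (f (Complex.exp w)) S ∧
      MapsTo Complex.exp (thickening (c / 8) (segment ℝ u w)) Aᶜ := by
  set r := ‖Complex.exp u‖
  have hr : 0 < r := norm_pos_iff.2 (Complex.exp_ne_zero u)
  have hnorm : ∀ t : ℝ, ‖Complex.exp (u + t * Complex.I)‖ = r := norm_exp_add_ofReal_mul_I u
  have hnear : ∀ t : ℝ, infDist (Complex.exp (u + t * Complex.I)) A ≤ c * r / 4 →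
      ε < infDist (f (Complex.exp (u + t * Complex.I))) S := fun t ht =>
    hA.lt_infDist_of_infDist_lt hc ⟨a, ha⟩ ((hnorm t).symm ▸ hu)
      (ht.trans_lt (by rw [hnorm t]; nlinarith [mul_pos hc.1 hr]))
  obtain ⟨b, hb, hba⟩ := exists_exp_add_ofReal_mul_I_eq hau
  obtain ⟨θ, hθ, hθv, hθt⟩ := exists_first_eq (a := 0) (b := b) (v := c * r / 4)
    (φ := fun t => infDist (Complex.exp (u + t * Complex.I)) A)
    ((continuous_infDist_pt A).comp (by fun_prop)).continuousOn hb.1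
    (le_of_not_gt fun hlt => by
      have hfar := hnear 0 hlt.le
      rw [Complex.ofReal_zero, zero_mul, add_zero] at hfar
      exact hclose.not_gt hfar)
    (by rw [hba, infDist_zero_of_mem ha]; nlinarith [mul_pos hc.1 hr])
  refine ⟨u + θ * Complex.I, ?_, hnear θ hθv.le, fun q hq hqA => ?_⟩
  · rw [dist_self_add_right, norm_mul, Complex.norm_I, mul_one, Complex.norm_of_nonneg hθ.1]
    exact hθ.2.trans hb.2
  obtain ⟨v, hv, hqv⟩ := mem_thickening_iff.1 hq
  rw [segment_eq_image'] at hv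
  obtain ⟨τ, hτ, hτv⟩ := hv
  have ht : τ * θ ∈ Icc 0 θ := ⟨mul_nonneg hτ.1 hθ.1, mul_le_of_le_one_left hθ.1 hτ.2⟩
  have hv : v = u + (τ * θ : ℝ) * Complex.I := by
    beta_reduce at hτv
    rw [← hτv, add_sub_cancel_left, Complex.real_smul, Complex.ofReal_mul, mul_assoc]
  rw [dist_eq_norm, hv] at hqv
  have hdist := dist_exp_exp_le (hqv.le.trans (by linarith [hc.2]))
  rw [hnorm] at hdist
  have hlower := (hθt _ ht).trans (infDist_le_dist_of_mem hqA)
  rw [dist_comm] at hlower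
  nlinarith

end Thickness

/-- A sequence of discs of radius `r`, the first one centred at `z₀`, with nearby consecutive
centres `x j`, none of whose points is mapped into `A` by one of the first `n` iterates of `f`. -/
structure IsAvoidingChain (f : ℂ → ℂ) (A : Set ℂ) (n : ℕ) (r : ℝ) (z₀ : ℂ) (x : ℕ → ℂ) :
    Prop where
  zero : x 0 = z₀
  dist_succ_le : ∀ j, dist (x (j + 1)) (x j) ≤ r / 8
  iterate_notMem : ∀ j, ∀ p ∈ ball (x j) r, ∀ i ≤ n, f^[i] p ∉ A

section Chain

variable {f : ℂ → ℂ} {S A : Set ℂ} {a z₀ : ℂ} {ρ δ : ℝ}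

lemma injOn_exp_ball (q : ℂ) : InjOn Complex.exp (ball q Real.pi) := fun x hx y hy hxy => by
  obtain ⟨n, hn⟩ := Complex.exp_eq_exp_iff_exists_int.1 hxy
  have hdist : |(n : ℝ)| * (2 * Real.pi) < 1 * (2 * Real.pi) := by
    calc |(n : ℝ)| * (2 * Real.pi) = dist x y := by
          rw [dist_eq_norm, hn, add_sub_cancel_left]
          simp [abs_of_pos Real.pi_pos]
      _ < Real.pi + Real.pi :=
          (dist_triangle_right x y q).trans_lt (add_lt_add (mem_ball.1 hx) (mem_ball.1 hy))
      _ = 1 * (2 * Real.pi) := by ring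
  have hn0 : |n| < 1 := by exact_mod_cast lt_of_mul_lt_mul_right hdist Real.two_pi_pos.le
  rw [hn, Int.abs_lt_one_iff.1 hn0, Int.cast_zero, zero_mul, add_zero]

lemma iterate_notMem_of_le {α : Type*} {f : α → α} {B : Set α} (hB : MapsTo f B B) {i n : ℕ}
    (hi : i ≤ n) {z : α} (hz : f^[n] z ∉ B) : f^[i] z ∉ B := fun hiB => by
  obtain ⟨k, rfl⟩ := Nat.exists_eq_add_of_le' hi
  exact hz (Function.iterate_add_apply f k i z ▸ hB.iterate k hiB)

lemma ball_subset_image_of_injOn {g : ℂ → ℂ} {q : ℂ} (hρ : 0 < ρ)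
    (hg : DifferentiableOn ℂ g (ball q ρ)) (hinj : InjOn g (ball q ρ)) :
    ball (g q) (ρ * ‖deriv g q‖ / 512) ⊆ g '' ball q ρ := fun p hp => by
  by_contra hnot
  have hderiv := norm_deriv_le_of_injOn hρ hg hinj fun z hz h => hnot ⟨z, hz, h⟩
  rw [div_mul_eq_mul_div, le_div_iff₀ hρ] at hderiv
  rw [mem_ball', dist_eq_norm] at hp
  linarith

lemma iterate_notMem_of_lift {χ : ℂ → ℂ} {q : ℂ} {n : ℕ} (hfA : MapsTo f A A) (hρ : 0 < ρ)
    (hρπ : ρ ≤ Real.pi) (hχ : DifferentiableOn ℂ χ (ball q ρ))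
    (hχe : EqOn (f^[n] ∘ χ) Complex.exp (ball q ρ)) (heA : MapsTo Complex.exp (ball q ρ) Aᶜ) :
    ∀ p ∈ ball (χ q) (ρ * ‖deriv χ q‖ / 512), ∀ i ≤ n, f^[i] p ∉ A := fun p hp i hi => by
  have hinj : InjOn χ (ball q ρ) :=
    (hχe.injOn_iff.2 ((injOn_exp_ball q).mono (ball_subset_ball hρπ))).of_comp
  obtain ⟨y, hy, rfl⟩ := ball_subset_image_of_injOn hρ hχ hinj hp
  refine iterate_notMem_of_le hfA hi ?_
  rw [show f^[n] (χ y) = Complex.exp y from hχe hy]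
  exact heA hy

lemma deriv_ne_zero_of_lift {g χ : ℂ → ℂ} {Q : Set ℂ} (hg : Differentiable ℂ g) (hQ : IsOpen Q)
    (hχ : DifferentiableOn ℂ χ Q) (hχe : EqOn (g ∘ χ) Complex.exp Q) {q : ℂ} (hq : q ∈ Q) :
    deriv χ q ≠ 0 := fun h0 => by
  have hnhds := hQ.mem_nhds hq
  have hcomp : deriv g (χ q) * deriv χ q = Complex.exp q :=
    ((hg _).hasDerivAt.comp q (hχ.differentiableAt hnhds).hasDerivAt).unique
      ((Complex.hasDerivAt_exp q).congr_of_eventuallyEq (hχe.eventuallyEq_of_mem hnhds))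
  rw [h0, mul_zero] at hcomp
  exact Complex.exp_ne_zero q hcomp.symm

lemma MeetsAllCircles.norm_deriv_le_of_mem_thickening (hA : MeetsAllCircles A a) (hρ : 0 < ρ)
    {V : Set ℂ} (hV : Convex ℝ V) {ℓ : ℝ} (hℓ : ∀ v ∈ V, ∀ v' ∈ V, dist v v' ≤ ℓ) {χ : ℂ → ℂ}
    (hχ : DifferentiableOn ℂ χ (thickening ρ V)) (hχA : MapsTo χ (thickening ρ V) Aᶜ) {u q : ℂ}
    (hu : u ∈ V) (hq : q ∈ thickening (ρ / 2) V) :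
    ‖deriv χ q‖ ≤ 512 / (ρ / 2) * (‖χ u - a‖ * Real.exp (512 / (ρ / 2) * (ρ / 2 + ℓ))) := by
  have hρ2 : 0 < ρ / 2 := half_pos hρ
  have hball : ∀ q ∈ thickening (ρ / 2) V, ball q (ρ / 2) ⊆ thickening ρ V := fun q hq =>
    (ball_subset_thickening hq _).trans
      ((thickening_thickening_subset _ _ _).trans_eq (by rw [add_halves]))
  have hqu : ‖q - u‖ ≤ ρ / 2 + ℓ := by
    obtain ⟨v, hv, hqv⟩ := mem_thickening_iff.1 hq
    rw [← dist_eq_norm]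
    exact (dist_triangle q v u).trans (add_le_add hqv.le (hℓ v hv u hu))
  refine (hA.norm_deriv_le hρ2 (hχ.mono (hball q hq)) fun z hz => hχA (hball q hq hz)).trans ?_
  gcongr
  exact hA.norm_sub_le_mul_exp isOpen_thickening (hV.thickening ρ) hχ (fun z hz => hχA hz)
    (hV.thickening (ρ / 2)) hρ2 hball (self_subset_thickening hρ2 V hu) hq hqu

lemma MeetsAllCircles.exists_deriv_bounds (hA : MeetsAllCircles A a) (hρ : 0 < ρ) (hδ : 0 < δ)
    (ℓ : ℝ) (z₀ : ℂ) :
    ∃ B > 0, ∃ τ > 0, ∀ (V : Set ℂ) (χ : ℂ → ℂ), Convex ℝ V →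
      (∀ v ∈ V, ∀ v' ∈ V, dist v v' ≤ ℓ) → DifferentiableOn ℂ χ (thickening ρ V) →
      (∀ q ∈ thickening ρ V, deriv χ q ≠ 0) → MapsTo χ (thickening ρ V) Aᶜ →
      ∀ u ∈ V, χ u = z₀ → (∀ q ∈ V, ‖deriv χ q‖ ≤ B) ∧
        ((∀ q ∈ V, ‖deriv χ q‖ ≤ δ) ∨ ∀ q ∈ V, τ ≤ ‖deriv χ q‖) := by
  have hρ2 : 0 < ρ / 2 := half_pos hρ
  set B := 512 / (ρ / 2) * (‖z₀ - a‖ * Real.exp (512 / (ρ / 2) * (ρ / 2 + ℓ))) + 1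
  have hB : 0 < B := by positivity
  obtain ⟨τ, hτ, hharnack⟩ := exists_le_norm_of_norm_le hB hδ hρ2 ℓ
  refine ⟨B, hB, τ, hτ, fun V χ hV hℓ hχ hχ' hχA u hu hχu => ?_⟩
  have hbound : ∀ q ∈ thickening (ρ / 2) V, ‖deriv χ q‖ ≤ B := fun q hq =>
    (hχu ▸ hA.norm_deriv_le_of_mem_thickening hρ hV hℓ hχ hχA hu hq).trans
      (le_add_of_nonneg_right zero_le_one)
  refine ⟨fun q hq => hbound q (self_subset_thickening hρ2 V hq), or_iff_not_imp_left.2 ?_⟩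
  intro hlarge q hq
  push Not at hlarge
  obtain ⟨v, hv, hvδ⟩ := hlarge
  have hsub : thickening (ρ / 2) V ⊆ thickening ρ V := thickening_mono (half_le_self hρ.le) V
  exact hharnack _ V _ isOpen_thickening (hV.thickening _)
    ((hχ.deriv isOpen_thickening).mono hsub) (fun z hz => hχ' z (hsub hz)) hbound hV
    (fun x hx => ball_subset_thickening hx _) v hv q hq
    (by rw [← dist_eq_norm]; exact hℓ q hq v hv) hvδ.le

lemma isAvoidingChain_of_lift {V : Set ℂ} {χ : ℂ → ℂ} {q : ℕ → ℂ} {n : ℕ} {B τ s : ℝ}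
    (hfA : MapsTo f A A) (hρ : 0 < ρ) (hρπ : ρ ≤ Real.pi) (hV : Convex ℝ V)
    (hχ : DifferentiableOn ℂ χ (thickening ρ V))
    (hχe : EqOn (f^[n] ∘ χ) Complex.exp (thickening ρ V))
    (heA : MapsTo Complex.exp (thickening ρ V) Aᶜ) (hB : ∀ v ∈ V, ‖deriv χ v‖ ≤ B)
    (hτ : ∀ v ∈ V, τ ≤ ‖deriv χ v‖) (hq : ∀ j, q j ∈ V) (hs : ∀ j, dist (q (j + 1)) (q j) ≤ s)
    (hBs : B * s ≤ ρ * τ / 512 / 8) :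
    IsAvoidingChain f A n (ρ * τ / 512) (χ (q 0)) (χ ∘ q) where
  zero := rfl
  dist_succ_le j := by
    have hlip := hV.norm_image_sub_le_of_norm_deriv_le (𝕜 := ℂ)
      (fun v hv => hχ.differentiableAt
        (isOpen_thickening.mem_nhds (self_subset_thickening hρ V hv))) hB (hq j) (hq (j + 1))
    rw [← dist_eq_norm, ← dist_eq_norm] at hlip
    have hB0 : 0 ≤ B := (norm_nonneg _).trans (hB _ (hq j))
    exact hlip.trans ((mul_le_mul_of_nonneg_left (hs j) hB0).trans hBs)
  iterate_notMem j p hp := by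
    have hsub : ball (q j) ρ ⊆ thickening ρ V := ball_subset_thickening (hq j) ρ
    refine iterate_notMem_of_lift hfA hρ hρπ (hχ.mono hsub) (hχe.mono hsub) (heA.mono_left hsub)
      p (ball_subset_ball ?_ hp)
    gcongr
    exact hτ _ (hq j)

lemma dist_le_of_mem_segment {E : Type*} [SeminormedAddCommGroup E] [NormedSpace ℝ E]
    {u w v v' : E} (hv : v ∈ segment ℝ u w) (hv' : v' ∈ segment ℝ u w) :
    dist v v' ≤ dist u w := by
  rw [← convexHull_pair] at hv hv'
  calc dist v v' ≤ diam (convexHull ℝ {u, w}) :=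
        dist_le_diam_of_mem (isBounded_convexHull.2 (toFinite {u, w}).isBounded) hv hv'
    _ = dist u w := by rw [convexHull_diam, diam_pair]

lemma exists_seq_mem_segment {E : Type*} [NormedAddCommGroup E] [NormedSpace ℝ E] {u w : E}
    {N : ℕ} {s : ℝ} (hs : 0 ≤ s) (hN : dist u w ≤ N * s) :
    ∃ q : ℕ → E, q 0 = u ∧ q N = w ∧ (∀ j, q j ∈ segment ℝ u w) ∧
      ∀ j, dist (q (j + 1)) (q j) ≤ s := by
  rcases N.eq_zero_or_pos with rfl | hNpos
  · rw [Nat.cast_zero, zero_mul, dist_le_zero] at hN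
    exact ⟨fun _ => u, rfl, hN, fun _ => left_mem_segment ℝ u w, fun _ => (dist_self u).trans_le hs⟩
  have hN0 : (0 : ℝ) < N := Nat.cast_pos.2 hNpos
  refine ⟨fun j => AffineMap.lineMap u w (min (j / N : ℝ) 1), by simp, by simp [hN0.ne'],
    fun j => ?_, fun j => ?_⟩
  · rw [segment_eq_image_lineMap]
    exact mem_image_of_mem _ ⟨le_min (by positivity) zero_le_one, min_le_right _ _⟩
  · have hstep : |min ((j + 1 : ℕ) / N : ℝ) 1 - min (j / N : ℝ) 1| ≤ 1 / N := by
      refine (abs_min_sub_min_le_max _ _ _ _).trans_eq ?_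
      rw [sub_self, abs_zero, ← sub_div, Nat.cast_succ, add_sub_cancel_left,
        abs_of_pos (by positivity), max_eq_left (by positivity)]
    calc dist (AffineMap.lineMap u w (min ((j + 1 : ℕ) / N : ℝ) 1))
          (AffineMap.lineMap u w (min (j / N : ℝ) 1)) ≤ 1 / N * (N * s) := by
          rw [dist_lineMap_lineMap, Real.dist_eq]
          gcongr
      _ = s := by field_simp

/-- Pull the segment from `u` to `w` back by `exp` followed by the branch of `f^{-n}` sending
`exp u` to `z₀`. By bounded distortion, the resulting curve is either short or surrounded by discs
of definite size. -/
lemma MeetsAllCircles.exists_isAvoidingChain (hA : MeetsAllCircles A a) (hf : Differentiable ℂ f)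
    (hcov : IsCoveringMapOn f Sᶜ) (hSA : S ⊆ A) (hfA : MapsTo f A A) (hρ : 0 < ρ)
    (hρπ : ρ ≤ Real.pi) (hδ : 0 < δ) {ℓ : ℝ} (hℓ : 0 < ℓ) (z₀ : ℂ) :
    ∃ r > 0, ∃ N : ℕ, ∀ (n : ℕ) (u w : ℂ), f^[n] z₀ = Complex.exp u → dist u w ≤ ℓ →
      MapsTo Complex.exp (thickening ρ (segment ℝ u w)) Aᶜ →
      ∃ z, f^[n] z = Complex.exp w ∧
        (z ∈ ball z₀ δ ∨ ∃ x, IsAvoidingChain f A n r z₀ x ∧ x N = z) := by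
  obtain ⟨B, hB, τ, hτ, hbounds⟩ :=
    hA.exists_deriv_bounds hρ (δ := δ / (2 * ℓ)) (by positivity) ℓ z₀
  set s := ρ * τ / 512 / 8 / B
  have hs : 0 < s := by positivity
  obtain ⟨N, hN⟩ := exists_nat_ge (ℓ / s)
  rw [div_le_iff₀ hs] at hN
  refine ⟨ρ * τ / 512, by positivity, N, fun n u w hnu huw hexpA => ?_⟩
  set V := segment ℝ u w
  have hV : Convex ℝ V := convex_segment u w
  have hu : u ∈ V := left_mem_segment ℝ u w
  have hw : w ∈ V := right_mem_segment ℝ u w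
  have hVQ : V ⊆ thickening ρ V := self_subset_thickening hρ V
  obtain ⟨χ, hχ, hχu, hχe⟩ := exists_iterate_lift hf hcov hSA hfA isOpen_thickening
    (hV.thickening ρ) n Complex.differentiable_exp.differentiableOn hexpA (hVQ hu) hnu
  have hχA : MapsTo χ (thickening ρ V) Aᶜ := fun q hq =>
    iterate_notMem_of_le hfA n.zero_le (f := f) (z := χ q)
      (by rw [show f^[n] (χ q) = _ from hχe hq]; exact hexpA hq)
  obtain ⟨hχB, hdichotomy⟩ := hbounds V χ hV
    (fun v hv v' hv' => (dist_le_of_mem_segment hv hv').trans huw) hχ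
    (fun q => deriv_ne_zero_of_lift (hf.iterate n) isOpen_thickening hχ hχe) hχA u hu hχu
  refine ⟨χ w, hχe (hVQ hw), hdichotomy.imp (fun hsmall => ?_) fun hlarge => ?_⟩
  · have hlip := hV.norm_image_sub_le_of_norm_deriv_le (𝕜 := ℂ)
      (fun v hv => hχ.differentiableAt (isOpen_thickening.mem_nhds (hVQ hv))) hsmall hu hw
    rw [hχu, ← dist_eq_norm, ← dist_eq_norm, dist_comm w u] at hlip
    calc dist (χ w) z₀ ≤ δ / (2 * ℓ) * ℓ := hlip.trans (by gcongr)
      _ = δ / 2 := by field_simp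
      _ < δ := half_lt_self hδ
  · obtain ⟨q, hq₀, hqN, hqV, hqs⟩ := exists_seq_mem_segment hs.le (huw.trans hN)
    have hchain := isAvoidingChain_of_lift hfA hρ hρπ hV hχ hχe hexpA hχB hlarge hqV hqs
      (mul_div_cancel₀ _ hB.ne').le
    rw [hq₀, hχu] at hchain
    exact ⟨χ ∘ q, hchain, congrArg χ hqN⟩

end Chain

section Main

variable {f : ℂ → ℂ} {S W A : Set ℂ} {a z₀ : ℂ} {r : ℝ} {φ : ℕ → ℕ} {x : ℕ → ℕ → ℂ}

lemma IsAvoidingChain.dist_le {n : ℕ} {x : ℕ → ℂ} (hx : IsAvoidingChain f A n r z₀ x) (j : ℕ) :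
    dist (x j) z₀ ≤ j * (r / 8) := by
  induction j with
  | zero => rw [hx.zero, dist_self, Nat.cast_zero, zero_mul]
  | succ j ih =>
    rw [Nat.cast_succ]
    linarith [dist_triangle (x (j + 1)) (x j) z₀, hx.dist_succ_le j]

lemma exists_tendsto_subseq_of_isAvoidingChain
    (hx : ∀ k, IsAvoidingChain f A (φ k) r z₀ (x k)) :
    ∃ ψ : ℕ → ℕ, StrictMono ψ ∧ ∃ y : ℕ → ℂ, ∀ j,
      Tendsto (fun k => x (ψ k) j) atTop (𝓝 (y j)) := by
  obtain ⟨y, -, ψ, hψ, hlim⟩ := (isCompact_univ_pi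
    fun j : ℕ => isCompact_closedBall z₀ (j * (r / 8))).tendsto_subseq (x := x)
      fun k j _ => (hx k).dist_le j
  exact ⟨ψ, hψ, y, tendsto_pi_nhds.1 hlim⟩

lemma ball_subset_fatouSet_of_isAvoidingChain (hf : Differentiable ℂ f)
    (hA : MeetsAllCircles A a) (hφ : Tendsto φ atTop atTop)
    (hx : ∀ k, IsAvoidingChain f A (φ k) r z₀ (x k)) (hr : 0 < r) {j : ℕ} {y : ℂ}
    (hlim : Tendsto (fun k => x k j) atTop (𝓝 y)) : ball y (r / 4) ⊆ FatouSet f := by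
  rw [show r / 4 = r / 2 / 2 by ring]
  refine hA.ball_subset_fatouSet hf fun i p hp => ?_
  obtain ⟨k, hk, hik⟩ := ((Metric.tendsto_nhds.1 hlim (r / 2) (half_pos hr)).and
    (hφ.eventually_ge_atTop i)).exists
  refine (hx k).iterate_notMem j p (mem_ball.2 ?_) i hik
  linarith [mem_ball.1 hp, dist_triangle_right p (x k j) y]

lemma IsWanderingDomain.mem_of_tendsto_isAvoidingChain (hf : Differentiable ℂ f)
    (hW : IsWanderingDomain f W) (hA : MeetsAllCircles A a) (hz₀ : z₀ ∈ W)
    (hφ : Tendsto φ atTop atTop) (hx : ∀ k, IsAvoidingChain f A (φ k) r z₀ (x k)) (hr : 0 < r)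
    {y : ℕ → ℂ} (hlim : ∀ j, Tendsto (fun k => x k j) atTop (𝓝 (y j))) (j : ℕ) : y j ∈ W := by
  induction j with
  | zero =>
    have hconst := hlim 0
    simp only [(hx _).zero] at hconst
    rwa [tendsto_nhds_unique hconst tendsto_const_nhds]
  | succ j ih =>
    have hdist : dist (y (j + 1)) (y j) ≤ r / 8 :=
      le_of_tendsto ((hlim (j + 1)).dist (hlim j)) (.of_forall fun k => (hx k).dist_succ_le j)
    exact hW.subset_of_isPreconnected (convex_ball (y j) (r / 4)).isPreconnected
      (ball_subset_fatouSet_of_isAvoidingChain hf hA hφ hx hr (hlim j))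
      ⟨y j, mem_ball_self (by positivity), ih⟩ (mem_ball.2 (by linarith))

/-- If the ends of the chains stayed away from the orbit of `z₀`, a limit of the chains would join
`z₀` inside `W` to a point whose orbit is not asymptotic to that of `z₀`. -/
lemma IsWanderingDomain.eventually_dist_iterate_le (hf : Differentiable ℂ f)
    (hW : IsWanderingDomain f W) (hA : MeetsAllCircles A a) (hz₀ : z₀ ∈ W) (hr : 0 < r) (N : ℕ)
    (M : ℝ) {β : ℝ} (hβ : 0 < β) :
    ∀ᶠ n in atTop, ‖f^[n + 1] z₀‖ ≤ M → ∀ x, IsAvoidingChain f A n r z₀ x →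
      dist (f^[n + 1] (x N)) (f^[n + 1] z₀) ≤ β := by
  by_contra hcon
  obtain ⟨φ, hφ, hbad⟩ := extraction_of_frequently_atTop (not_eventually.1 hcon)
  push Not at hbad
  choose hM x hx hfar using hbad
  obtain ⟨ψ, hψ, y, hlim⟩ := exists_tendsto_subseq_of_isAvoidingChain hx
  have hφψ : Tendsto (φ ∘ ψ) atTop atTop := (hφ.comp hψ).tendsto_atTop
  have hyW := hW.mem_of_tendsto_isAvoidingChain hf hA hz₀ hφψ (fun k => hx (ψ k)) hr hlim N
  obtain ⟨δ, hδ, hasym⟩ := hW.exists_ball_dist_iterate_le hf hz₀ hyW M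
  obtain ⟨k, hk, hky⟩ := (((hφψ.eventually ((tendsto_add_atTop_nat 1).eventually
    (hasym β hβ)))).and ((hlim N).eventually_mem (ball_mem_nhds _ hδ))).exists
  exact (hk (hM (ψ k)) _ hky).not_gt (hfar (ψ k))

lemma ThicknessCondition.exists_lt_infDist_iterate {ε c R δ : ℝ}
    (hsector : ThicknessCondition f S A ε c R) (hf : Differentiable ℂ f)
    (hcov : IsCoveringMapOn f Sᶜ) (hSA : S ⊆ A) (hfA : MapsTo f A A) (ha : a ∈ A)
    (hunb : ¬Bornology.IsBounded (connectedComponentIn A a)) (hc : c ∈ Ioo (0 : ℝ) 1)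
    (hδ : 0 < δ) (z₀ : ℂ) :
    ∃ r > 0, ∃ N : ℕ, ∀ n, max (2 * R) ‖a‖ < ‖f^[n] z₀‖ → infDist (f^[n + 1] z₀) S ≤ ε →
      ∃ z, ε < infDist (f^[n + 1] z) S ∧
        (z ∈ ball z₀ δ ∨ ∃ x, IsAvoidingChain f A n r z₀ x ∧ x N = z) := by
  have hcircles := meetsAllCircles_of_unbounded_component ha hunb
  obtain ⟨r, hr, N, hchain⟩ := hcircles.exists_isAvoidingChain hf hcov hSA hfA (ρ := c / 8)
    (by linarith [hc.1]) (by linarith [hc.2, Real.pi_gt_three]) hδ Real.two_pi_pos z₀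
  refine ⟨r, hr, N, fun n hlarge hclose => ?_⟩
  obtain ⟨hRn, han⟩ := max_lt_iff.1 hlarge
  obtain ⟨a', ha', hnorm⟩ := exists_mem_norm_sub_eq (b := 0) ha hunb ((sub_zero a).symm ▸ han.le)
  have hexp : Complex.exp (Complex.log (f^[n] z₀)) = f^[n] z₀ :=
    Complex.exp_log (norm_pos_iff.1 ((norm_nonneg a).trans_lt han))
  rw [sub_zero, ← hexp] at hnorm
  rw [Function.iterate_succ_apply', ← hexp] at hclose
  obtain ⟨w, hw, hfar, harc⟩ :=
    hsector.exists_arc_avoiding hc (hexp.symm ▸ hRn.le) hclose ha' hnorm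
  obtain ⟨z, hz, hz'⟩ := hchain n _ w hexp.symm hw harc
  exact ⟨z, by rwa [Function.iterate_succ_apply', hz], hz'⟩

theorem no_wandering_domains_escaping_general {ε c R : ℝ} (hf : TranscendentalEntire f)
    (hcov : IsCoveringMapOn f Sᶜ) (hSbdd : Bornology.IsBounded S) (hesc : EscapesUniformlyOn f S)
    (hSA : S ⊆ A) (hfA : MapsTo f A A) (ha : a ∈ A)
    (hunb : ¬Bornology.IsBounded (connectedComponentIn A a)) (hε : 0 < ε)
    (hc : c ∈ Ioo (0 : ℝ) 1) (hsector : ThicknessCondition f S A ε c R) :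
    ¬∃ W, IsWanderingDomain f W := by
  rintro ⟨W, hW⟩
  obtain ⟨z₀, hz₀⟩ := hW.nonempty
  obtain ⟨M, hreturn⟩ := hW.exists_frequently_return hf hcov hSbdd hesc hz₀
  obtain ⟨T, hclose⟩ := hsector.eventually_infDist_lt hf hcov hSbdd hesc
    (postsingularSet_subset hSA hfA) hε hc hW hz₀ M (half_pos hε)
  obtain ⟨δ, hδ, hball⟩ := hW.exists_ball_dist_iterate_le hf.1 hz₀ hz₀ M
  obtain ⟨r, hr, N, hfar⟩ :=
    hsector.exists_lt_infDist_iterate hf.1 hcov hSA hfA ha hunb hc hδ z₀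
  have hchain := hW.eventually_dist_iterate_le hf.1
    (meetsAllCircles_of_unbounded_component ha hunb) hz₀ hr N M (half_pos hε)
  obtain ⟨m, ⟨hM, hlarge⟩, hclose, hball, hchain⟩ :=
    ((hreturn (max T (max (2 * R) ‖a‖))).and_eventually (hclose.and
      (((tendsto_add_atTop_nat 1).eventually (hball (ε / 2) (half_pos hε))).and hchain))).exists
  obtain ⟨hT, hRa⟩ := max_lt_iff.1 hlarge
  have hS : infDist (f^[m + 1] z₀) S < ε / 2 := hclose hT.le hM
  obtain ⟨z, hzS, hz⟩ := hfar m hRa (by linarith)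
  have hdist : dist (f^[m + 1] z) (f^[m + 1] z₀) ≤ ε / 2 :=
    hz.elim (hball hM z) fun ⟨x, hx, hxz⟩ => hxz ▸ hchain hM x hx
  linarith [infDist_le_infDist_add_dist (s := S) (x := f^[m + 1] z) (y := f^[m + 1] z₀)]

end Main

/-- **Theorem (Statement 0).** Let `f ∈ B` with `fⁿ|_{S(f)} → ∞` uniformly, and let `A` be a
closed set containing `S(f) ∪ f(A)` all of whose connected components are unbounded. If there
are `ε > 0`, `c ∈ (0,1)` and `R > 0` such that `dist(f(w), S(f)) > ε` whenever `z ∈ A` with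
`|z| ≥ R` and `|w - z| < c|z|`, then `f` has no wandering domains. -/
theorem no_wandering_domains_escaping
    (f : ℂ → ℂ) (S : Set ℂ)
    (hf : TranscendentalEntire f)
    (hS : IsSingularValueSet f S)
    (hSbdd : Bornology.IsBounded S)
    (hesc : ∀ M : ℝ, ∃ N : ℕ, ∀ n ≥ N, ∀ s ∈ S, M ≤ ‖f^[n] s‖)
    (A : Set ℂ) (hAclosed : IsClosed A)
    (hSA : S ⊆ A) (hfA : f '' A ⊆ A)
    (hAunb : ∀ z ∈ A, ¬Bornology.IsBounded (connectedComponentIn A z))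
    (ε c R : ℝ) (hε : 0 < ε) (hc : c ∈ Set.Ioo (0 : ℝ) 1) (hR : 0 < R)
    (hsector : ∀ z ∈ A, R ≤ ‖z‖ → ∀ w : ℂ, ‖w - z‖ < c * ‖z‖ →
      ε < Metric.infDist (f w) S) :
    ¬∃ W : Set ℂ, IsWanderingDomain f W := by
  obtain ⟨a, ha⟩ := hf.singularSet_nonempty hS.2.1
  exact no_wandering_domains_escaping_general hf hS.2.1 hSbdd hesc hSA
    (mapsTo_iff_image_subset.2 hfA) (hSA ha) (hAunb a (hSA ha)) hε hc hsector
end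

section
/- Let V and U be hyperbolic domains in ℂ with V ⊊ U, let z ∈ V, and set R := d_U(z, U∖V) (so 0 < R < ∞). Then 1 < 2e^R/((e^{2R}−1)·log((e^R+1)/(e^R−1))) ≤ ρ_V(z)/ρ_U(z) ≤ 1 + 2/(e^R−1). -/
open Set Metric Filter Topology

open scoped ENNReal

/-- `π` is a holomorphic covering map from the unit disc onto `C ⊆ ℂ`. -/
def IsDiscCovering (π : ℂ → ℂ) (C : Set ℂ) : Prop :=
  DifferentiableOn ℂ π (ball (0 : ℂ) 1) ∧ π '' ball (0 : ℂ) 1 = C ∧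
    ∃ h : MapsTo π (ball (0 : ℂ) 1) C,
      IsCoveringMap (MapsTo.restrict π (ball (0 : ℂ) 1) C h)

/-- `ρ` is the density of the hyperbolic metric of the open set `U ⊆ ℂ`: on each connected
component it is the pushforward of the Poincaré density `2/(1 − |ζ|²)` of the unit disc under
a holomorphic universal covering map. -/
def IsHypDensity (U : Set ℂ) (ρ : ℂ → ℝ) : Prop :=
  ∀ z ∈ U, ∃ π : ℂ → ℂ, IsDiscCovering π (connectedComponentIn U z) ∧
    ∀ ζ ∈ ball (0 : ℂ) 1, ρ (π ζ) * ‖deriv π ζ‖ = 2 / (1 - ‖ζ‖ ^ 2)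

/-- The length of a curve `γ : [0,1] → ℂ` with respect to the conformal density `ρ`. -/
noncomputable def hypLength (ρ : ℂ → ℝ) (γ : ℝ → ℂ) : ℝ :=
  ∫ t in (0 : ℝ)..1, ρ (γ t) * ‖deriv γ t‖

/-- The hyperbolic distance in `U` with density `ρ`: the infimum of hyperbolic lengths of
(C¹-smooth) curves joining `z` and `w` within `U` (`∞` if there is no such curve). -/
noncomputable def hypDist (U : Set ℂ) (ρ : ℂ → ℝ) (z w : ℂ) : ℝ≥0∞ :=
  ⨅ (γ : ℝ → ℂ) (_ : ContDiffOn ℝ 1 γ (Icc (0 : ℝ) 1) ∧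
      (∀ t ∈ Icc (0 : ℝ) 1, γ t ∈ U) ∧ γ 0 = z ∧ γ 1 = w),
    ENNReal.ofReal (hypLength ρ γ)

/-- The hyperbolic distance from a point to a set: `d_U(z, ∅) = ∞`. -/
noncomputable def hypDistToSet (U : Set ℂ) (ρ : ℂ → ℝ) (z : ℂ) (E : Set ℂ) : ℝ≥0∞ :=
  ⨅ e ∈ E, hypDist U ρ z e

/-- A hyperbolic open subset of `ℂ`: each connected component omits at least two points. -/
def HyperbolicOpen (U : Set ℂ) : Prop :=
  IsOpen U ∧ ∀ z ∈ U, Set.Nontrivial (connectedComponentIn U z)ᶜ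

/-!
Let `π` be a covering of the component of `z` in `U` by the unit disc with `π 0 = z`. It is a local
isometry, so lifting curves through `π` turns `d_U(z, U ∖ V)` into the hyperbolic distance from `0`
to `π⁻¹(U ∖ V)` in the disc. This distance is attained at some `a`, and `R = 2 artanh |a|`, that is
`|a| = tanh (R / 2) = (e ^ R - 1) / (e ^ R + 1)`.

* Upper bound: `π` maps the disc of radius `|a|` into `V`, so Schwarz–Pick gives
  `ρ_V(z) / ρ_U(z) ≤ |a|⁻¹`.
* Lower bound: a covering of `V` by the disc lifts through `π` to a holomorphic `f : 𝔻 → 𝔻 ∖ {a}`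
  with `f 0 = 0`, and `ρ_U(z) / ρ_V(z)` is the modulus of its derivative at `0`. After moving `a` to
  `0` by an automorphism of the disc, `f` has a logarithm with values in the left half-plane, whose
  derivative is controlled by the Borel–Carathéodory inequality. The resulting bound is the ratio of
  the hyperbolic densities of `𝔻` and of `𝔻 ∖ {0}` at a point of modulus `|a|`; it is less than `1`
  because `x < sinh x` for `x = log |a|⁻¹`.
-/

open scoped ComplexConjugate

section LocalInverse

variable {𝕜 𝕂 E : Type*} [NontriviallyNormedField 𝕜] [RCLike 𝕂] [NormedAlgebra 𝕜 𝕂]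
  [NormedAddCommGroup E] [NormedSpace 𝕜 E]

-- `𝕜` may differ from `𝕂`, so that this covers real curves in `ℂ` as well as holomorphic maps.
lemma contDiffOn_of_comp_eqOn {n : WithTop ℕ∞} (hn : n ≠ 0) {π : 𝕂 → 𝕂} {f g : E → 𝕂} {s : Set E}
    (hπ : ∀ x ∈ s, ContDiffAt 𝕂 n π (f x)) (hπ' : ∀ x ∈ s, deriv π (f x) ≠ 0)
    (hf : ContinuousOn f s) (hg : ContDiffOn 𝕜 n g s) (hfg : EqOn (π ∘ f) g s) :
    ContDiffOn 𝕜 n f s := fun x hx ↦ by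
  have hd : HasFDerivAt π
      (ContinuousLinearEquiv.unitsEquivAut 𝕂 (Units.mk0 _ (hπ' x hx)) : 𝕂 →L[𝕂] 𝕂) (f x) :=
    ((hπ x hx).differentiableAt hn).hasDerivAt.hasFDerivAt_equiv (hπ' x hx)
  have hψ := ((hπ x hx).to_localInverse hd hn).restrict_scalars 𝕜
  have hinv := ((hπ x hx).hasStrictFDerivAt' hd hn).eventually_left_inverse
  have hfg' : (π ∘ f) x = g x := hfg hx
  rw [← Function.comp_apply (f := π), hfg'] at hψ
  refine (hψ.comp_contDiffWithinAt x (hg x hx)).congr_of_eventuallyEq ?_ ?_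
  · filter_upwards [(hf x hx).eventually hinv, self_mem_nhdsWithin] with y hy hys
    exact hy.symm.trans (congrArg _ (hfg hys))
  · exact hinv.self_of_nhds.symm.trans (congrArg _ hfg')

end LocalInverse

lemma exists_continuousOn_lift_s6 {X E Y : Type*} [TopologicalSpace X] [TopologicalSpace E]
    [TopologicalSpace Y] {s : Set X} [SimplyConnectedSpace s] [LocallyPathConnectedSpace s]
    {p : E → Y} {t : Set E} {C : Set Y} {hp : MapsTo p t C} (hcov : IsCoveringMap hp.restrict)
    {g : X → Y} (hg : ContinuousOn g s) (hgs : MapsTo g s C) {x₀ : X} (hx₀ : x₀ ∈ s) {e₀ : E}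
    (he₀ : e₀ ∈ t) (h : p e₀ = g x₀) :
    ∃ f : X → E, ContinuousOn f s ∧ MapsTo f s t ∧ f x₀ = e₀ ∧ EqOn (p ∘ f) g s := by
  classical
  obtain ⟨F, ⟨hF₀, hF⟩, -⟩ := hcov.existsUnique_continuousMap_lifts
    ⟨hgs.restrict, hg.mapsToRestrict hgs⟩ ⟨x₀, hx₀⟩ ⟨e₀, he₀⟩ (Subtype.ext h)
  obtain ⟨f, hf⟩ : ∃ f : X → E, ∀ x : s, f x = F x :=
    ⟨fun x ↦ if hx : x ∈ s then F ⟨x, hx⟩ else e₀, by simp⟩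
  refine ⟨f, ?_, fun x hx ↦ hf ⟨x, hx⟩ ▸ (F ⟨x, hx⟩).2, by simp [hf ⟨x₀, hx₀⟩, hF₀],
    fun x hx ↦ ?_⟩
  · rw [continuousOn_iff_continuous_domRestrict]
    exact (continuous_subtype_val.comp F.continuous).congr fun x ↦ (hf x).symm
  · exact (congrArg p (hf ⟨x, hx⟩)).trans (congrArg Subtype.val (congrFun hF ⟨x, hx⟩))

lemma exists_differentiableOn_exp_eqOn {U : Set ℂ} (hU : IsSimplyConnected U) (hUo : IsOpen U)
    {g : ℂ → ℂ} (hg : DifferentiableOn ℂ g U) (hg₀ : ∀ ζ ∈ U, g ζ ≠ 0) :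
    ∃ l : ℂ → ℂ, DifferentiableOn ℂ l U ∧ EqOn (Complex.exp ∘ l) g U := by
  obtain ⟨l, hlc, hl⟩ := Complex.exists_continuousOn_eqOn_exp_comp hU hUo hg.continuousOn
    fun ⟨ζ, hζ, h⟩ ↦ hg₀ ζ hζ h
  have hsmooth : ContDiffOn ℂ 1 l U := contDiffOn_of_comp_eqOn one_ne_zero
    (fun _ _ ↦ Complex.contDiff_exp.contDiffAt) (fun _ _ ↦ by simp [Complex.exp_ne_zero]) hlc
    (hg.contDiffOn hUo) hl
  exact ⟨l, hsmooth.differentiableOn one_ne_zero, hl⟩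

lemma isSimplyConnected_of_convex {E : Type*} [AddCommGroup E] [Module ℝ E] [TopologicalSpace E]
    [ContinuousAdd E] [ContinuousSMul ℝ E] {s : Set E} (hs : Convex ℝ s) (hne : s.Nonempty) :
    IsSimplyConnected s := by
  have := hs.contractibleSpace hne
  exact SimplyConnectedSpace.ofContractible s

/-- The Möbius automorphism of the unit disc sending `0` to `w`, for `|w| < 1`. Its inverse is
`discShift (-w)`. -/
noncomputable def discShift (w ζ : ℂ) : ℂ := (ζ + w) / (1 + conj w * ζ)

/-- The density `2 / (1 − |ζ|²)` of the Poincaré metric of the unit disc, of curvature `-1`. -/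
noncomputable def poincareDensity (ζ : ℂ) : ℝ := 2 / (1 - ‖ζ‖ ^ 2)

section Disc

variable {w ζ : ℂ}

lemma one_sub_norm_sq_pos {E : Type*} [SeminormedAddCommGroup E] {x : E} (hx : x ∈ ball 0 1) :
    0 < 1 - ‖x‖ ^ 2 := by
  have := mem_ball_zero_iff.1 hx
  nlinarith [norm_nonneg x]

lemma one_add_conj_mul_ne_zero (hw : w ∈ ball 0 1) (hζ : ζ ∈ ball 0 1) :
    1 + conj w * ζ ≠ 0 := fun h ↦ by
  rw [mem_ball_zero_iff] at hw hζ
  have : ‖w‖ * ‖ζ‖ = 1 := by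
    rw [← Complex.norm_conj w, ← norm_mul, eq_neg_of_add_eq_zero_right h, norm_neg, norm_one]
  nlinarith [norm_nonneg w, norm_nonneg ζ]

lemma discShift_zero (w : ℂ) : discShift w 0 = w := by simp [discShift]

lemma one_sub_norm_discShift_sq (hw : w ∈ ball 0 1) (hζ : ζ ∈ ball 0 1) :
    1 - ‖discShift w ζ‖ ^ 2 = (1 - ‖w‖ ^ 2) * (1 - ‖ζ‖ ^ 2) / ‖1 + conj w * ζ‖ ^ 2 := by
  have h0 : ‖1 + conj w * ζ‖ ^ 2 ≠ 0 :=
    pow_ne_zero _ (norm_ne_zero_iff.2 (one_add_conj_mul_ne_zero hw hζ))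
  rw [discShift, norm_div, div_pow, eq_div_iff h0, sub_mul, div_mul_cancel₀ _ h0]
  simp only [← Complex.normSq_eq_norm_sq, Complex.normSq_apply, Complex.add_re, Complex.add_im,
    Complex.mul_re, Complex.mul_im, Complex.conj_re, Complex.conj_im, Complex.one_re,
    Complex.one_im]
  ring

lemma mapsTo_discShift (hw : w ∈ ball 0 1) : MapsTo (discShift w) (ball 0 1) (ball 0 1) :=
  fun ζ hζ ↦ by
    have hden : 0 < ‖1 + conj w * ζ‖ := norm_pos_iff.2 (one_add_conj_mul_ne_zero hw hζ)
    have hpos : 0 < 1 - ‖discShift w ζ‖ ^ 2 := by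
      rw [one_sub_norm_discShift_sq hw hζ]
      exact div_pos (mul_pos (one_sub_norm_sq_pos hw) (one_sub_norm_sq_pos hζ)) (pow_pos hden 2)
    rw [mem_ball_zero_iff]
    exact (sq_lt_one_iff₀ (norm_nonneg _)).1 (sub_pos.1 hpos)

lemma hasDerivAt_discShift (hw : w ∈ ball 0 1) (hζ : ζ ∈ ball 0 1) :
    HasDerivAt (discShift w) ((1 - (‖w‖ : ℂ) ^ 2) / (1 + conj w * ζ) ^ 2) ζ := by
  have hden : HasDerivAt (fun x : ℂ ↦ 1 + conj w * x) (conj w) ζ := by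
    simpa using ((hasDerivAt_id ζ).const_mul (conj w)).const_add 1
  have hnum : 1 - (‖w‖ : ℂ) ^ 2 = 1 * (1 + conj w * ζ) - (ζ + w) * conj w := by
    rw [← Complex.conj_mul']
    ring
  exact hnum ▸ ((hasDerivAt_id ζ).add_const w).div hden (one_add_conj_mul_ne_zero hw hζ)

lemma differentiableOn_discShift (hw : w ∈ ball 0 1) :
    DifferentiableOn ℂ (discShift w) (ball 0 1) := fun _ hζ ↦
  (hasDerivAt_discShift hw hζ).differentiableAt.differentiableWithinAt

lemma poincareDensity_discShift_mul_norm_deriv (hw : w ∈ ball 0 1) (hζ : ζ ∈ ball 0 1) :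
    poincareDensity (discShift w ζ) * ‖deriv (discShift w) ζ‖ = poincareDensity ζ := by
  have hw' := one_sub_norm_sq_pos hw
  have hζ' := one_sub_norm_sq_pos hζ
  have hden := norm_ne_zero_iff.2 (one_add_conj_mul_ne_zero hw hζ)
  have hnum : ‖1 - (‖w‖ : ℂ) ^ 2‖ = 1 - ‖w‖ ^ 2 := by
    rw [← Complex.ofReal_pow, ← Complex.ofReal_one, ← Complex.ofReal_sub,
      Complex.norm_of_nonneg hw'.le]
  rw [poincareDensity, poincareDensity, one_sub_norm_discShift_sq hw hζ,
    (hasDerivAt_discShift hw hζ).deriv, norm_div, norm_pow, hnum]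
  field_simp

lemma norm_deriv_discShift_zero (hw : w ∈ ball 0 1) : ‖deriv (discShift w) 0‖ = 1 - ‖w‖ ^ 2 := by
  have hw' := one_sub_norm_sq_pos hw
  have h := poincareDensity_discShift_mul_norm_deriv hw (mem_ball_self one_pos)
  rw [discShift_zero, poincareDensity, poincareDensity] at h
  field_simp at h
  simpa using h

lemma neg_mem_unit_ball (hw : w ∈ ball 0 1) : -w ∈ ball (0 : ℂ) 1 := by simpa using hw

lemma leftInvOn_discShift_neg (hw : w ∈ ball 0 1) :
    LeftInvOn (discShift (-w)) (discShift w) (ball 0 1) := fun ζ hζ ↦ by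
  have hden := one_add_conj_mul_ne_zero (neg_mem_unit_ball hw) (mapsTo_discShift hw hζ)
  have hcancel : discShift w ζ * (1 + conj w * ζ) = ζ + w :=
    div_mul_cancel₀ _ (one_add_conj_mul_ne_zero hw hζ)
  rw [discShift, div_eq_iff hden, map_neg]
  linear_combination hcancel

lemma rightInvOn_discShift_neg (hw : w ∈ ball 0 1) :
    RightInvOn (discShift (-w)) (discShift w) (ball 0 1) := by
  simpa using leftInvOn_discShift_neg (neg_mem_unit_ball hw)

lemma bijOn_discShift (hw : w ∈ ball 0 1) : BijOn (discShift w) (ball 0 1) (ball 0 1) :=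
  InvOn.bijOn ⟨leftInvOn_discShift_neg hw, rightInvOn_discShift_neg hw⟩ (mapsTo_discShift hw)
    (mapsTo_discShift (neg_mem_unit_ball hw))

/-- The automorphism `discShift w` as a self-homeomorphism of the unit disc. -/
noncomputable def discShiftHomeomorph (hw : w ∈ ball 0 1) :
    ball (0 : ℂ) 1 ≃ₜ ball (0 : ℂ) 1 where
  toFun := (mapsTo_discShift hw).restrict
  invFun := (mapsTo_discShift (neg_mem_unit_ball hw)).restrict
  left_inv ζ := Subtype.ext (leftInvOn_discShift_neg hw ζ.2)
  right_inv ζ := Subtype.ext (rightInvOn_discShift_neg hw ζ.2)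
  continuous_toFun := (differentiableOn_discShift hw).continuousOn.mapsToRestrict _
  continuous_invFun :=
    (differentiableOn_discShift (neg_mem_unit_ball hw)).continuousOn.mapsToRestrict _

lemma discShift_neg_ne_zero {a : ℂ} (ha : a ∈ ball 0 1) (hζ : ζ ∈ ball 0 1) (h : ζ ≠ a) :
    discShift (-a) ζ ≠ 0 :=
  div_ne_zero (by simpa [← sub_eq_add_neg, sub_eq_zero] using h)
    (one_add_conj_mul_ne_zero (neg_mem_unit_ball ha) hζ)

end Disc

section PuncturedDisc

/-- The ratio at a point of modulus `r` of the hyperbolic densities `2 / (1 − r²)` of the unit disc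
and `1 / (r log (1/r))` of the punctured unit disc, inverted so as to be less than `1`. -/
noncomputable def puncturedDiscRatio (r : ℝ) : ℝ := 2 * r * Real.log r⁻¹ / (1 - r ^ 2)

lemma puncturedDiscRatio_pos {r : ℝ} (hr₀ : 0 < r) (hr₁ : r < 1) : 0 < puncturedDiscRatio r :=
  div_pos (mul_pos (mul_pos two_pos hr₀) (Real.log_pos ((one_lt_inv₀ hr₀).2 hr₁)))
    (by nlinarith)

lemma puncturedDiscRatio_lt_one {r : ℝ} (hr₀ : 0 < r) (hr₁ : r < 1) :
    puncturedDiscRatio r < 1 := by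
  have hsinh : Real.log r⁻¹ < (r⁻¹ - r) / 2 := by
    have h := Real.self_lt_sinh_iff.2 (Real.log_pos ((one_lt_inv₀ hr₀).2 hr₁))
    rwa [Real.sinh_log (inv_pos.2 hr₀), inv_inv] at h
  rw [puncturedDiscRatio, div_lt_one (by nlinarith)]
  calc 2 * r * Real.log r⁻¹ < 2 * r * ((r⁻¹ - r) / 2) := by gcongr
    _ = 1 - r ^ 2 := by field_simp

lemma inv_tanh_half (x : ℝ) : (Real.tanh (x / 2))⁻¹ = (Real.exp x + 1) / (Real.exp x - 1) := by
  have hsq : Real.exp x = Real.exp (x / 2) ^ 2 := by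
    rw [← Real.exp_nat_mul]
    ring_nf
  rw [Real.tanh_eq, inv_div, Real.exp_neg, hsq]
  field_simp

lemma inv_tanh_half_eq_one_add {x : ℝ} (hx : x ≠ 0) :
    (Real.tanh (x / 2))⁻¹ = 1 + 2 / (Real.exp x - 1) := by
  have hne : Real.exp x - 1 ≠ 0 := sub_ne_zero.2 (Real.exp_eq_one_iff x |>.not.2 hx)
  rw [inv_tanh_half]
  field_simp
  ring

lemma inv_puncturedDiscRatio_tanh_half (x : ℝ) :
    (puncturedDiscRatio (Real.tanh (x / 2)))⁻¹ = 2 * Real.exp x /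
      ((Real.exp (2 * x) - 1) * Real.log ((Real.exp x + 1) / (Real.exp x - 1))) := by
  have hexp : Real.exp (2 * x) = Real.exp x ^ 2 := by
    rw [← Real.exp_nat_mul, Nat.cast_ofNat]
  have htanh : Real.tanh (x / 2) = (Real.exp x - 1) / (Real.exp x + 1) := by
    rw [← inv_inv (Real.tanh _), inv_tanh_half, inv_div]
  have hpos : 0 < Real.exp x := Real.exp_pos x
  have hsinh : 2 * Real.tanh (x / 2) / (1 - Real.tanh (x / 2) ^ 2) =
      (Real.exp x ^ 2 - 1) / (2 * Real.exp x) := by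
    have hden : (Real.exp x + 1) ^ 2 - (Real.exp x - 1) ^ 2 ≠ 0 := by nlinarith
    rw [htanh]
    field_simp
    ring
  rw [puncturedDiscRatio, inv_tanh_half, mul_div_right_comm, hsinh, hexp, mul_inv, inv_div,
    div_mul_eq_div_div, div_eq_mul_inv _ (Real.log _)]

end PuncturedDisc

section LogDerivative

variable {f : ℂ → ℂ} {c a : ℂ} {r M : ℝ}

lemma norm_deriv_le_of_forall_re_lt (hr : 0 < r) (hf : DifferentiableOn ℂ f (ball c r))
    (hre : ∀ ζ ∈ ball c r, (f ζ).re < M) : ‖deriv f c‖ ≤ 2 * (M - (f c).re) / r := by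
  have hM : 0 < M - (f c).re := sub_pos.2 (hre c (mem_ball_self hr))
  have hshift : MapsTo (c + ·) (ball 0 r) (ball c r) := fun ζ hζ ↦ by simpa using hζ
  have hbound : ∀ᶠ ζ in 𝓝[≠] (0 : ℂ),
      ‖ζ⁻¹ • (f (c + ζ) - f c)‖ ≤ 2 * (M - (f c).re) / (r - ‖ζ‖) := by
    filter_upwards [nhdsWithin_le_nhds (ball_mem_nhds 0 hr), self_mem_nhdsWithin] with ζ hζ hζ₀
    have h := Complex.borelCaratheodory_zero (f := fun ζ ↦ f (c + ζ) - f c) hM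
      ((hf.comp (by fun_prop) hshift).sub_const _)
      (fun ζ hζ ↦ by simpa using (hre _ (hshift hζ)).le) hr hζ (by simp)
    rw [norm_smul, norm_inv, inv_mul_le_iff₀ (norm_pos_iff.2 hζ₀)]
    exact h.trans_eq (by ring)
  have hslope := (hf.differentiableAt (ball_mem_nhds c hr)).hasDerivAt.tendsto_slope_zero.norm
  have hlim : Tendsto (fun ζ : ℂ ↦ 2 * (M - (f c).re) / (r - ‖ζ‖)) (𝓝[≠] 0)
      (𝓝 (2 * (M - (f c).re) / r)) := by
    have hcont : ContinuousAt (fun ζ : ℂ ↦ 2 * (M - (f c).re) / (r - ‖ζ‖)) 0 := by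
      fun_prop (disch := simpa using hr.ne')
    simpa using hcont.tendsto.mono_left nhdsWithin_le_nhds
  exact le_of_tendsto_of_tendsto hslope hlim hbound

lemma norm_deriv_le_of_forall_ne_zero (hr : 0 < r) (hf : DifferentiableOn ℂ f (ball c r))
    (hmaps : MapsTo f (ball c r) (ball 0 1)) (hf₀ : ∀ ζ ∈ ball c r, f ζ ≠ 0) :
    ‖deriv f c‖ ≤ 2 * ‖f c‖ * Real.log ‖f c‖⁻¹ / r := by
  have hc := mem_ball_self (x := c) hr
  obtain ⟨l, hl, hexp⟩ := exists_differentiableOn_exp_eqOn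
    (isSimplyConnected_of_convex (convex_ball c r) ⟨c, hc⟩) isOpen_ball hf hf₀
  have hre : ∀ ζ ∈ ball c r, (l ζ).re = Real.log ‖f ζ‖ := fun ζ hζ ↦ by
    rw [← hexp hζ, Function.comp_apply, Complex.norm_exp, Real.log_exp]
  have hderiv : deriv f c = f c * deriv l c := by
    rw [← (hexp.eventuallyEq_of_mem (ball_mem_nhds c hr)).deriv_eq, ← hexp hc]
    exact (hl.differentiableAt (ball_mem_nhds c hr)).hasDerivAt.cexp.deriv
  have hle := norm_deriv_le_of_forall_re_lt (M := 0) hr hl fun ζ hζ ↦ by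
    rw [hre ζ hζ]
    exact Real.log_neg (norm_pos_iff.2 (hf₀ ζ hζ)) (mem_ball_zero_iff.1 (hmaps hζ))
  calc ‖deriv f c‖ = ‖f c‖ * ‖deriv l c‖ := by rw [hderiv, norm_mul]
    _ ≤ ‖f c‖ * (2 * (0 - (l c).re) / r) := by gcongr
    _ = 2 * ‖f c‖ * Real.log ‖f c‖⁻¹ / r := by rw [hre c hc, Real.log_inv]; ring

lemma norm_deriv_le_puncturedDiscRatio_div (hr : 0 < r) (hf : DifferentiableOn ℂ f (ball c r))
    (hmaps : MapsTo f (ball c r) (ball 0 1)) (hfc : f c = 0) (ha : a ∈ ball 0 1)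
    (hfa : ∀ ζ ∈ ball c r, f ζ ≠ a) : ‖deriv f c‖ ≤ puncturedDiscRatio ‖a‖ / r := by
  have hc := mem_ball_self (x := c) hr
  have ha' := neg_mem_unit_ball ha
  have hpos := one_sub_norm_sq_pos ha
  have hderiv : ‖deriv (discShift (-a) ∘ f) c‖ = (1 - ‖a‖ ^ 2) * ‖deriv f c‖ := by
    rw [deriv_comp c (hasDerivAt_discShift ha' (hmaps hc)).differentiableAt
      (hf.differentiableAt (ball_mem_nhds c hr)), hfc, norm_mul, norm_deriv_discShift_zero ha',
      norm_neg]
  have hle := norm_deriv_le_of_forall_ne_zero hr ((differentiableOn_discShift ha').comp hf hmaps)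
    ((mapsTo_discShift ha').comp hmaps) fun ζ hζ ↦ discShift_neg_ne_zero ha (hmaps hζ) (hfa ζ hζ)
  rw [hderiv, Function.comp_apply, hfc, discShift_zero, norm_neg, ← le_div_iff₀' hpos] at hle
  exact hle.trans_eq (div_right_comm _ _ _)

end LogDerivative

section DiscLength

variable {γ : ℝ → ℂ}

lemma hasDerivAt_artanh {x : ℝ} (hx : x ∈ Ioo (-1) 1) :
    HasDerivAt Real.artanh (1 / (1 - x ^ 2)) x := by
  have h₁ : 1 + x ≠ 0 := by linarith [hx.1]
  have h₂ : 1 - x ≠ 0 := by linarith [hx.2]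
  have hlog : HasDerivAt (fun y : ℝ ↦ 1 / 2 * Real.log ((1 + y) / (1 - y)))
      (1 / (1 - x ^ 2)) x := by
    have h := ((((hasDerivAt_id' x).const_add 1).div ((hasDerivAt_id' x).const_sub 1) h₂).log
      (div_ne_zero h₁ h₂)).const_mul (1 / 2)
    refine h.congr_deriv ?_
    rw [Pi.div_apply, show 1 - x ^ 2 = (1 + x) * (1 - x) by ring]
    field_simp
    ring
  refine hlog.congr_of_eventuallyEq ?_
  filter_upwards [Ioo_mem_nhds hx.1 hx.2] with y hy
  exact Real.artanh_eq_half_log (Ioo_subset_Icc_self hy)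

lemma continuousOn_poincareDensity : ContinuousOn poincareDensity (ball 0 1) :=
  continuousOn_const.div (by fun_prop) fun _ hζ ↦ (one_sub_norm_sq_pos hζ).ne'

lemma norm_mem_Ioo {E : Type*} [SeminormedAddCommGroup E] {x : E} (hx : x ∈ ball 0 1) :
    ‖x‖ ∈ Ioo (-1) 1 :=
  ⟨neg_one_lt_zero.trans_le (norm_nonneg x), mem_ball_zero_iff.1 hx⟩

lemma mapsTo_ofReal_mul {ζ : ℂ} (hζ : ζ ∈ ball 0 1) :
    MapsTo (fun t : ℝ ↦ (t : ℂ) * ζ) (Icc 0 1) (ball 0 1) := fun t ht ↦ by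
  rw [mem_ball_zero_iff, norm_mul, Complex.norm_of_nonneg ht.1]
  exact (mul_le_of_le_one_left (norm_nonneg ζ) ht.2).trans_lt (mem_ball_zero_iff.1 hζ)

lemma hypLength_poincareDensity_ofReal_mul {ζ : ℂ} (hζ : ζ ∈ ball 0 1) :
    hypLength poincareDensity (fun t ↦ t * ζ) = 2 * Real.artanh ‖ζ‖ := by
  have hderiv : ∀ t : ℝ, HasDerivAt (fun t : ℝ ↦ (t : ℂ) * ζ) ζ t := fun t ↦ by
    simpa using (hasDerivAt_id (t : ℂ)).comp_ofReal.mul_const ζ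
  have hprim : ∀ t ∈ uIcc (0 : ℝ) 1, HasDerivAt (fun t ↦ 2 * Real.artanh (t * ‖ζ‖))
      (poincareDensity (t * ζ) * ‖deriv (fun t : ℝ ↦ (t : ℂ) * ζ) t‖) t := fun t ht ↦ by
    rw [uIcc_of_le zero_le_one] at ht
    have hnorm : ‖(t : ℂ) * ζ‖ = t * ‖ζ‖ := by rw [norm_mul, Complex.norm_of_nonneg ht.1]
    have h := ((hasDerivAt_artanh (hnorm ▸ norm_mem_Ioo (mapsTo_ofReal_mul hζ ht))).comp t
      ((hasDerivAt_id' t).mul_const ‖ζ‖)).const_mul 2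
    rw [(hderiv t).deriv, poincareDensity, hnorm]
    exact h.congr_deriv (by ring)
  rw [hypLength, intervalIntegral.integral_eq_sub_of_hasDerivAt hprim]
  · simp
  · simp only [(hderiv _).deriv]
    refine ContinuousOn.intervalIntegrable (ContinuousOn.mul ?_ continuousOn_const)
    rw [uIcc_of_le zero_le_one]
    exact continuousOn_poincareDensity.comp (by fun_prop) (mapsTo_ofReal_mul hζ)

lemma integrableOn_mul_norm_deriv {E : Type*} [NormedAddCommGroup E] [NormedSpace ℝ E] {ρ : E → ℝ}
    {D : Set E} {γ : ℝ → E} {a b : ℝ} (hρ : ContinuousOn ρ D) (hγ : ContDiffOn ℝ 1 γ (Icc a b))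
    (hmaps : MapsTo γ (Icc a b) D) :
    MeasureTheory.IntegrableOn (fun t ↦ ρ (γ t) * ‖deriv γ t‖) (Icc a b) := by
  rw [integrableOn_Icc_iff_integrableOn_Ioo]
  rcases le_or_gt b a with hab | hab
  · simp [Ioo_eq_empty hab.not_gt]
  have hcont : ContinuousOn (fun t ↦ ρ (γ t) * ‖derivWithin γ (Icc a b) t‖) (Icc a b) :=
    (hρ.comp hγ.continuousOn hmaps).mul
      (hγ.continuousOn_derivWithin (uniqueDiffOn_Icc hab) le_rfl).norm
  refine (hcont.integrableOn_Icc.mono_set Ioo_subset_Icc_self).congr_fun (fun t ht ↦ ?_)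
    measurableSet_Ioo
  simp only [derivWithin_of_mem_nhds (Icc_mem_nhds ht.1 ht.2)]

lemma two_mul_artanh_norm_le_hypLength (hγ : ContDiffOn ℝ 1 γ (Icc 0 1))
    (hmaps : MapsTo γ (Icc 0 1) (ball 0 1)) (hγ₀ : γ 0 = 0) :
    2 * Real.artanh ‖γ 1‖ ≤ hypLength poincareDensity γ := by
  -- Rotate the endpoint onto the positive real axis; projecting the rotated curve to the real
  -- diameter then decreases its length element.
  obtain ⟨c, hc, hγ₁⟩ := Complex.exists_norm_eq_mul_self (γ 1)
  have hre : ∀ ζ : ℂ, |(c * ζ).re| ≤ ‖ζ‖ := fun ζ ↦ by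
    simpa [hc] using Complex.abs_re_le_norm (c * ζ)
  have hIoo : ∀ t ∈ Icc (0 : ℝ) 1, (c * γ t).re ∈ Ioo (-1 : ℝ) 1 := fun t ht ↦
    abs_lt.1 ((hre _).trans_lt (mem_ball_zero_iff.1 (hmaps ht)))
  have hcont : ContinuousOn (fun t ↦ 2 * Real.artanh (c * γ t).re) (Icc 0 1) := fun t ht ↦
    ((hasDerivAt_artanh (hIoo t ht)).continuousAt.comp_continuousWithinAt
      (f := fun t ↦ (c * γ t).re) (Complex.continuous_re.continuousAt.comp_continuousWithinAt
        (continuousWithinAt_const.mul (hγ.continuousOn t ht)))).const_mul 2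
  have hderiv : ∀ t ∈ Ioo (0 : ℝ) 1, HasDerivAt (fun t ↦ 2 * Real.artanh (c * γ t).re)
      (2 * (1 / (1 - (c * γ t).re ^ 2) * (c * deriv γ t).re)) t := fun t ht ↦ by
    have hγt := ((hγ.contDiffAt (Icc_mem_nhds ht.1 ht.2)).differentiableAt one_ne_zero).hasDerivAt
    have hret : HasDerivAt (fun t ↦ (c * γ t).re) (c * deriv γ t).re t :=
      Complex.reCLM.hasFDerivAt.comp_hasDerivAt t (hγt.const_mul c)
    exact ((hasDerivAt_artanh (hIoo t (Ioo_subset_Icc_self ht))).comp t hret).const_mul 2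
  have hle := intervalIntegral.sub_le_integral_of_hasDeriv_right_of_le zero_le_one hcont
    (fun t ht ↦ (hderiv t ht).hasDerivWithinAt)
    (integrableOn_mul_norm_deriv continuousOn_poincareDensity hγ hmaps) fun t ht ↦ by
      have hpos := one_sub_norm_sq_pos (hmaps (Ioo_subset_Icc_self ht))
      have hsq : (c * γ t).re ^ 2 ≤ ‖γ t‖ ^ 2 := sq_le_sq' (abs_le.1 (hre _)).1 (abs_le.1 (hre _)).2
      calc 2 * (1 / (1 - (c * γ t).re ^ 2) * (c * deriv γ t).re)
          ≤ 2 * (1 / (1 - (c * γ t).re ^ 2) * ‖deriv γ t‖) := by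
            have := hpos.trans_le (sub_le_sub_left hsq 1)
            gcongr
            exact (le_abs_self _).trans (hre _)
        _ ≤ 2 * (1 / (1 - ‖γ t‖ ^ 2) * ‖deriv γ t‖) := by gcongr
        _ = poincareDensity (γ t) * ‖deriv γ t‖ := by rw [poincareDensity]; ring
  simpa [← hγ₁, hγ₀, hypLength] using hle

end DiscLength

/-- A universal covering of the component of `z` in `U` by the unit disc, normalised by `π 0 = z`,
for which the density `ρ` pulls back to the Poincaré density. -/
structure IsHypUniformization (U : Set ℂ) (ρ : ℂ → ℝ) (z : ℂ) (π : ℂ → ℂ) : Prop where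
  isDiscCovering : IsDiscCovering π (connectedComponentIn U z)
  map_zero : π 0 = z
  density_mul_norm_deriv : ∀ ζ ∈ ball 0 1, ρ (π ζ) * ‖deriv π ζ‖ = poincareDensity ζ

lemma IsDiscCovering.comp_discShift {π : ℂ → ℂ} {C : Set ℂ} (hπ : IsDiscCovering π C) {w : ℂ}
    (hw : w ∈ ball 0 1) : IsDiscCovering (π ∘ discShift w) C := by
  obtain ⟨hdiff, himg, hmaps, hcov⟩ := hπ
  exact ⟨hdiff.comp (differentiableOn_discShift hw) (mapsTo_discShift hw),
    by rw [image_comp, (bijOn_discShift hw).image_eq, himg],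
    hmaps.comp (mapsTo_discShift hw), hcov.comp_homeomorph (discShiftHomeomorph hw)⟩

lemma IsHypDensity.exists_isHypUniformization {U : Set ℂ} {ρ : ℂ → ℝ} (hρ : IsHypDensity U ρ)
    {z : ℂ} (hz : z ∈ U) : ∃ π, IsHypUniformization U ρ z π := by
  obtain ⟨π, hπ, hρπ⟩ := hρ z hz
  obtain ⟨w, hw, hwz⟩ : z ∈ π '' ball 0 1 := hπ.2.1 ▸ mem_connectedComponentIn hz
  refine ⟨π ∘ discShift w, hπ.comp_discShift hw, by simp [discShift_zero, hwz], fun ζ hζ ↦ ?_⟩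
  have hwζ := mapsTo_discShift hw hζ
  rw [deriv_comp ζ (hπ.1.differentiableAt (isOpen_ball.mem_nhds hwζ))
    (hasDerivAt_discShift hw hζ).differentiableAt, norm_mul, ← mul_assoc, Function.comp_apply,
    hρπ _ hwζ]
  exact poincareDensity_discShift_mul_norm_deriv hw hζ

namespace IsHypUniformization

variable {U V : Set ℂ} {ρ : ℂ → ℝ} {z ζ a : ℂ} {π : ℂ → ℂ}

lemma mapsTo (hπ : IsHypUniformization U ρ z π) : MapsTo π (ball 0 1) U := fun _ hζ ↦
  connectedComponentIn_subset U z (hπ.isDiscCovering.2.1 ▸ mem_image_of_mem π hζ)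

lemma differentiableOn (hπ : IsHypUniformization U ρ z π) : DifferentiableOn ℂ π (ball 0 1) :=
  hπ.isDiscCovering.1

lemma deriv_ne_zero (hπ : IsHypUniformization U ρ z π) (hζ : ζ ∈ ball 0 1) : deriv π ζ ≠ 0 :=
  fun h ↦ by
    have hpos : 0 < poincareDensity ζ := div_pos two_pos (one_sub_norm_sq_pos hζ)
    have hzero := hπ.density_mul_norm_deriv ζ hζ
    rw [h, norm_zero, mul_zero] at hzero
    exact hpos.ne hzero

lemma density_mul_norm_deriv_zero (hπ : IsHypUniformization U ρ z π) :
    ρ z * ‖deriv π 0‖ = 2 := by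
  simpa [hπ.map_zero, poincareDensity] using
    hπ.density_mul_norm_deriv 0 (mem_ball_self one_pos)

lemma density_pos (hπ : IsHypUniformization U ρ z π) : 0 < ρ z :=
  pos_of_mul_pos_left (hπ.density_mul_norm_deriv_zero ▸ two_pos) (norm_nonneg _)

lemma density_mul_norm_deriv_comp {𝕜 : Type*} [NontriviallyNormedField 𝕜] [NormedAlgebra 𝕜 ℂ]
    (hπ : IsHypUniformization U ρ z π) {f : 𝕜 → ℂ} {x : 𝕜} (hf : DifferentiableAt 𝕜 f x)
    (hfx : f x ∈ ball 0 1) :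
    ρ (π (f x)) * ‖deriv (π ∘ f) x‖ = poincareDensity (f x) * ‖deriv f x‖ := by
  have hπ' := (hπ.differentiableOn.differentiableAt (isOpen_ball.mem_nhds hfx)).hasDerivAt
  rw [(hπ'.comp x hf.hasDerivAt).deriv, norm_mul, ← mul_assoc,
    hπ.density_mul_norm_deriv _ hfx]

lemma exists_contDiffOn_lift {𝕜 E : Type*} [NontriviallyNormedField 𝕜] [NormedAlgebra 𝕜 ℂ]
    [NormedAddCommGroup E] [NormedSpace ℝ E] [NormedSpace 𝕜 E] (hπ : IsHypUniformization U ρ z π)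
    {n : WithTop ℕ∞} (hn : n ≠ 0) {s : Set E} (hs : Convex ℝ s) {g : E → ℂ}
    (hg : ContDiffOn 𝕜 n g s) (hgU : MapsTo g s U) {x₀ : E} (hx₀ : x₀ ∈ s) (hgx₀ : g x₀ = z) :
    ∃ f : E → ℂ, ContDiffOn 𝕜 n f s ∧ MapsTo f s (ball 0 1) ∧ f x₀ = 0 ∧ EqOn (π ∘ f) g s := by
  have := hs.contractibleSpace ⟨x₀, hx₀⟩
  have := hs.locallyPathConnectedSpace
  obtain ⟨-, -, _, hcov⟩ := hπ.isDiscCovering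
  have hgC : MapsTo g s (connectedComponentIn U z) := mapsTo_iff_image_subset.2 <|
    (hs.isPreconnected.image g hg.continuousOn).subset_connectedComponentIn
      (hgx₀ ▸ mem_image_of_mem g hx₀) hgU.image_subset
  obtain ⟨f, hf, hfs, hfx₀, hfg⟩ := exists_continuousOn_lift_s6 hcov hg.continuousOn hgC hx₀
    (mem_ball_self one_pos) (hπ.map_zero.trans hgx₀.symm)
  exact ⟨f, contDiffOn_of_comp_eqOn hn (fun x hx ↦ hπ.differentiableOn.contDiffOn isOpen_ball
    |>.contDiffAt (isOpen_ball.mem_nhds (hfs hx))) (fun x hx ↦ hπ.deriv_ne_zero (hfs hx)) hf hg hfg,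
    hfs, hfx₀, hfg⟩

section SchwarzPick

variable {g : ℂ → ℂ} {c : ℂ} {r : ℝ}

lemma exists_lift_ball (hπ : IsHypUniformization U ρ z π) (hr : 0 < r)
    (hg : DifferentiableOn ℂ g (ball c r)) (hgU : MapsTo g (ball c r) U) (hgc : g c = z) :
    ∃ f : ℂ → ℂ, DifferentiableOn ℂ f (ball c r) ∧ MapsTo f (ball c r) (ball 0 1) ∧ f c = 0 ∧
      EqOn (π ∘ f) g (ball c r) ∧ ρ z * ‖deriv g c‖ = 2 * ‖deriv f c‖ := by
  have hc := mem_ball_self (x := c) hr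
  obtain ⟨f, hf, hfball, hfc, hfg⟩ := hπ.exists_contDiffOn_lift one_ne_zero (convex_ball c r)
    (hg.contDiffOn isOpen_ball) hgU hc hgc
  have hf' := hf.differentiableOn one_ne_zero
  have h := hπ.density_mul_norm_deriv_comp (hf'.differentiableAt (ball_mem_nhds c hr)) (hfball hc)
  rw [(hfg.eventuallyEq_of_mem (ball_mem_nhds c hr)).deriv_eq, hfc, hπ.map_zero] at h
  exact ⟨f, hf', hfball, hfc, hfg, by simpa [poincareDensity] using h⟩

lemma density_mul_norm_deriv_le (hπ : IsHypUniformization U ρ z π) (hr : 0 < r)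
    (hg : DifferentiableOn ℂ g (ball c r)) (hgU : MapsTo g (ball c r) U) (hgc : g c = z) :
    ρ z * ‖deriv g c‖ ≤ 2 * r⁻¹ := by
  obtain ⟨f, hf, hfball, hfc, -, hfg⟩ := hπ.exists_lift_ball hr hg hgU hgc
  have hle := Complex.norm_deriv_le_div_of_mapsTo_ball hf
    (hfc ▸ hfball.mono_right ball_subset_closedBall) hr
  rw [hfg, ← one_div]
  gcongr

lemma density_mul_norm_deriv_le_of_forall_ne (hπ : IsHypUniformization U ρ z π) (hr : 0 < r)
    (hg : DifferentiableOn ℂ g (ball c r)) (hgU : MapsTo g (ball c r) U) (hgc : g c = z)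
    (ha : a ∈ ball 0 1) (hga : ∀ ζ ∈ ball c r, g ζ ≠ π a) :
    ρ z * ‖deriv g c‖ ≤ 2 * (puncturedDiscRatio ‖a‖ / r) := by
  obtain ⟨f, hf, hfball, hfc, hfg, hfg'⟩ := hπ.exists_lift_ball hr hg hgU hgc
  rw [hfg']
  gcongr
  exact norm_deriv_le_puncturedDiscRatio_div hr hf hfball hfc ha fun ζ hζ h ↦
    hga ζ hζ (by rw [← hfg hζ, Function.comp_apply, h])

end SchwarzPick

section Comparison

variable {ρU ρV : ℂ → ℝ} {κ : ℂ → ℂ}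

lemma density_div_le (hπ : IsHypUniformization U ρU z π) (hκ : IsHypUniformization V ρV z κ)
    {r : ℝ} (hr₀ : 0 < r) (hr₁ : r ≤ 1) (h : MapsTo π (ball 0 r) V) : ρV z / ρU z ≤ r⁻¹ := by
  have hle := hκ.density_mul_norm_deriv_le hr₀
    (hπ.differentiableOn.mono (ball_subset_ball hr₁)) h hπ.map_zero
  have hπ' : 0 < ‖deriv π 0‖ := norm_pos_iff.2 (hπ.deriv_ne_zero (mem_ball_self one_pos))
  rw [← hπ.density_mul_norm_deriv_zero, mul_right_comm] at hle
  rw [div_le_iff₀' hπ.density_pos]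
  exact le_of_mul_le_mul_right hle hπ'

lemma inv_puncturedDiscRatio_le_density_div (hπ : IsHypUniformization U ρU z π)
    (hκ : IsHypUniformization V ρV z κ) (hVU : V ⊆ U) (ha : a ∈ ball 0 1) (haV : π a ∉ V) :
    (puncturedDiscRatio ‖a‖)⁻¹ ≤ ρV z / ρU z := by
  have hle := hπ.density_mul_norm_deriv_le_of_forall_ne one_pos hκ.differentiableOn
    (hκ.mapsTo.mono_right hVU) hκ.map_zero ha fun ζ hζ h ↦ haV (h ▸ hκ.mapsTo hζ)
  have hκ' : 0 < ‖deriv κ 0‖ := norm_pos_iff.2 (hκ.deriv_ne_zero (mem_ball_self one_pos))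
  rw [div_one, ← hκ.density_mul_norm_deriv_zero, mul_right_comm] at hle
  rw [← inv_div]
  refine inv_anti₀ (div_pos hπ.density_pos hκ.density_pos) ?_
  rw [div_le_iff₀' hκ.density_pos]
  exact le_of_mul_le_mul_right hle hκ'

end Comparison

section Distance

variable {γ : ℝ → ℂ} {E : Set ℂ}

lemma hypLength_comp (hπ : IsHypUniformization U ρ z π) {f : ℝ → ℂ}
    (hf : ContDiffOn ℝ 1 f (Icc 0 1)) (hfball : MapsTo f (Icc 0 1) (ball 0 1))
    (hfγ : EqOn (π ∘ f) γ (Icc 0 1)) : hypLength ρ γ = hypLength poincareDensity f :=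
  intervalIntegral.integral_congr_Ioo_of_le zero_le_one fun t ht ↦ by
    have hmem := Icc_mem_nhds ht.1 ht.2
    have h := hπ.density_mul_norm_deriv_comp ((hf.contDiffAt hmem).differentiableAt one_ne_zero)
      (hfball (Ioo_subset_Icc_self ht))
    rw [(hfγ.eventuallyEq_of_mem hmem).deriv_eq] at h
    simp only [← h, ← hfγ (Ioo_subset_Icc_self ht), Function.comp_apply]

lemma hypDist_le (hπ : IsHypUniformization U ρ z π) (hζ : ζ ∈ ball 0 1) :
    hypDist U ρ z (π ζ) ≤ ENNReal.ofReal (2 * Real.artanh ‖ζ‖) := by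
  have hseg : ContDiffOn ℝ 1 (fun t : ℝ ↦ (t : ℂ) * ζ) (Icc 0 1) :=
    (Complex.ofRealCLM.contDiff.mul contDiff_const).contDiffOn
  have hπ' : ContDiffOn ℝ 1 π (ball 0 1) :=
    (hπ.differentiableOn.contDiffOn isOpen_ball).restrict_scalars ℝ
  refine iInf₂_le_of_le (π ∘ fun t : ℝ ↦ (t : ℂ) * ζ)
    ⟨hπ'.comp hseg (mapsTo_ofReal_mul hζ), hπ.mapsTo.comp (mapsTo_ofReal_mul hζ),
      by simp [hπ.map_zero], by simp⟩ (ENNReal.ofReal_le_ofReal ?_)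
  rw [hπ.hypLength_comp hseg (mapsTo_ofReal_mul hζ) fun _ _ ↦ rfl,
    hypLength_poincareDensity_ofReal_mul hζ]

lemma exists_two_mul_artanh_norm_le (hπ : IsHypUniformization U ρ z π)
    (hγ : ContDiffOn ℝ 1 γ (Icc 0 1)) (hγU : MapsTo γ (Icc 0 1) U) (hγ₀ : γ 0 = z) :
    ∃ ζ ∈ ball 0 1, π ζ = γ 1 ∧ 2 * Real.artanh ‖ζ‖ ≤ hypLength ρ γ := by
  obtain ⟨f, hf, hfball, hf₀, hfγ⟩ := hπ.exists_contDiffOn_lift one_ne_zero (convex_Icc 0 1) hγ hγU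
    (left_mem_Icc.2 zero_le_one) hγ₀
  refine ⟨f 1, hfball (right_mem_Icc.2 zero_le_one), hfγ (right_mem_Icc.2 zero_le_one), ?_⟩
  rw [hπ.hypLength_comp hf hfball hfγ]
  exact two_mul_artanh_norm_le_hypLength hf hfball hf₀

lemma hypDistToSet_eq_iInf (hπ : IsHypUniformization U ρ z π) :
    hypDistToSet U ρ z E =
      ⨅ ζ ∈ ball 0 1 ∩ π ⁻¹' E, ENNReal.ofReal (2 * Real.artanh ‖ζ‖) := by
  refine le_antisymm (le_iInf₂ fun ζ hζ ↦ iInf₂_le_of_le (π ζ) hζ.2 (hπ.hypDist_le hζ.1))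
    (le_iInf₂ fun e he ↦ le_iInf₂ fun γ ⟨hγ, hγU, hγ₀, hγ₁⟩ ↦ ?_)
  obtain ⟨ζ, hζ, hπζ, hle⟩ := hπ.exists_two_mul_artanh_norm_le hγ hγU hγ₀
  exact iInf₂_le_of_le ζ ⟨hζ, by rwa [mem_preimage, hπζ, hγ₁]⟩ (ENNReal.ofReal_le_ofReal hle)

lemma exists_forall_norm_le (hπ : IsHypUniformization U ρ z π) (hV : IsOpen V)
    (h : (ball 0 1 ∩ π ⁻¹' (U \ V)).Nonempty) :
    ∃ a ∈ ball 0 1 ∩ π ⁻¹' (U \ V), ∀ ζ ∈ ball 0 1 ∩ π ⁻¹' (U \ V), ‖a‖ ≤ ‖ζ‖ := by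
  obtain ⟨a₀, ha₀, ha₀V⟩ := h
  have hsub : closedBall 0 ‖a₀‖ ⊆ ball (0 : ℂ) 1 :=
    closedBall_subset_ball (mem_ball_zero_iff.1 ha₀)
  have hK : IsCompact (closedBall 0 ‖a₀‖ ∩ π ⁻¹' Vᶜ) :=
    (isCompact_closedBall 0 ‖a₀‖).of_isClosed_subset
      ((hπ.differentiableOn.continuousOn.mono hsub).preimage_isClosed_of_isClosed
        isClosed_closedBall hV.isClosed_compl) inter_subset_left
  obtain ⟨a, ⟨ha, haV⟩, hmin⟩ := hK.exists_isMinOn ⟨a₀, by simp, ha₀V.2⟩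
    continuous_norm.continuousOn
  refine ⟨a, ⟨hsub ha, hπ.mapsTo (hsub ha), haV⟩, fun ζ ⟨_, hζV⟩ ↦ ?_⟩
  rcases le_total ‖ζ‖ ‖a₀‖ with hle | hle
  · exact hmin ⟨by simpa using hle, hζV.2⟩
  · exact (mem_closedBall_zero_iff.1 ha).trans hle

lemma exists_hypDistToSet_diff_eq (hπ : IsHypUniformization U ρ z π) (hV : IsOpen V)
    (h : hypDistToSet U ρ z (U \ V) ≠ ⊤) :
    ∃ a ∈ ball 0 1, π a ∉ V ∧ MapsTo π (ball 0 ‖a‖) V ∧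
      hypDistToSet U ρ z (U \ V) = ENNReal.ofReal (2 * Real.artanh ‖a‖) := by
  have hinf := hπ.hypDistToSet_eq_iInf (E := U \ V)
  have hne : (ball 0 1 ∩ π ⁻¹' (U \ V)).Nonempty := by
    contrapose! h
    rw [hinf, h]
    simp
  obtain ⟨a, ha, hmin⟩ := hπ.exists_forall_norm_le hV hne
  refine ⟨a, ha.1, ha.2.2, fun ζ hζ ↦ ?_, hinf.trans (le_antisymm (iInf₂_le a ha)
    (le_iInf₂ fun ζ hζ ↦ ENNReal.ofReal_le_ofReal ?_))⟩
  · by_contra hζV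
    have hζ₁ := ball_subset_ball (mem_ball_zero_iff.1 ha.1).le hζ
    exact (mem_ball_zero_iff.1 hζ).not_ge (hmin ζ ⟨hζ₁, hπ.mapsTo hζ₁, hζV⟩)
  · have := Real.artanh_le_artanh (norm_mem_Ioo ha.1).1 (norm_mem_Ioo hζ.1).2 (hmin ζ hζ)
    gcongr

end Distance

end IsHypUniformization

theorem density_comparison_general {U V : Set ℂ} (hVo : IsOpen V) (hVU : V ⊆ U) {ρU ρV : ℂ → ℝ}
    (hρU : IsHypDensity U ρU) (hρV : IsHypDensity V ρV) {z : ℂ} (hz : z ∈ V) {R : ℝ} (hR : 0 < R)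
    (hRdef : hypDistToSet U ρU z (U \ V) = ENNReal.ofReal R) :
    1 < 2 * Real.exp R /
        ((Real.exp (2 * R) - 1) * Real.log ((Real.exp R + 1) / (Real.exp R - 1))) ∧
    2 * Real.exp R /
        ((Real.exp (2 * R) - 1) * Real.log ((Real.exp R + 1) / (Real.exp R - 1))) ≤
      ρV z / ρU z ∧
    ρV z / ρU z ≤ 1 + 2 / (Real.exp R - 1) := by
  obtain ⟨π, hπ⟩ := hρU.exists_isHypUniformization (hVU hz)
  obtain ⟨κ, hκ⟩ := hρV.exists_isHypUniformization hz
  obtain ⟨a, ha, haV, hmaps, hRa⟩ := hπ.exists_hypDistToSet_diff_eq hVo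
    (hRdef ▸ ENNReal.ofReal_ne_top)
  have hRa' : R = 2 * Real.artanh ‖a‖ := by
    rwa [hRdef, ENNReal.ofReal_eq_ofReal_iff hR.le
      (mul_nonneg two_pos.le (Real.artanh_nonneg (norm_nonneg a)))] at hRa
  have htanh : ‖a‖ = Real.tanh (R / 2) := by
    rw [hRa', mul_div_cancel_left₀ _ two_ne_zero, Real.tanh_artanh (norm_mem_Ioo ha)]
  have ha₀ : 0 < ‖a‖ := norm_pos_iff.2 fun h ↦ haV (by rwa [h, hπ.map_zero])
  have ha₁ : ‖a‖ < 1 := mem_ball_zero_iff.1 ha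
  rw [← inv_puncturedDiscRatio_tanh_half, ← inv_tanh_half_eq_one_add hR.ne', ← htanh]
  exact ⟨(one_lt_inv₀ (puncturedDiscRatio_pos ha₀ ha₁)).2 (puncturedDiscRatio_lt_one ha₀ ha₁),
    hπ.inv_puncturedDiscRatio_le_density_div hκ hVU ha haV,
    hπ.density_div_le hκ ha₀ ha₁.le hmaps⟩

/-- **Theorem (Statement 6).** Let `V ⊊ U` be hyperbolic domains in `ℂ`, `z ∈ V`, and
`R = d_U(z, U∖V)` (a finite positive number). Then
`1 < 2e^R/((e^{2R}−1) log((e^R+1)/(e^R−1))) ≤ ρ_V(z)/ρ_U(z) ≤ 1 + 2/(e^R−1)`. -/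
theorem density_comparison
    (U V : Set ℂ)
    (hUo : IsOpen U) (hUconn : IsConnected U) (hUhyp : Set.Nontrivial Uᶜ)
    (hVo : IsOpen V) (hVconn : IsConnected V) (hVhyp : Set.Nontrivial Vᶜ)
    (hVU : V ⊂ U)
    (ρU ρV : ℂ → ℝ) (hρU : IsHypDensity U ρU) (hρV : IsHypDensity V ρV)
    (z : ℂ) (hz : z ∈ V)
    (R : ℝ) (hR : 0 < R)
    (hRdef : hypDistToSet U ρU z (U \ V) = ENNReal.ofReal R) :
    1 < 2 * Real.exp R /
        ((Real.exp (2 * R) - 1) * Real.log ((Real.exp R + 1) / (Real.exp R - 1))) ∧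
    2 * Real.exp R /
        ((Real.exp (2 * R) - 1) * Real.log ((Real.exp R + 1) / (Real.exp R - 1))) ≤
      ρV z / ρU z ∧
    ρV z / ρU z ≤ 1 + 2 / (Real.exp R - 1) :=
  density_comparison_general hVo hVU.subset hρU hρV hz hR hRdef
end
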